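/- arXiv:2211.12682 — 6 statements merged into one kernel-verified Lean document; each statement's English description precedes it below -/
import Mathlib

section
/- For each integer k ≥ 1 there exists a function φ : ℂ → ℂ, holomorphic on the half-plane {s : Re s > 1/2} and bounded on {s : Re s ≥ σ} for every σ > 1/2, such that for all s ∈ ℂ with Re s > 1, ∑_{n=1}^∞ r(n)^k · n^{−s} = 4^k · (1 − 2^{−s})^{2^{k−1}−1} · (ζ(s)·η(s))^{2^{k−1}} · φ(s), where ζ is the Riemann zeta function and η(s) = ∑_{j=0}^∞ (−1)^j (2j+1)^{−s} is the Dirichlet beta function. -/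
/-- `r n` is the number of representations of `n` as an ordered sum of two squares
of integers. -/
noncomputable def r (n : ℕ) : ℕ :=
  Set.ncard {p : ℤ × ℤ | p.1 ^ 2 + p.2 ^ 2 = (n : ℤ)}

/-- The Dirichlet beta function `η(s) = 1^{-s} - 3^{-s} + 5^{-s} - ⋯`. -/
noncomputable def eta (s : ℂ) : ℂ :=
  ∑' j : ℕ, (-1) ^ j / (2 * (j : ℂ) + 1) ^ s

namespace Two

abbrev A (n : ℕ) : Set GaussianInt := {z | z.norm = (n : ℤ)}

noncomputable def S (n : ℕ) : Set (Associates GaussianInt) := Associates.mk '' A n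

noncomputable def f (n : ℕ) : ℕ := (S n).ncard

lemma norm_def' (z : GaussianInt) : z.norm = z.re ^ 2 + z.im ^ 2 := by
  rw [Zsqrtd.norm_def]; ring

lemma A_finite (n : ℕ) : (A n).Finite := by
  have h : (Set.Icc (-(n:ℤ)) n ×ˢ Set.Icc (-(n:ℤ)) n).Finite :=
    (Set.finite_Icc _ _).prod (Set.finite_Icc _ _)
  refine Set.Finite.of_finite_image (f := fun z : GaussianInt => (z.re, z.im)) (h.subset ?_) ?_
  · rintro _ ⟨z, hz, rfl⟩
    have hz' : z.re ^ 2 + z.im ^ 2 = (n : ℤ) := by rw [← norm_def']; exact hz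
    simp only [Set.mem_prod, Set.mem_Icc]
    refine ⟨⟨?_, ?_⟩, ?_, ?_⟩ <;> nlinarith [sq_nonneg z.re, sq_nonneg z.im, sq_nonneg (z.re+1), sq_nonneg (z.re-1), sq_nonneg (z.im+1), sq_nonneg (z.im-1)]
  · intro a _ b _ hab
    simp only [Prod.mk.injEq] at hab
    exact Zsqrtd.ext hab.1 hab.2

lemma S_finite (n : ℕ) : (S n).Finite := (A_finite n).image _

lemma r_eq_ncard (n : ℕ) : r n = (A n).ncard := by
  unfold r
  symm
  refine Set.ncard_congr (fun z _ => (z.re, z.im)) ?_ ?_ ?_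
  · intro z hz
    have hz' : z.norm = n := hz
    rw [norm_def'] at hz'; exact hz'
  · intro a b _ _ hab
    simp only [Prod.mk.injEq] at hab
    exact Zsqrtd.ext hab.1 hab.2
  · rintro ⟨x, y⟩ h
    refine ⟨⟨x, y⟩, ?_, rfl⟩
    change Zsqrtd.norm _ = _
    rw [norm_def']; exact h

lemma assoc_norm {z w : GaussianInt} (h : Associated z w) : z.norm = w.norm :=
  Zsqrtd.norm_eq_of_associated (by norm_num) h

lemma unit_cases (u : GaussianInt) (hu : IsUnit u) :
    u = ⟨1, 0⟩ ∨ u = ⟨-1, 0⟩ ∨ u = ⟨0, 1⟩ ∨ u = ⟨0, -1⟩ := by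
  have h : u.norm = 1 := (Zsqrtd.norm_eq_one_iff' (by norm_num) u).2 hu
  rw [norm_def'] at h
  obtain ⟨x, y⟩ := u
  simp only at h
  have hx1 : x ≤ 1 := by nlinarith [sq_nonneg y]
  have hx2 : -1 ≤ x := by nlinarith [sq_nonneg y]
  have hy1 : y ≤ 1 := by nlinarith [sq_nonneg x]
  have hy2 : -1 ≤ y := by nlinarith [sq_nonneg x]
  interval_cases x <;> interval_cases y <;> simp_all

lemma fiber (z : GaussianInt) (hz : z ≠ 0) :
    {w : GaussianInt | Associated z w}.ncard = 4 := by
  have : {w : GaussianInt | Associated z w} =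
      (({⟨1,0⟩, ⟨-1,0⟩, ⟨0,1⟩, ⟨0,-1⟩} : Finset GaussianInt).image (z * ·) : Finset _) := by
    ext w
    simp only [Set.mem_ofPred_eq, Finset.coe_image, Set.mem_image, Finset.mem_coe]
    constructor
    · rintro ⟨u, rfl⟩
      refine ⟨u, ?_, rfl⟩
      simpa using unit_cases u u.isUnit
    · rintro ⟨u, hu, rfl⟩
      have : IsUnit u := by
        rw [← Zsqrtd.norm_eq_one_iff' (by norm_num), norm_def']
        simp only [Finset.mem_insert, Finset.mem_singleton] at hu
        rcases hu with rfl | rfl | rfl | rfl <;> norm_num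
      obtain ⟨u, rfl⟩ := this
      exact ⟨u, rfl⟩
  rw [this, Set.ncard_coe_finset, Finset.card_image_of_injective _ (mul_right_injective₀ hz)]
  decide

lemma r_eq (n : ℕ) (hn : n ≠ 0) : r n = 4 * f n := by
  classical
  rw [r_eq_ncard, f, Set.ncard_eq_toFinset_card _ (A_finite n),
    Set.ncard_eq_toFinset_card _ (S_finite n)]
  rw [Finset.card_eq_sum_card_fiberwise (f := Associates.mk) (t := (S_finite n).toFinset)]
  · rw [Finset.sum_const_nat (m := 4), mul_comm]
    intro a ha
    simp only [Set.Finite.mem_toFinset] at ha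
    obtain ⟨z, hz, rfl⟩ := ha
    have hz' : z.norm = n := hz
    have hz0 : z ≠ 0 := by rintro rfl; simp at hz'; omega
    rw [← fiber z hz0, ← Set.ncard_coe_finset]
    congr 1
    ext w
    simp only [Finset.coe_filter, Set.Finite.mem_toFinset, Set.mem_ofPred_eq,
      Associates.mk_eq_mk_iff_associated]
    constructor
    · exact fun h => h.2.symm
    · exact fun h => ⟨by rw [← assoc_norm h, hz'], h.symm⟩
  · intro z hz
    simp only [Set.Finite.coe_toFinset] at hz ⊢
    exact ⟨z, hz, rfl⟩

lemma dvd_norm (z : GaussianInt) : z ∣ (z.norm : GaussianInt) := by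
  rw [Zsqrtd.norm_eq_mul_conj]; exact dvd_mul_right _ _

lemma cop {m n : ℕ} (h : m.Coprime n) {z w : GaussianInt} (hz : z.norm = m) (hw : w.norm = n) :
    IsCoprime z w := by
  have h1 : IsCoprime (m : ℤ) (n : ℤ) := Nat.isCoprime_iff_coprime.2 h
  have h2 : IsCoprime ((m:ℤ) : GaussianInt) ((n:ℤ) : GaussianInt) :=
    h1.map (Int.castRingHom GaussianInt)
  exact (h2.of_isCoprime_of_dvd_left (hz ▸ dvd_norm z)).of_isCoprime_of_dvd_right (hw ▸ dvd_norm w)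

lemma f_mul {m n : ℕ} (h : m.Coprime n) : f (m * n) = f m * f n := by
  unfold f
  rw [← Set.ncard_prod]
  symm
  refine Set.ncard_congr (fun p _ => p.1 * p.2) ?_ ?_ ?_
  · rintro ⟨_, _⟩ ⟨⟨z, hz, rfl⟩, ⟨w, hw, rfl⟩⟩
    refine ⟨z * w, ?_, Associates.mk_mul_mk.symm⟩
    simp only [Set.mem_ofPred_eq] at hz hw ⊢
    rw [Zsqrtd.norm_mul, hz, hw]; push_cast; ring
  · rintro ⟨_, _⟩ ⟨_, _⟩ ⟨⟨z, hz, rfl⟩, ⟨w, hw, rfl⟩⟩ ⟨⟨z', hz', rfl⟩, ⟨w', hw', rfl⟩⟩ he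
    simp only [Set.mem_ofPred_eq] at hz hw hz' hw'
    simp only [Associates.mk_mul_mk, Associates.mk_eq_mk_iff_associated, Prod.mk.injEq] at he ⊢
    have e1 : z ∣ z' := (cop h hz hw').dvd_of_dvd_mul_right ((dvd_mul_right z w).trans he.dvd)
    have e2 : z' ∣ z := (cop h hz' hw).dvd_of_dvd_mul_right ((dvd_mul_right z' w').trans he.symm.dvd)
    have e3 : w ∣ w' := (cop h hz' hw).symm.dvd_of_dvd_mul_left ((dvd_mul_left w z).trans he.dvd)
    have e4 : w' ∣ w := (cop h hz hw').symm.dvd_of_dvd_mul_left ((dvd_mul_left w' z').trans he.symm.dvd)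
    exact ⟨associated_of_dvd_dvd e1 e2, associated_of_dvd_dvd e3 e4⟩
  · rintro _ ⟨z, hz, rfl⟩
    simp only [Set.mem_ofPred_eq] at hz
    have hd : z ∣ ((m : ℤ) : GaussianInt) * ((n : ℤ) : GaussianInt) := by
      have := dvd_norm z
      rw [hz] at this
      exact_mod_cast this
    obtain ⟨z1, z2, h1, h2, rfl⟩ := exists_dvd_and_dvd_of_dvd_mul hd
    have n1 : z1.norm ∣ (m:ℤ) ^ 2 := by
      obtain ⟨c, hc⟩ := h1
      have := congrArg Zsqrtd.norm hc
      rw [Zsqrtd.norm_intCast, Zsqrtd.norm_mul] at this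
      exact ⟨c.norm, by rw [← this]; ring⟩
    have n2 : z2.norm ∣ (n:ℤ) ^ 2 := by
      obtain ⟨c, hc⟩ := h2
      have := congrArg Zsqrtd.norm hc
      rw [Zsqrtd.norm_intCast, Zsqrtd.norm_mul] at this
      exact ⟨c.norm, by rw [← this]; ring⟩
    rw [Zsqrtd.norm_mul] at hz
    push_cast at hz
    have hc : IsCoprime (m : ℤ) (n : ℤ) := Nat.isCoprime_iff_coprime.2 h
    have d1 : z1.norm ∣ (m:ℤ) :=
      ((hc.pow_left (m := 2)).of_isCoprime_of_dvd_left n1).dvd_of_dvd_mul_right ⟨_, hz.symm⟩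
    have d2 : (m:ℤ) ∣ z1.norm :=
      ((hc.pow_right (n := 2)).of_isCoprime_of_dvd_right n2).dvd_of_dvd_mul_right ⟨_, hz⟩
    have d3 : z2.norm ∣ (n:ℤ) :=
      ((hc.pow_right (n := 2)).of_isCoprime_of_dvd_right n2).symm.dvd_of_dvd_mul_left
        ⟨z1.norm, by rw [← hz]; ring⟩
    have d4 : (n:ℤ) ∣ z2.norm :=
      ((hc.pow_left (m := 2)).of_isCoprime_of_dvd_left n1).symm.dvd_of_dvd_mul_left
        ⟨(m:ℤ), by rw [hz]; ring⟩
    have e1 := Int.dvd_antisymm (GaussianInt.norm_nonneg z1) (by positivity) d1 d2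
    have e2 := Int.dvd_antisymm (GaussianInt.norm_nonneg z2) (by positivity) d3 d4
    exact ⟨(Associates.mk z1, Associates.mk z2), ⟨⟨z1, e1, rfl⟩, ⟨z2, e2, rfl⟩⟩, Associates.mk_mul_mk⟩

lemma norm_pow' (z : GaussianInt) (n : ℕ) : (z ^ n).norm = z.norm ^ n :=
  map_pow (Zsqrtd.normMonoidHom (d := -1)) z n

lemma prime_of_norm {z : GaussianInt} {p : ℕ} (hp : p.Prime) (h : z.norm = p) : Prime z := by
  rw [← irreducible_iff_prime]
  have hh : ∀ w : GaussianInt, IsUnit w ↔ w.norm.natAbs = 1 := fun w => Zsqrtd.norm_eq_one_iff.symm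
  constructor
  · rw [hh, h]; simpa using hp.one_lt.ne'
  · intro a b hab
    rw [hh, hh]
    have := congrArg Int.natAbs (congrArg Zsqrtd.norm hab)
    rw [h, Zsqrtd.norm_mul, Int.natAbs_mul, Int.natAbs_natCast] at this
    have h2 : Irreducible (a.norm.natAbs * b.norm.natAbs) := this ▸ hp
    simpa [Nat.isUnit_iff] using h2.isUnit_or_isUnit rfl

lemma f_one : f 1 = 1 := by
  unfold f
  rw [Set.ncard_eq_one]
  refine ⟨1, ?_⟩
  ext a
  constructor
  · rintro ⟨z, hz, rfl⟩
    have hz' : z.norm = 1 := by simpa using hz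
    have : IsUnit z := (Zsqrtd.norm_eq_one_iff' (by norm_num) z).1 hz'
    simpa using this
  · rintro rfl
    exact ⟨1, by simp, by simp⟩

lemma f_two (a : ℕ) : f (2 ^ a) = 1 := by
  have hn : (⟨1, 1⟩ : GaussianInt).norm = (2:ℕ) := by rw [norm_def']; norm_num
  have hp := prime_of_norm Nat.prime_two hn
  unfold f
  rw [Set.ncard_eq_one]
  refine ⟨Associates.mk (⟨1,1⟩ ^ a), ?_⟩
  ext x
  constructor
  · rintro ⟨z, hz, rfl⟩
    have hz' : z.norm = 2 ^ a := by simpa using hz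
    have h2 : ((2:ℤ) : GaussianInt) = ⟨1,1⟩ ^ 2 * ⟨0, -1⟩ := by decide
    have hd : z ∣ ⟨1,1⟩ ^ (2 * a) := by
      have := dvd_norm z
      rw [hz', Int.cast_pow, h2, mul_pow, ← pow_mul] at this
      refine IsUnit.dvd_mul_right (IsUnit.pow a ?_) |>.1 this
      rw [← Zsqrtd.norm_eq_one_iff' (by norm_num), norm_def']; norm_num
    obtain ⟨i, _, hi⟩ := (dvd_prime_pow hp _).1 hd
    have := assoc_norm hi
    rw [hz', norm_pow', hn] at this
    have hia : a = i := Nat.pow_right_injective (le_refl 2) (by exact_mod_cast this)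
    subst hia
    exact Associates.mk_eq_mk_iff_associated.2 hi
  · rintro rfl
    exact ⟨_, by simp [norm_pow', hn], rfl⟩

lemma f_three (q : ℕ) (hq : q.Prime) (h3 : q % 4 = 3) (a : ℕ) :
    f (q ^ a) = if Even a then 1 else 0 := by
  have := Fact.mk hq
  have hp : Prime ((q : ℕ) : GaussianInt) := GaussianInt.prime_of_nat_prime_of_mod_four_eq_three q h3
  have hn : ((q : ℕ) : GaussianInt).norm = (q:ℤ) ^ 2 := by rw [Zsqrtd.norm_natCast]; ring
  have key : ∀ z : GaussianInt, z.norm = (q:ℤ) ^ a → ∃ i, a = 2 * i ∧ Associated z ((q:GaussianInt) ^ i) := by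
    intro z hz
    have := dvd_norm z
    rw [hz] at this
    push_cast at this
    obtain ⟨i, _, hi⟩ := (dvd_prime_pow hp _).1 this
    refine ⟨i, ?_, hi⟩
    have := assoc_norm hi
    rw [hz, norm_pow', hn, ← pow_mul] at this
    exact Nat.pow_right_injective hq.two_le (by exact_mod_cast this)
  unfold f
  split_ifs with he
  · obtain ⟨i, rfl⟩ := he
    rw [Set.ncard_eq_one]
    refine ⟨Associates.mk ((q:GaussianInt) ^ i), ?_⟩
    ext x
    constructor
    · rintro ⟨z, hz, rfl⟩
      obtain ⟨j, hj, h⟩ := key z (by simpa using hz)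
      obtain rfl : i = j := by omega
      exact Associates.mk_eq_mk_iff_associated.2 h
    · rintro rfl
      refine ⟨_, ?_, rfl⟩
      simp only [Set.mem_ofPred_eq, norm_pow', hn]; push_cast; ring
  · rw [Set.ncard_eq_zero (S_finite _), Set.eq_empty_iff_forall_notMem]
    rintro _ ⟨z, hz, rfl⟩
    obtain ⟨j, hj, h⟩ := key z (by simpa using hz)
    exact he ⟨j, by omega⟩

lemma f_split (p : ℕ) (hp : p.Prime) (h1 : p % 4 = 1) (a : ℕ) : f (p ^ a) = a + 1 := by
  classical
  have := Fact.mk hp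
  obtain ⟨x, y, hxy⟩ := Nat.Prime.sq_add_sq (p := p) (by omega)
  set π : GaussianInt := ⟨x, y⟩ with hπ
  set ρ : GaussianInt := ⟨x, -y⟩ with hρ
  have nπ : π.norm = p := by rw [norm_def', ← hxy]; simp [hπ]
  have nρ : ρ.norm = p := by rw [norm_def', ← hxy]; simp [hρ]
  have pπ := prime_of_norm hp nπ
  have pρ := prime_of_norm hp nρ
  have hmul : ((p:ℤ) : GaussianInt) = π * ρ := by
    rw [← nπ, Zsqrtd.norm_eq_mul_conj]; rfl
  have hnd : ¬ π ∣ ρ := by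
    intro hd
    have hd2 : π ∣ ((2 * x : ℤ) : GaussianInt) := by
      have : ((2 * x : ℤ) : GaussianInt) = π + ρ := by
        apply Zsqrtd.ext <;> simp [hπ, hρ]; ring
      rw [this]; exact dvd_add (dvd_refl _) hd
    obtain ⟨c, hc⟩ := hd2
    have := congrArg Zsqrtd.norm hc
    rw [Zsqrtd.norm_intCast, Zsqrtd.norm_mul, nπ] at this
    have hdv : (p:ℤ) ∣ ((2 * x) * (2 * x) : ℤ) := ⟨_, this⟩
    have hdv2 : p ∣ (2 * x) * (2 * x) := by exact_mod_cast hdv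
    have hdv3 : p ∣ 2 * x := by simpa using (hp.dvd_mul.1 hdv2)
    have hdv4 : p ∣ x := by
      rcases hp.dvd_mul.1 hdv3 with h | h
      · have := Nat.le_of_dvd (by norm_num) h
        have := hp.two_le
        omega
      · exact h
    have hx0 : x ≠ 0 := by
      rintro rfl
      have : p = y * y := by rw [← hxy]; ring
      rw [this] at hp
      have h2 := (Nat.prime_mul_iff.1 hp)
      rcases h2 with ⟨h, h'⟩ | ⟨h, h'⟩ <;> exact Nat.not_prime_one (h' ▸ h)
    have hle := Nat.le_of_dvd (Nat.pos_of_ne_zero hx0) hdv4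
    have := hp.two_le
    nlinarith
  have hS : S (p ^ a) = ((Finset.range (a+1)).image
      (fun i => Associates.mk (π ^ i * ρ ^ (a - i))) : Set (Associates GaussianInt)) := by
    ext t
    simp only [Set.mem_image, Finset.coe_image, Finset.coe_range, Set.mem_Iio]
    constructor
    · rintro ⟨z, hz, rfl⟩
      have hz' : z.norm = (p:ℤ) ^ a := by simpa using hz
      have hd := dvd_norm z
      rw [hz', Int.cast_pow, hmul, mul_pow] at hd
      obtain ⟨z1, z2, h1, h2, rfl⟩ := exists_dvd_and_dvd_of_dvd_mul hd
      obtain ⟨i, _, hi⟩ := (dvd_prime_pow pπ _).1 h1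
      obtain ⟨j, _, hj⟩ := (dvd_prime_pow pρ _).1 h2
      have := assoc_norm (hi.mul_mul hj)
      rw [hz', Zsqrtd.norm_mul, norm_pow', norm_pow', nπ, nρ, ← pow_add] at this
      have hia : a = i + j := Nat.pow_right_injective hp.two_le (by exact_mod_cast this)
      refine ⟨i, by omega, ?_⟩
      rw [show a - i = j by omega]
      exact (Associates.mk_eq_mk_iff_associated.2 (hi.mul_mul hj)).symm
    · rintro ⟨i, hi, rfl⟩
      refine ⟨_, ?_, rfl⟩
      simp only [Set.mem_ofPred_eq, Zsqrtd.norm_mul, norm_pow', nπ, nρ]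
      rw [← pow_add, show i + (a - i) = a by omega]; push_cast; rfl
  have hlt : ∀ i j : ℕ, i < j → j < a + 1 →
      ¬ Associated (π ^ i * ρ ^ (a - i)) (π ^ j * ρ ^ (a - j)) := by
    intro i j hij hj has
    have : π ^ (i + 1) ∣ π ^ i * ρ ^ (a - i) :=
      ((pow_dvd_pow π hij).trans (dvd_mul_right _ _)).trans has.symm.dvd
    rw [pow_succ, mul_dvd_mul_iff_left (pow_ne_zero _ pπ.ne_zero)] at this
    exact hnd (pπ.dvd_of_dvd_pow this)
  unfold f
  rw [hS, Set.ncard_coe_finset, Finset.card_image_of_injOn, Finset.card_range]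
  intro i hi j hj hij
  simp only [Finset.coe_range, Set.mem_Iio] at hi hj
  have hij' := Associates.mk_eq_mk_iff_associated.1 hij
  rcases lt_trichotomy i j with h | h | h
  · exact absurd hij' (hlt i j h hj)
  · exact h
  · exact absurd hij'.symm (hlt j i h hi)

lemma f_le (n : ℕ) (hn : n ≠ 0) : f n ≤ n.divisors.card := by
  induction n using Nat.recOnPosPrimePosCoprime with
  | prime_pow p a hp ha =>
    rw [Nat.divisors_prime_pow hp, Finset.card_map, Finset.card_range]
    rcases hp.eq_two_or_odd with rfl | h
    · rw [f_two]; omega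
    · have : p % 4 = 1 ∨ p % 4 = 3 := by omega
      rcases this with h | h
      · rw [f_split p hp h]
      · rw [f_three p hp h]; split_ifs <;> omega
  | zero => exact absurd rfl hn
  | one => simp [f_one]
  | coprime a b ha hb hab iha ihb =>
    rw [f_mul hab, Nat.Coprime.card_divisors_mul hab]
    exact Nat.mul_le_mul (iha (by omega)) (ihb (by omega))

end Two
namespace Two

lemma card_div_mul_le (m n : ℕ) :
    (m * n).divisors.card ≤ m.divisors.card * n.divisors.card := by
  classical
  by_cases h0 : m * n = 0
  · rw [h0]; simp
  have hm : m ≠ 0 := left_ne_zero_of_mul h0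
  have hn : n ≠ 0 := right_ne_zero_of_mul h0
  rw [← Finset.card_product]
  refine (Finset.card_le_card (t := (m.divisors ×ˢ n.divisors).image (fun p => p.1 * p.2)) ?_).trans
    Finset.card_image_le
  intro d hd
  obtain ⟨a, b, ha, hb, rfl⟩ := exists_dvd_and_dvd_of_dvd_mul (Nat.dvd_of_mem_divisors hd)
  simp only [Finset.mem_image, Finset.mem_product, Nat.mem_divisors, Prod.exists]
  exact ⟨a, b, ⟨⟨ha, hm⟩, ⟨hb, hn⟩⟩, rfl⟩

lemma summable_div (s : ℂ) (hs : 1 < s.re) (k : ℕ) :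
    LSeriesSummable (fun n => ((n.divisors.card ^ k : ℕ) : ℂ)) s := by
  induction k with
  | zero =>
    refine LSeriesSummable_of_bounded_of_one_lt_re (m := 1) (fun n _ => by simp) hs
  | succ k ih =>
    have h := ih.convolution ih
    unfold LSeriesSummable at h ⊢
    refine Summable.of_norm_bounded h.norm (fun n => ?_)
    refine LSeries.norm_term_le s ?_
    rw [LSeries.convolution_def]
    dsimp only
    have : (∑ p ∈ n.divisorsAntidiagonal,
        ((p.1.divisors.card ^ k : ℕ) : ℂ) * ((p.2.divisors.card ^ k : ℕ) : ℂ)) =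
        ((∑ p ∈ n.divisorsAntidiagonal, p.1.divisors.card ^ k * p.2.divisors.card ^ k : ℕ) : ℂ) := by
      push_cast; rfl
    rw [this, Complex.norm_natCast, Complex.norm_natCast]
    norm_cast
    calc n.divisors.card ^ (k+1) = ∑ p ∈ n.divisorsAntidiagonal, n.divisors.card ^ k := by
          rw [Finset.sum_const, smul_eq_mul, ← Nat.map_div_right_divisors, Finset.card_map, pow_succ, mul_comm]
      _ ≤ _ := by
          refine Finset.sum_le_sum (fun p hp => ?_)
          rw [← mul_pow, ← (Nat.mem_divisorsAntidiagonal.1 hp).1]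
          exact Nat.pow_le_pow_left (card_div_mul_le _ _) _

noncomputable def T (k : ℕ) (x : ℂ) : ℂ := ∑' a : ℕ, ((a : ℂ) + 1) ^ k * x ^ a

lemma summable_T (k m : ℕ) : Summable (fun a : ℕ => ((a : ℝ) + m + 1) ^ k * (3/4 : ℝ) ^ a) := by
  have h := summable_pow_mul_geometric_of_norm_lt_one (R := ℝ) k (r := 3/4) (by norm_num)
  have h2 := ((summable_nat_add_iff (m + 1)).2 h).mul_right ((3/4 : ℝ) ^ (m+1))⁻¹
  refine h2.congr (fun a => ?_)
  push_cast
  rw [pow_add]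
  field_simp
  ring

lemma norm_T_term (k m a : ℕ) {x : ℂ} (hx : ‖x‖ ≤ 3/4) :
    ‖((a : ℂ) + m + 1) ^ k * x ^ a‖ ≤ ((a : ℝ) + m + 1) ^ k * (3/4 : ℝ) ^ a := by
  rw [norm_mul, norm_pow, norm_pow]
  have : ‖(a : ℂ) + m + 1‖ = (a : ℝ) + m + 1 := by
    have : (a : ℂ) + m + 1 = ((a + m + 1 : ℕ) : ℂ) := by push_cast; rfl
    rw [this, Complex.norm_natCast]; push_cast; rfl
  rw [this]
  gcongr

lemma T_diff (k : ℕ) : DifferentiableOn ℂ (T k) (Metric.ball 0 (3/4)) := by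
  unfold T
  refine Complex.differentiableOn_tsum_of_summable_norm (summable_T k 0) (fun i => ?_)
    Metric.isOpen_ball (fun i w hw => ?_)
  · fun_prop
  · have : ‖w‖ ≤ 3/4 := by simpa using (Metric.mem_ball.1 hw).le
    simpa using norm_T_term k 0 i this

def P (a : ℂ) (G : ℂ → ℂ) : Prop :=
  ∃ C : ℝ, 0 ≤ C ∧ ∀ x : ℂ, ‖x‖ ≤ 3/4 → ‖G x - 1 - a * x‖ ≤ C * ‖x‖ ^ 2

lemma P.mul {a b : ℂ} {G H : ℂ → ℂ} (hG : P a G) (hH : P b H) : P (a + b) (fun x => G x * H x) := by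
  obtain ⟨C, hC, hG⟩ := hG
  obtain ⟨D, hD, hH⟩ := hH
  refine ⟨‖a‖ * ‖b‖ + C * (1 + ‖b‖ + D) + (1 + ‖a‖) * D, by positivity, fun x hx => ?_⟩
  have h1 := hG x hx
  have h2 := hH x hx
  set e := G x - 1 - a * x
  set d := H x - 1 - b * x
  have hx1 : ‖x‖ ≤ 1 := by linarith
  have hx2 : ‖x‖ ^ 2 ≤ 1 := pow_le_one₀ (norm_nonneg _) hx1
  have : G x * H x - 1 - (a + b) * x = a * b * x ^ 2 + e * (1 + b * x + d) + (1 + a * x) * d := by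
    simp only [e, d]; ring
  rw [this]
  have n1 : ‖1 + b * x + d‖ ≤ 1 + ‖b‖ + D := by
    calc _ ≤ ‖(1:ℂ)‖ + ‖b * x‖ + ‖d‖ := norm_add₃_le
      _ ≤ 1 + ‖b‖ * 1 + D * 1 := by
        rw [norm_one, norm_mul]
        have := mul_le_mul_of_nonneg_left hx1 (norm_nonneg b)
        have := mul_le_mul_of_nonneg_left hx2 hD
        linarith
      _ = _ := by ring
  have n2 : ‖1 + a * x‖ ≤ 1 + ‖a‖ := by
    calc _ ≤ ‖(1:ℂ)‖ + ‖a * x‖ := norm_add_le _ _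
      _ ≤ 1 + ‖a‖ * 1 := by
        rw [norm_one, norm_mul]
        have := mul_le_mul_of_nonneg_left hx1 (norm_nonneg a)
        linarith
      _ = _ := by ring
  calc _ ≤ ‖a * b * x ^ 2‖ + ‖e * (1 + b * x + d)‖ + ‖(1 + a * x) * d‖ := norm_add₃_le
    _ ≤ ‖a‖ * ‖b‖ * ‖x‖ ^ 2 + (C * ‖x‖ ^ 2) * (1 + ‖b‖ + D) + (1 + ‖a‖) * (D * ‖x‖ ^ 2) := by
      rw [norm_mul, norm_mul, norm_mul, norm_mul, norm_pow]
      gcongr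
    _ = _ := by ring

lemma P.pow {a : ℂ} {G : ℂ → ℂ} (hG : P a G) (n : ℕ) : P (n * a) (fun x => G x ^ n) := by
  induction n with
  | zero => exact ⟨0, le_rfl, fun x _ => by simp⟩
  | succ n ih =>
    have := ih.mul hG
    simp only [← pow_succ] at this
    convert this using 1
    push_cast; ring

lemma P_T (k : ℕ) : P (2 ^ k) (T k) := by
  refine ⟨∑' a : ℕ, ((a : ℝ) + (2:ℕ) + 1) ^ k * (3/4 : ℝ) ^ a, tsum_nonneg (fun a => by positivity), ?_⟩
  intro x hx
  have hs : Summable (fun a : ℕ => ((a : ℂ) + 1) ^ k * x ^ a) :=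
    Summable.of_norm_bounded (summable_T k 0) (fun a => by simpa using norm_T_term k 0 a hx)
  have h2 : ∑' a : ℕ, (((a + 2 : ℕ) : ℂ) + 1) ^ k * x ^ (a + 2) =
      (∑' a : ℕ, ((a : ℂ) + (2:ℕ) + 1) ^ k * x ^ a) * x ^ 2 := by
    rw [← tsum_mul_right]
    refine tsum_congr (fun a => ?_)
    push_cast; ring
  have : T k x - 1 - 2 ^ k * x = (∑' a : ℕ, ((a : ℂ) + (2:ℕ) + 1) ^ k * x ^ a) * x ^ 2 := by
    unfold T
    rw [← hs.sum_add_tsum_nat_add 2, h2]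
    simp only [Finset.sum_range_succ, Finset.sum_range_zero]
    norm_num
    ring
  rw [this, norm_mul, norm_pow]
  gcongr
  exact tsum_of_norm_bounded (summable_T k 2).hasSum (fun a => norm_T_term k 2 a hx)

noncomputable def phiL (k p : ℕ) (x : ℂ) : ℂ :=
  if p % 4 = 1 then T k x * (1 - x) ^ (2 ^ k) else
    if p % 4 = 3 then (1 - x ^ 2) ^ (2 ^ (k - 1) - 1) else 1

lemma phiL_bound (k : ℕ) : ∃ C : ℝ, 0 ≤ C ∧ ∀ p x, ‖x‖ ≤ 3/4 → ‖phiL k p x - 1‖ ≤ C * ‖x‖ ^ 2 := by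
  have p1 : P (-1) (fun x => 1 - x) := ⟨0, le_rfl, fun x _ => by ring_nf; simp⟩
  have p2 : P 0 (fun x => 1 - x ^ 2) := ⟨1, by norm_num, fun x _ => by ring_nf; simp⟩
  obtain ⟨C, hC, h1⟩ := (P_T k).mul (p1.pow (2 ^ k))
  obtain ⟨D, hD, h2⟩ := p2.pow (2 ^ (k - 1) - 1)
  refine ⟨C + D, by positivity, fun p x hx => ?_⟩
  have g1 := h1 x hx
  have g2 := h2 x hx
  push_cast at g1
  simp only [mul_neg, mul_one, add_neg_cancel, zero_mul, sub_zero, mul_zero] at g1 g2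
  have hx2 : 0 ≤ ‖x‖ ^ 2 := by positivity
  unfold phiL
  split_ifs
  · nlinarith
  · nlinarith
  · simp; positivity

lemma phiL_diff (k p : ℕ) : DifferentiableOn ℂ (phiL k p) (Metric.ball 0 (3/4)) := by
  unfold phiL
  split_ifs
  · exact (T_diff k).mul (by fun_prop)
  · fun_prop
  · fun_prop

lemma norm_cpow (p : Nat.Primes) (s : ℂ) : ‖((p : ℕ) : ℂ) ^ (-s)‖ = ((p : ℕ) : ℝ) ^ (-s.re) := by
  rw [Complex.norm_natCast_cpow_of_pos p.2.pos, Complex.neg_re]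

lemma norm_cpow_lt (p : Nat.Primes) (s : ℂ) (hs : 1/2 < s.re) : ‖((p : ℕ) : ℂ) ^ (-s)‖ < 3/4 := by
  rw [norm_cpow]
  have hp : (2:ℝ) ≤ ((p:ℕ) : ℝ) := by exact_mod_cast p.2.two_le
  calc ((p : ℕ) : ℝ) ^ (-s.re) ≤ (2:ℝ) ^ (-s.re) :=
        Real.rpow_le_rpow_of_nonpos (by norm_num) hp (by linarith)
    _ ≤ (2:ℝ) ^ (-(1/2) : ℝ) := Real.rpow_le_rpow_of_exponent_le (by norm_num) (by linarith)
    _ < 3/4 := by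
      rw [Real.rpow_neg (by norm_num), ← Real.sqrt_eq_rpow, inv_lt_comm₀ (by positivity) (by norm_num)]
      apply Real.lt_sqrt_of_sq_lt
      norm_num

noncomputable def phi (k : ℕ) (s : ℂ) : ℂ :=
  ∏' p : Nat.Primes, (1 + (phiL k p (((p : ℕ) : ℂ) ^ (-s)) - 1))

lemma phi_unif (k : ℕ) (σ : ℝ) (hσ : 1/2 < σ) : ∃ u : Nat.Primes → ℝ, Summable u ∧
    ∀ (p : Nat.Primes) (s : ℂ), σ ≤ s.re → ‖phiL k p (((p : ℕ) : ℂ) ^ (-s)) - 1‖ ≤ u p := by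
  obtain ⟨C, hC, h⟩ := phiL_bound k
  refine ⟨fun p => C * ((p : ℕ) : ℝ) ^ (-(2 * σ)), ?_, fun p s hs => ?_⟩
  · refine Summable.mul_left _ ?_
    exact (Real.summable_nat_rpow.2 (by linarith : -(2*σ) < -1)).comp_injective
      Subtype.val_injective
  · refine (h p _ (norm_cpow_lt p s (by linarith)).le).trans ?_
    refine mul_le_mul_of_nonneg_left ?_ hC
    rw [norm_cpow, ← Real.rpow_natCast, ← Real.rpow_mul (by positivity)]
    refine Real.rpow_le_rpow_of_exponent_le (by exact_mod_cast p.2.one_le) ?_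
    push_cast; linarith

lemma phi_local_diff (k : ℕ) (p : Nat.Primes) :
    DifferentiableOn ℂ (fun s => phiL k p (((p : ℕ) : ℂ) ^ (-s)) - 1) {s : ℂ | 1/2 < s.re} := by
  refine DifferentiableOn.sub_const ?_ _
  refine (phiL_diff k p).comp ?_ ?_
  · intro s _
    refine DifferentiableAt.differentiableWithinAt ?_
    refine DifferentiableAt.const_cpow (by fun_prop) (Or.inl ?_)
    exact_mod_cast p.2.ne_zero
  · intro s hs
    simpa using norm_cpow_lt p s hs

lemma phi_mult (k : ℕ) (s : ℂ) (hs : 1/2 < s.re) :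
    Multipliable (fun p : Nat.Primes => (1 + (phiL k p (((p : ℕ) : ℂ) ^ (-s)) - 1))) := by
  obtain ⟨u, hu, h⟩ := phi_unif k s.re hs
  refine multipliable_one_add_of_summable (Summable.of_nonneg_of_le (fun _ => norm_nonneg _)
    (fun p => h p s le_rfl) hu)

lemma phi_bdd (k : ℕ) (σ : ℝ) (hσ : 1/2 < σ) : ∃ B : ℝ, ∀ s : ℂ, σ ≤ s.re → ‖phi k s‖ ≤ B := by
  obtain ⟨u, hu, h⟩ := phi_unif k σ hσ
  refine ⟨Real.exp (∑' p, u p), fun s hs => ?_⟩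
  have hm := (phi_mult k s (by linarith)).hasProd
  refine le_of_tendsto hm.norm (Filter.Eventually.of_forall fun t => ?_)
  have hu0 : ∀ p, 0 ≤ u p := fun p => (norm_nonneg _).trans (h p s hs)
  calc _ ≤ ∏ p ∈ t, Real.exp (u p) := by
        refine Finset.prod_le_prod (fun _ _ => norm_nonneg _) (fun p _ => ?_)
        refine (norm_add_le _ _).trans ?_
        rw [norm_one]
        have := Real.add_one_le_exp (u p)
        linarith [h p s hs]
    _ = Real.exp (∑ p ∈ t, u p) := (Real.exp_sum _ _).symm
    _ ≤ _ := Real.exp_le_exp.2 (hu.sum_le_tsum _ (fun p _ => hu0 p))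

lemma phi_diff (k : ℕ) : DifferentiableOn ℂ (phi k) {s : ℂ | 1/2 < s.re} := by
  intro s hs
  have hs' : 1/2 < s.re := hs
  obtain ⟨σ, h1, h2⟩ := exists_between hs'
  obtain ⟨u, hu, h⟩ := phi_unif k σ h1
  have ho : IsOpen {z : ℂ | σ < z.re} := isOpen_lt continuous_const Complex.continuous_re
  have hsub : {z : ℂ | σ < z.re} ⊆ {s : ℂ | 1/2 < s.re} := fun z hz => lt_trans h1 hz
  have hd := fun p => (phi_local_diff k p).mono hsub
  have := Summable.hasProdLocallyUniformlyOn_one_add ho hu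
    (Filter.Eventually.of_forall fun p z (hz : σ < z.re) => h p z hz.le)
    (fun p => (hd p).continuousOn)
  have hD := this.differentiableOn (.of_forall fun t => by
    simpa [Finset.prod_fn] using
      DifferentiableOn.finsetProd (fun p _ => (hd p).const_add 1)) ho
  exact (hD.differentiableAt (ho.mem_nhds h2)).differentiableWithinAt

noncomputable def chi : DirichletCharacter ℂ 4 := ZMod.χ₄.ringHomComp (Int.castRingHom ℂ)

lemma chi_apply (n : ℕ) : chi (n : ZMod 4) = ((ZMod.χ₄ (n : ZMod 4) : ℤ) : ℂ) := rfl

lemma eta_eq (s : ℂ) (hs : 1 < s.re) : LSeries (fun n => chi (n : ZMod 4)) s = eta s := by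
  rw [← tsum_dirichletSummand chi hs]
  have hsum : Summable (fun n : ℕ => chi (n : ZMod 4) * (n : ℂ) ^ (-s)) :=
    (summable_dirichletSummand chi hs).of_norm
  have hD : ∀ n : ℕ, dirichletSummandHom chi (Complex.ne_zero_of_one_lt_re hs) n =
    chi (n : ZMod 4) * (n : ℂ) ^ (-s) := fun _ => rfl
  simp only [hD]
  generalize hF : (fun n : ℕ => chi (n : ZMod 4) * (n : ℂ) ^ (-s)) = F at hsum ⊢
  have hF' : ∀ n : ℕ, F n = chi (n : ZMod 4) * (n : ℂ) ^ (-s) := fun n => by rw [← hF]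
  have i1 : Function.Injective (fun n : ℕ => 2 * n) := fun a b h => by simpa using h
  have i2 : Function.Injective (fun n : ℕ => 2 * n + 1) := fun a b h => by simpa using h
  rw [← tsum_even_add_odd (f := F) (hsum.comp_injective i1) (hsum.comp_injective i2)]
  have he : ∀ n : ℕ, F (2 * n) = 0 := by
    intro n
    rw [hF', chi_apply, ZMod.χ₄_nat_eq_if_mod_four]
    simp
  simp only [he, tsum_zero, zero_add]
  unfold eta
  refine tsum_congr (fun n => ?_)
  rw [hF', chi_apply, ZMod.χ₄_eq_neg_one_pow (by omega), show (2 * n + 1) / 2 = n by omega,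
    Complex.cpow_neg, div_eq_mul_inv]
  push_cast; rfl

lemma hasProd_pow {ι : Type*} {g : ι → ℂ} {a : ℂ} (h : HasProd g a) (n : ℕ) :
    HasProd (fun i => g i ^ n) (a ^ n) := by
  induction n with
  | zero => simpa using hasProd_one
  | succ n ih => simpa only [pow_succ] using ih.mul h

lemma local_eq (k : ℕ) (hk : 1 ≤ k) (p : ℕ) (hp : p.Prime) (x : ℂ) (hx : ‖x‖ < 3/4) :
    ∑' e : ℕ, ((f (p ^ e) : ℂ)) ^ k * x ^ e =
      (if p = 2 then (1 - x) ^ (2 ^ (k - 1) - 1) else 1) *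
        ((1 - x)⁻¹ * (1 - chi p * x)⁻¹) ^ (2 ^ (k - 1)) * phiL k p x := by
  have hx1 : ‖x‖ < 1 := by linarith
  have n1 : 1 - x ≠ 0 := by
    intro h
    rw [sub_eq_zero.1 h |>.symm, norm_one] at hx1; exact lt_irrefl _ hx1
  have n2 : 1 + x ≠ 0 := by
    intro h
    rw [show x = -1 by linear_combination h, norm_neg, norm_one] at hx1; exact lt_irrefl _ hx1
  obtain ⟨N, hN⟩ : ∃ N, 2 ^ (k - 1) = N + 1 :=
    ⟨2 ^ (k - 1) - 1, (Nat.sub_add_cancel Nat.one_le_two_pow).symm⟩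
  have hk2 : 2 ^ k = 2 * (N + 1) := by
    rw [← hN, ← pow_succ', Nat.sub_add_cancel hk]
  rw [chi_apply]
  rcases hp.eq_two_or_odd with rfl | h
  · have : ((ZMod.χ₄ ((2:ℕ) : ZMod 4) : ℤ) : ℂ) = 0 := by
      rw [ZMod.χ₄_nat_eq_if_mod_four]; simp
    rw [this]
    simp only [f_two, phiL]
    norm_num
    rw [tsum_geometric_of_norm_lt_one hx1, hN, Nat.add_sub_cancel]
    field_simp
    ring
  · have hp2 : p ≠ 2 := by rintro rfl; omega
    have : p % 4 = 1 ∨ p % 4 = 3 := by omega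
    rcases this with h | h
    · rw [ZMod.χ₄_nat_one_mod_four h, hN]
      simp only [f_split p hp h, phiL, h, hp2, if_true, if_false, hk2]
      have : ∑' e : ℕ, (((e + 1 : ℕ)) : ℂ) ^ k * x ^ e = T k x := by
        unfold T; push_cast; rfl
      rw [this]
      push_cast
      rw [one_mul, one_mul, pow_mul, ← mul_inv, ← sq, inv_pow]
      field_simp
    · rw [ZMod.χ₄_nat_three_mod_four h, hN]
      simp only [f_three p hp h, phiL, h, hp2, if_true, if_false, hN, Nat.add_sub_cancel]
      have hxx : ‖x ^ 2‖ < 1 := by rw [norm_pow]; exact pow_lt_one₀ (norm_nonneg _) hx1 (by norm_num)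
      have hev : HasSum (fun e : ℕ => (((if Even e then 1 else 0 : ℕ)) : ℂ) ^ k * x ^ e)
          ((1 - x ^ 2)⁻¹ + 0) := by
        refine HasSum.even_add_odd ?_ ?_
        · have := hasSum_geometric_of_norm_lt_one hxx
          simpa [pow_mul] using this
        · have hk0 : k ≠ 0 := by omega
          simpa [hk0, parity_simps] using hasSum_zero
      rw [hev.tsum_eq]
      norm_num
      have e : (1 - x ^ 2) = (1 - x) * (1 + x) := by ring
      have e' : (1 - x)⁻¹ * (1 + x)⁻¹ = ((1 - x) * (1 + x))⁻¹ := by rw [mul_inv]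
      have n3 : (1 - x) * (1 + x) ≠ 0 := mul_ne_zero n1 n2
      rw [← e] at e' n3
      rw [e', inv_pow]
      field_simp
      ring

lemma main (k : ℕ) (hk : 1 ≤ k) (s : ℂ) (hs : 1 < s.re) :
    ∑' n : ℕ, (r (n + 1) : ℂ) ^ k / ((n : ℂ) + 1) ^ s =
          4 ^ k * (1 - (2 : ℂ) ^ (-s)) ^ (2 ^ (k - 1) - 1) *
            (riemannZeta s * eta s) ^ (2 ^ (k - 1)) * phi k s := by
  have h0 : s ≠ 0 := Complex.ne_zero_of_one_lt_re hs
  let Z := riemannZetaSummandHom h0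
  have hZ : ∀ n : ℕ, Z n = (n : ℂ) ^ (-s) := fun _ => rfl
  let g : ℕ → ℂ := fun n => (f n : ℂ) ^ k * Z n
  have g0 : g 0 = 0 := by simp [g]
  have g1 : g 1 = 1 := by simp [g, f_one]
  have gm : ∀ {m n : ℕ}, m.Coprime n → g (m * n) = g m * g n := by
    intro m n h
    simp only [g, f_mul h, map_mul]
    push_cast; ring
  have gs : Summable (fun n => ‖g n‖) := by
    have := (summable_div s hs k).norm
    refine Summable.of_nonneg_of_le (fun _ => norm_nonneg _) (fun n => ?_) this
    rcases eq_or_ne n 0 with rfl | hn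
    · rw [g0]; simp
    · rw [LSeries.term_of_ne_zero hn, div_eq_mul_inv, ← Complex.cpow_neg, ← hZ]
      simp only [g, norm_mul, Complex.norm_natCast, norm_pow]
      gcongr
      push_cast
      gcongr
      exact f_le n hn
  have hE := EulerProduct.eulerProduct_hasProd g1 gm gs g0
  have hL : ∀ p : Nat.Primes, ∑' e : ℕ, g ((p:ℕ) ^ e) = 
      (if (p:ℕ) = 2 then (1 - (2:ℂ) ^ (-s)) ^ (2 ^ (k - 1) - 1) else 1) *
        ((1 - ((p:ℕ):ℂ)^(-s))⁻¹ * (1 - chi (p:ℕ) * ((p:ℕ):ℂ)^(-s))⁻¹) ^ (2 ^ (k - 1)) *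
          (1 + (phiL k p (((p:ℕ):ℂ)^(-s)) - 1)) := by
    intro p
    have := local_eq k hk p p.2 (((p:ℕ):ℂ)^(-s)) (norm_cpow_lt p s (by linarith))
    rw [add_sub_cancel]
    have e1 : ∀ e : ℕ, g ((p:ℕ) ^ e) = (f ((p:ℕ) ^ e) : ℂ) ^ k * (((p:ℕ):ℂ)^(-s)) ^ e := by
      intro e
      simp only [g, map_pow]
      rw [hZ]
    simp only [e1]
    rw [this]
    congr 2
    split_ifs with h
    · rw [h]; norm_num
    · rfl
  simp only [hL] at hE
  have hT : HasProd (fun p : Nat.Primes => if (p:ℕ) = 2 then (1 - (2:ℂ) ^ (-s)) ^ (2 ^ (k - 1) - 1) else 1)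
      ((1 - (2:ℂ) ^ (-s)) ^ (2 ^ (k - 1) - 1)) := by
    have := hasProd_single (f := fun p : Nat.Primes => if (p:ℕ) = 2 then (1 - (2:ℂ) ^ (-s)) ^ (2 ^ (k - 1) - 1) else 1)
      ⟨2, Nat.prime_two⟩ (fun p hp => if_neg (fun h => hp (Subtype.ext h)))
    simpa using this
  have hC := (hT.mul (hasProd_pow ((riemannZeta_eulerProduct_hasProd hs).mul
    (DirichletCharacter.LSeries_eulerProduct_hasProd chi hs)) (2 ^ (k-1)))).mul
    (phi_mult k s (by linarith)).hasProd
  have hU := hE.unique hC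
  rw [eta_eq s hs] at hU
  have : ∑' n : ℕ, (r (n + 1) : ℂ) ^ k / ((n : ℂ) + 1) ^ s = 4 ^ k * ∑' n, g n := by
    rw [gs.of_norm.tsum_eq_zero_add, g0, zero_add, ← tsum_mul_left]
    refine tsum_congr (fun n => ?_)
    simp only [g, hZ]
    rw [r_eq (n+1) (by omega), Complex.cpow_neg, div_eq_mul_inv]
    push_cast
    ring
  rw [this, hU]
  unfold phi
  ring

end Two

theorem stmt2 (k : ℕ) (hk : 1 ≤ k) :
    ∃ φ : ℂ → ℂ, DifferentiableOn ℂ φ {s : ℂ | 1 / 2 < s.re} ∧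
      (∀ σ : ℝ, 1 / 2 < σ → ∃ B : ℝ, ∀ s : ℂ, σ ≤ s.re → ‖φ s‖ ≤ B) ∧
      ∀ s : ℂ, 1 < s.re →
        ∑' n : ℕ, (r (n + 1) : ℂ) ^ k / ((n : ℂ) + 1) ^ s =
          4 ^ k * (1 - (2 : ℂ) ^ (-s)) ^ (2 ^ (k - 1) - 1) *
            (riemannZeta s * eta s) ^ (2 ^ (k - 1)) * φ s :=
  ⟨Two.phi k, Two.phi_diff k, Two.phi_bdd k, Two.main k hk⟩
end

section
/- (Kühnlein's criterion) Let L ⊆ ℝ² be a lattice, i.e., L = ℤu ⊕ ℤv for linearly independent u, v ∈ ℝ². Call L arithmetic if there exists c > 0 such that c·‖w‖² ∈ ℚ for every w ∈ L. Then L is arithmetic if and only if there exist three vectors w₁, w₂, w₃ ∈ L that are pairwise linearly independent over ℝ and satisfy ‖w₁‖ = ‖w₂‖ = ‖w₃‖. -/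
/-- A lattice in the Euclidean plane: `L = ℤu ⊕ ℤv` for linearly independent `u`, `v`. -/
def IsLattice (L : Set (EuclideanSpace ℝ (Fin 2))) : Prop :=
  ∃ u v : EuclideanSpace ℝ (Fin 2), LinearIndependent ℝ ![u, v] ∧
    L = {w | ∃ a b : ℤ, w = a • u + b • v}

/-- A lattice `L ⊆ ℝ²` is arithmetic if some positive rescaling makes all squared norms
of lattice vectors rational. -/
def IsArithmetic (L : Set (EuclideanSpace ℝ (Fin 2))) : Prop :=
  ∃ c : ℝ, 0 < c ∧ ∀ w ∈ L, ∃ q : ℚ, c * ‖w‖ ^ 2 = (q : ℝ)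

lemma aux_norm (u v : EuclideanSpace ℝ (Fin 2)) (a b : ℝ) :
    ‖a • u + b • v‖ ^ 2 = a ^ 2 * ‖u‖ ^ 2 + 2 * a * b * inner ℝ u v + b ^ 2 * ‖v‖ ^ 2 := by
  rw [norm_add_sq_real, norm_smul, norm_smul, mul_pow, mul_pow, inner_smul_left, inner_smul_right]
  simp only [Real.norm_eq_abs, sq_abs, conj_trivial]
  ring

lemma aux_li {u v : EuclideanSpace ℝ (Fin 2)} (h : LinearIndependent ℝ ![u, v]) (a b c d : ℝ) :
    LinearIndependent ℝ ![a • u + b • v, c • u + d • v] ↔ a * d - b * c ≠ 0 := by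
  rw [LinearIndependent.pair_iff] at h ⊢
  constructor
  · intro H h0
    have h1 := H d (-b) (by
      have : d • (a • u + b • v) + (-b) • (c • u + d • v) = (a * d - b * c) • u := by module
      rw [this, h0, zero_smul])
    have h2 := H c (-a) (by
      have : c • (a • u + b • v) + (-a) • (c • u + d • v) = (-(a * d - b * c)) • v := by module
      rw [this, h0, neg_zero, zero_smul])
    have ha : a = 0 := by linarith [h2.2]
    have hb : b = 0 := by linarith [h1.2]
    have := H 1 0 (by simp [ha, hb])
    exact one_ne_zero this.1
  · intro hD s t hst
    have := h (s * a + t * c) (s * b + t * d) (by rw [← hst]; module)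
    constructor
    · apply (mul_eq_zero.1 (_ : s * (a * d - b * c) = 0)).resolve_right hD
      linear_combination d * this.1 - c * this.2
    · apply (mul_eq_zero.1 (_ : t * (a * d - b * c) = 0)).resolve_right hD
      linear_combination a * this.2 - b * this.1

/-- Kühnlein's criterion: a lattice is arithmetic iff it contains three pairwise linearly
independent vectors of the same length. -/
theorem stmt13 (L : Set (EuclideanSpace ℝ (Fin 2))) (hL : IsLattice L) :
    IsArithmetic L ↔
      ∃ w₁ ∈ L, ∃ w₂ ∈ L, ∃ w₃ ∈ L,
        LinearIndependent ℝ ![w₁, w₂] ∧ LinearIndependent ℝ ![w₁, w₃] ∧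
        LinearIndependent ℝ ![w₂, w₃] ∧ ‖w₁‖ = ‖w₂‖ ∧ ‖w₂‖ = ‖w₃‖ := by
  obtain ⟨u, v₀, huv₀, rfl⟩ := hL
  constructor
  · rintro ⟨c, hc, hq⟩
    have hu0 : u ≠ 0 := huv₀.ne_zero 0
    have hA : 0 < ‖u‖ ^ 2 := by positivity
    obtain ⟨k, hk⟩ := exists_nat_gt (-(inner ℝ u v₀) / ‖u‖ ^ 2)
    rw [div_lt_iff₀ hA] at hk
    obtain ⟨v, hv⟩ : ∃ v, v = (k : ℝ) • u + (1 : ℝ) • v₀ := ⟨_, rfl⟩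
    have huv : LinearIndependent ℝ ![u, v] := by
      have := (aux_li huv₀ 1 0 k 1).2 (by norm_num)
      rw [← hv] at this
      simpa using this
    have hB : 0 < inner ℝ u v := by
      rw [hv, inner_add_right, inner_smul_right, inner_smul_right, real_inner_self_eq_norm_sq]
      linarith
    have hv0 : v ≠ 0 := huv.ne_zero 1
    have hC : 0 < ‖v‖ ^ 2 := by positivity
    have hmem : ∀ a b : ℤ, (a : ℝ) • u + (b : ℝ) • v ∈
        {w | ∃ a b : ℤ, w = a • u + b • v₀} := by
      intro a b
      refine ⟨a + b * k, b, ?_⟩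
      rw [hv, ← Int.cast_smul_eq_zsmul ℝ, ← Int.cast_smul_eq_zsmul ℝ]
      push_cast
      module
    obtain ⟨qa, ha⟩ := hq _ (hmem 1 0)
    obtain ⟨qc, hcc⟩ := hq _ (hmem 0 1)
    obtain ⟨qb, hb⟩ := hq _ (hmem 1 1)
    rw [aux_norm] at ha hb hcc
    push_cast at ha hb hcc
    generalize hAe : ‖u‖ ^ 2 = A at *
    generalize hCe : ‖v‖ ^ 2 = C at *
    generalize hBe : inner ℝ u v = B at *
    have e1 : c * A = qa := by linarith
    have e2 : c * C = qc := by linarith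
    have e3 : 2 * (c * B) = qb - qa - qc := by linarith
    obtain ⟨β, hβ⟩ : ∃ β : ℚ, (β : ℝ) = 2 * B / C := by
      refine ⟨(qb - qa - qc) / qc, ?_⟩
      push_cast
      rw [← e3, ← e2]
      field_simp
    obtain ⟨ρ, hρ⟩ : ∃ ρ : ℚ, (ρ : ℝ) = 2 * (A + B) / (A + 2 * B + C) := by
      refine ⟨(2 * qa + (qb - qa - qc)) / qb, ?_⟩
      have : (qb : ℝ) = c * (A + 2 * B + C) := by linarith
      push_cast
      rw [← e3, ← e1, this]
      field_simp
    have hβ0 : (β : ℝ) ≠ 0 := by rw [hβ]; positivity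
    have hρ0 : (ρ : ℝ) ≠ 0 := by rw [hρ]; positivity
    have hβρ : (β : ℝ) - ρ * (1 + β) ≠ 0 := by
      have : (β : ℝ) - ρ * (1 + β) = - (2 * A * (B + C) / (C * (A + 2 * B + C))) := by
        rw [hβ, hρ]; field_simp; ring
      rw [this, neg_ne_zero]; positivity
    have hn : ((β.den * ρ.den : ℤ) : ℝ) ≠ 0 := by
      have := β.den_nz; have := ρ.den_nz; positivity
    have hβi : ((β.num * ρ.den : ℤ) : ℝ) = ((β.den * ρ.den : ℤ) : ℝ) * β := by
      have h := Rat.mul_den_eq_num β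
      have h' : (β : ℝ) * β.den = β.num := by exact_mod_cast h
      push_cast; rw [← h']; ring
    have hρi : ((ρ.num * β.den : ℤ) : ℝ) = ((β.den * ρ.den : ℤ) : ℝ) * ρ := by
      have h := Rat.mul_den_eq_num ρ
      have h' : (ρ : ℝ) * ρ.den = ρ.num := by exact_mod_cast h
      push_cast; rw [← h']; ring
    refine ⟨_, hmem (β.den * ρ.den) 0, _, hmem (-(β.den * ρ.den)) (β.num * ρ.den),
      _, hmem (ρ.num * β.den - (β.den * ρ.den)) (ρ.num * β.den), ?_⟩
    rw [Int.cast_sub, Int.cast_neg, hβi, hρi, Int.cast_zero]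
    generalize ((β.den * ρ.den : ℤ) : ℝ) = n at *
    refine ⟨(aux_li huv _ _ _ _).2 ?_, (aux_li huv _ _ _ _).2 ?_, (aux_li huv _ _ _ _).2 ?_, ?_, ?_⟩
    · have : n * (n * β) - 0 * (-n) = n ^ 2 * β := by ring
      rw [this]; positivity
    · have : n * (n * ρ) - 0 * (n * ρ - n) = n ^ 2 * ρ := by ring
      rw [this]; positivity
    · have : -n * (n * ρ) - n * β * (n * ρ - n) = n ^ 2 * (β - ρ * (1 + β)) := by ring
      rw [this]; exact mul_ne_zero (by positivity) hβρ
    · rw [← sq_eq_sq₀ (norm_nonneg _) (norm_nonneg _), aux_norm, aux_norm, hAe, hBe, hCe, hβ]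
      field_simp
      ring
    · rw [← sq_eq_sq₀ (norm_nonneg _) (norm_nonneg _), aux_norm, aux_norm, hAe, hBe, hCe, hβ, hρ]
      field_simp
      ring
  · rintro ⟨w₁, ⟨a1, b1, h1⟩, w₂, ⟨a2, b2, h2⟩, w₃, ⟨a3, b3, h3⟩, l12, l13, l23, n12, n23⟩
    rw [← Int.cast_smul_eq_zsmul ℝ, ← Int.cast_smul_eq_zsmul ℝ] at h1 h2 h3
    have d12 := l12
    have d13 := l13
    have d23 := l23
    rw [h1, h2, aux_li huv₀] at d12
    rw [h1, h3, aux_li huv₀] at d13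
    rw [h2, h3, aux_li huv₀] at d23
    have hw : w₁ ≠ 0 := l12.ne_zero 0
    have hR : 0 < ‖w₁‖ ^ 2 := by positivity
    have key : ∀ a b : ℝ, (a1 * b2 - b1 * a2 : ℝ) ^ 2 * ‖a • u + b • v₀‖ ^ 2 =
        (a * b2 - b * a2) ^ 2 * ‖w₁‖ ^ 2 + 2 * (a * b2 - b * a2) * (b * a1 - a * b1) *
          inner ℝ w₁ w₂ + (b * a1 - a * b1) ^ 2 * ‖w₁‖ ^ 2 := by
      intro a b
      have := aux_norm w₁ w₂ (a * b2 - b * a2) (b * a1 - a * b1)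
      rw [← n12] at this
      rw [← this, ← sq_abs (a1 * b2 - b1 * a2 : ℝ), ← Real.norm_eq_abs, ← mul_pow, ← norm_smul,
        h1, h2]
      congr 2
      module
    have k3 := key a3 b3
    rw [← h3, ← n23, ← n12] at k3
    generalize ‖w₁‖ ^ 2 = R at *
    generalize inner ℝ w₁ w₂ = S at *
    have p3 : (a3 * b2 - b3 * a2 : ℝ) ≠ 0 := fun h => d23 (by linarith)
    have q3 : (b3 * a1 - a3 * b1 : ℝ) ≠ 0 := fun h => d13 (by linarith)
    obtain ⟨s, hs⟩ : ∃ s : ℚ, S = R * s := by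
      refine ⟨((a1 * b2 - b1 * a2) ^ 2 - (a3 * b2 - b3 * a2) ^ 2 - (b3 * a1 - a3 * b1) ^ 2) /
        (2 * (a3 * b2 - b3 * a2) * (b3 * a1 - a3 * b1)), ?_⟩
      push_cast
      rw [← mul_div_assoc, eq_div_iff (by positivity)]
      linear_combination -k3
    refine ⟨R⁻¹, by positivity, ?_⟩
    rintro w ⟨a, b, rfl⟩
    rw [← Int.cast_smul_eq_zsmul ℝ, ← Int.cast_smul_eq_zsmul ℝ]
    refine ⟨((a * b2 - b * a2) ^ 2 + 2 * (a * b2 - b * a2) * (b * a1 - a * b1) * s +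
      (b * a1 - a * b1) ^ 2) / (a1 * b2 - b1 * a2) ^ 2, ?_⟩
    have := key a b
    push_cast
    rw [eq_div_iff (by positivity), mul_assoc, mul_comm (‖_‖ ^ 2), this, hs]
    field_simp
end

section
/- Let L ⊆ ℝ² be a lattice (L = ℤu ⊕ ℤv with u, v linearly independent) that is not arithmetic, i.e., there is no c > 0 with c·‖w‖² ∈ ℚ for all w ∈ L. Then: (a) for every r > 0, #{w ∈ L : ‖w‖ = r} ≤ 4, so every distance between points of L is repeated at most 4 times among difference vectors; and (b) for every finite subset P ⊆ L with |P| = N ≥ 2, the number of distinct distances satisfies d(P) ≥ (N − 1)/4. -/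
/-- The number of distinct distances determined by a finite set `P` in a metric space. -/
noncomputable def distinctDists {M : Type*} [MetricSpace M] (P : Finset M) : ℕ :=
  Set.ncard {d : ℝ | ∃ p ∈ P, ∃ q ∈ P, p ≠ q ∧ dist p q = d}

/-- Two vectors of equal positive norm with vanishing integer determinant agree up to sign. -/
theorem det_ne_zero_aux (u v x y : EuclideanSpace ℝ (Fin 2)) (r : ℝ) (hr : 0 < r)
    (a b a' b' : ℤ) (hx : x = a • u + b • v) (hy : y = a' • u + b' • v)
    (hnx : ‖x‖ = r) (hny : ‖y‖ = r) (h1 : y ≠ x) (h2 : y ≠ -x) : a * b' - a' * b ≠ 0 := by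
  intro hD
  have key : ∀ s t : ℤ, s • x = t • y → s = 0 ∧ t = 0 := by
    intro s t hst
    by_contra hne
    have hst' : (s : ℝ) • x = (t : ℝ) • y := by
      rw [Int.cast_smul_eq_zsmul, Int.cast_smul_eq_zsmul]; exact hst
    have hn : |(s : ℝ)| = |(t : ℝ)| := by
      have := congrArg norm hst'
      rw [norm_smul, norm_smul, hnx, hny, Real.norm_eq_abs, Real.norm_eq_abs] at this
      exact mul_right_cancel₀ hr.ne' this
    rcases abs_eq_abs.mp hn with h | h
    · have ht : (t : ℝ) ≠ 0 := by
        intro h0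
        apply hne
        rw [h0] at h
        exact ⟨by exact_mod_cast h, by exact_mod_cast h0⟩
      rw [h] at hst'
      exact h1 (smul_right_injective _ ht hst').symm
    · have ht : (t : ℝ) ≠ 0 := by
        intro h0
        apply hne
        rw [h0, neg_zero] at h
        exact ⟨by exact_mod_cast h, by exact_mod_cast h0⟩
      rw [h, neg_smul, ← smul_neg] at hst'
      exact h2 (smul_right_injective _ ht hst').symm
  have e1 := key b' b (by
    rw [hx, hy, smul_add, smul_add, smul_smul, smul_smul, smul_smul, smul_smul,
      show b' * a = b * a' by linarith, mul_comm b' b])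
  have e2 := key a' a (by
    rw [hx, hy, smul_add, smul_add, smul_smul, smul_smul, smul_smul, smul_smul,
      show a' * b = a * b' by linarith, mul_comm a' a])
  rw [e2.2, e1.2] at hx
  simp at hx
  rw [hx] at hnx
  simp at hnx
  linarith

theorem normsq_aux (x y w : EuclideanSpace ℝ (Fin 2)) (r D m n : ℝ)
    (hnx : ‖x‖ = r) (hny : ‖y‖ = r) (h : D • w = m • x + n • y) :
    D ^ 2 * ‖w‖ ^ 2 = (m ^ 2 + n ^ 2) * r ^ 2 + 2 * (m * n) * inner ℝ x y := by
  have h2 : ‖D • w‖ ^ 2 = ‖m • x + n • y‖ ^ 2 := by rw [h]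
  rw [norm_add_sq_real, norm_smul, norm_smul, norm_smul, real_inner_smul_left,
    real_inner_smul_right, mul_pow, mul_pow, mul_pow, hnx, hny] at h2
  simp only [Real.norm_eq_abs, sq_abs] at h2
  linarith

theorem comb_aux (u v x y w : EuclideanSpace ℝ (Fin 2)) (a b a' b' c d : ℤ)
    (hx : x = a • u + b • v) (hy : y = a' • u + b' • v) (hw : w = c • u + d • v) :
    ((a * b' - a' * b : ℤ) : ℝ) • w =
      ((c * b' - a' * d : ℤ) : ℝ) • x + ((a * d - c * b : ℤ) : ℝ) • y := by
  simp only [Int.cast_smul_eq_zsmul]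
  rw [hx, hy, hw]
  module

theorem arith_aux (L : Set (EuclideanSpace ℝ (Fin 2))) (hL : IsLattice L)
    (r : ℝ) (hr : 0 < r) (x y z : EuclideanSpace ℝ (Fin 2))
    (hxL : x ∈ L) (hyL : y ∈ L) (hzL : z ∈ L)
    (hnx : ‖x‖ = r) (hny : ‖y‖ = r) (hnz : ‖z‖ = r)
    (hyx : y ≠ x) (hyx' : y ≠ -x) (hzx : z ≠ x) (hzx' : z ≠ -x)
    (hzy : z ≠ y) (hzy' : z ≠ -y) : IsArithmetic L := by
  obtain ⟨u, v, -, rfl⟩ := hL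
  obtain ⟨a, b, hx⟩ := hxL
  obtain ⟨a', b', hy⟩ := hyL
  obtain ⟨c, d, hz⟩ := hzL
  have hD := det_ne_zero_aux u v x y r hr a b a' b' hx hy hnx hny hyx hyx'
  have hn := det_ne_zero_aux u v x z r hr a b c d hx hz hnx hnz hzx hzx'
  have hm' := det_ne_zero_aux u v y z r hr a' b' c d hy hz hny hnz hzy hzy'
  have hm : c * b' - a' * d ≠ 0 := fun h => hm' (by linarith)
  have hz2 := normsq_aux x y z r _ _ _ hnx hny (comb_aux u v x y z a b a' b' c d hx hy hz)
  rw [hnz] at hz2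
  refine ⟨(r ^ 2)⁻¹, by positivity, ?_⟩
  rintro w ⟨e, f, hw⟩
  have hw2 := normsq_aux x y w r _ _ _ hnx hny (comb_aux u v x y w a b a' b' e f hx hy hw)
  generalize a * b' - a' * b = D at *
  generalize a * d - c * b = n at *
  generalize c * b' - a' * d = m at *
  generalize e * b' - a' * f = m' at *
  generalize a * f - e * b = n' at *
  have hDR : (D : ℝ) ≠ 0 := by exact_mod_cast hD
  have hnR : (n : ℝ) ≠ 0 := by exact_mod_cast hn
  have hmR : (m : ℝ) ≠ 0 := by exact_mod_cast hm
  refine ⟨((m' ^ 2 + n' ^ 2) + 2 * (m' * n') *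
    ((D ^ 2 - (m ^ 2 + n ^ 2)) / (2 * (m * n)))) / D ^ 2, ?_⟩
  have hin : inner ℝ x y =
      r ^ 2 * (((D : ℝ) ^ 2 - (m ^ 2 + n ^ 2)) / (2 * (m * n))) := by
    field_simp
    linarith
  rw [hin] at hw2
  have hwn : ‖w‖ ^ 2 = r ^ 2 * ((((m' : ℝ) ^ 2 + n' ^ 2) + 2 * (m' * n') *
    (((D : ℝ) ^ 2 - (m ^ 2 + n ^ 2)) / (2 * (m * n)))) / D ^ 2) := by
    rw [← mul_div_assoc, eq_div_iff (pow_ne_zero 2 hDR)]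
    linarith
  rw [hwn, inv_mul_cancel_left₀ (pow_ne_zero 2 hr.ne')]
  push_cast
  rfl

theorem circle_aux (L : Set (EuclideanSpace ℝ (Fin 2))) (hL : IsLattice L)
    (hna : ¬ IsArithmetic L) (r : ℝ) (hr : 0 < r) :
    ∃ T : Finset (EuclideanSpace ℝ (Fin 2)), T.card ≤ 4 ∧ {w ∈ L | ‖w‖ = r} ⊆ ↑T := by
  classical
  by_cases h0 : ∃ x, x ∈ L ∧ ‖x‖ = r
  swap
  · exact ⟨∅, by simp, fun w hw => (h0 ⟨w, hw⟩).elim⟩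
  obtain ⟨x, hx, hnx⟩ := h0
  by_cases h1 : ∃ y, (y ∈ L ∧ ‖y‖ = r) ∧ y ≠ x ∧ y ≠ -x
  swap
  · refine ⟨{x, -x}, Finset.card_le_two.trans (by norm_num), fun w hw => ?_⟩
    by_contra hc
    simp at hc
    exact h1 ⟨w, hw, hc⟩
  obtain ⟨y, ⟨hy, hny⟩, h3, h4⟩ := h1
  refine ⟨{x, -x, y, -y}, Finset.card_le_four, fun w hw => ?_⟩
  by_contra hc
  simp at hc
  exact hna (arith_aux L hL r hr x y w hx hy hw.1 hnx hny hw.2 h3 h4 hc.1 hc.2.1 hc.2.2.1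
    hc.2.2.2)

theorem sub_mem_aux (L : Set (EuclideanSpace ℝ (Fin 2))) (hL : IsLattice L)
    (x y : EuclideanSpace ℝ (Fin 2)) (hx : x ∈ L) (hy : y ∈ L) : x - y ∈ L := by
  obtain ⟨u, v, -, rfl⟩ := hL
  obtain ⟨a, b, rfl⟩ := hx
  obtain ⟨c, d, rfl⟩ := hy
  exact ⟨a - c, b - d, by module⟩

theorem stmt14 (L : Set (EuclideanSpace ℝ (Fin 2))) (hL : IsLattice L)
    (hna : ¬ IsArithmetic L) :
    (∀ r : ℝ, 0 < r → Set.ncard {w ∈ L | ‖w‖ = r} ≤ 4) ∧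
    ∀ P : Finset (EuclideanSpace ℝ (Fin 2)), ↑P ⊆ L → 2 ≤ P.card →
      ((P.card : ℝ) - 1) / 4 ≤ (distinctDists P : ℝ) := by
  classical
  refine ⟨fun r hr => ?_, fun P hP hcard => ?_⟩
  · obtain ⟨T, hT, hS⟩ := circle_aux L hL hna r hr
    calc _ ≤ Set.ncard (T : Set (EuclideanSpace ℝ (Fin 2))) :=
          Set.ncard_le_ncard hS T.finite_toSet
      _ = T.card := Set.ncard_coe_finset T
      _ ≤ 4 := hT
  · obtain ⟨p, hp⟩ : P.Nonempty := Finset.card_pos.mp (by omega)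
    have hle : (P.erase p).card ≤ 4 * ((P.erase p).image (fun q => dist p q)).card := by
      apply Finset.card_le_mul_card_image
      intro r hr
      obtain ⟨q0, hq0, rfl⟩ := Finset.mem_image.mp hr
      have hpos : 0 < dist p q0 := dist_pos.mpr (Finset.ne_of_mem_erase hq0).symm
      obtain ⟨T, hT, hS⟩ := circle_aux L hL hna _ hpos
      refine le_trans (Finset.card_le_card_of_injOn (fun q => p - q) ?_ ?_) hT
      · intro q hq
        have hq' := Finset.mem_filter.mp (Finset.mem_coe.mp hq)
        apply hS
        refine ⟨sub_mem_aux L hL p q (hP hp) (hP (Finset.mem_of_mem_erase hq'.1)), ?_⟩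
        rw [← dist_eq_norm]
        exact hq'.2
      · intro q _ q' _ h
        exact sub_right_injective h
    have hfin : {d : ℝ | ∃ p ∈ P, ∃ q ∈ P, p ≠ q ∧ dist p q = d}.Finite := by
      refine ((P ×ˢ P).image (fun z => dist z.1 z.2)).finite_toSet.subset ?_
      rintro d ⟨a, ha, b, hb, -, rfl⟩
      exact Finset.mem_coe.mpr (Finset.mem_image.mpr ⟨(a, b), Finset.mem_product.mpr ⟨ha, hb⟩, rfl⟩)
    have hle2 : ((P.erase p).image (fun q => dist p q)).card ≤ distinctDists P := by
      rw [← Set.ncard_coe_finset]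
      refine Set.ncard_le_ncard ?_ hfin
      intro d hd
      obtain ⟨q, hq, rfl⟩ := Finset.mem_image.mp (Finset.mem_coe.mp hd)
      exact ⟨p, hp, q, Finset.mem_of_mem_erase hq, (Finset.ne_of_mem_erase hq).symm, rfl⟩
    rw [Finset.card_erase_of_mem hp] at hle
    have h5 : P.card ≤ 4 * distinctDists P + 1 := by omega
    have h6 : (P.card : ℝ) ≤ 4 * distinctDists P + 1 := by exact_mod_cast h5
    linarith
end

section
/- For every square-free negative integer D there exists a constant C > 0 such that for all real x ≥ 2, #{n ∈ ℕ : 1 ≤ n ≤ x and r_D(n) ≥ 1} ≤ C · x / √(log x); that is, the number of distinct values up to x taken by the form Q_D is O(x/√(log x)). -/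
/-- Representation numbers of the norm form `Q_D` of discriminantal type `D`:
`Q_D(x,y) = x² + xy + ((1−D)/4)y²` if `D ≡ 1 (mod 4)`, and `Q_D(x,y) = x² − Dy²` otherwise. -/
noncomputable def rD (D : ℤ) (n : ℕ) : ℕ :=
  Set.ncard {p : ℤ × ℤ |
    (if D % 4 = 1 then p.1 ^ 2 + p.1 * p.2 + ((1 - D) / 4) * p.2 ^ 2
     else p.1 ^ 2 - D * p.2 ^ 2) = (n : ℤ)}

open scoped NumberTheorySymbols

lemma descent_aux (D : ℤ) (p : ℕ) (hp : p.Prime) (hJ : jacobiSym D p = -1) (s : ℕ) (hs : p ∣ s)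
    (hs2 : ¬ p ^ 2 ∣ s) : ∀ k : ℕ, 0 < k → ∀ a b : ℤ, ((k : ℤ) ^ 2 * s ≠ a ^ 2 - D * b ^ 2) := by
  intro k
  induction k using Nat.strong_induction_on with
  | _ k ih =>
    intro hk a b h
    have : Fact p.Prime := ⟨hp⟩
    have hd : (p : ℤ) ∣ a ^ 2 - D * b ^ 2 := by
      rw [← h]; exact Dvd.dvd.mul_left (by exact_mod_cast hs) _
    obtain ⟨⟨a', rfl⟩, ⟨b', rfl⟩⟩ := jacobiSym.prime_dvd_of_eq_neg_one hJ hd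
    have h2 : p ^ 2 ∣ k ^ 2 * s := by
      zify
      exact ⟨a' ^ 2 - D * b' ^ 2, by rw [h]; ring⟩
    have hpk : p ∣ k := by
      by_contra hn
      have : Nat.Coprime (p ^ 2) (k ^ 2) := ((Nat.Prime.coprime_iff_not_dvd hp).2 hn).pow 2 2
      exact hs2 (this.dvd_of_dvd_mul_left h2)
    obtain ⟨k', rfl⟩ := hpk
    have hk' : 0 < k' := Nat.pos_of_mul_pos_left hk
    refine ih k' ?_ hk' a' b' ?_
    · have := hp.two_le; nlinarith
    · have hp0 : (p : ℤ) ^ 2 ≠ 0 := by have := hp.pos; positivity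
      apply mul_left_cancel₀ hp0
      push_cast at h
      linear_combination h

lemma exists_char (D : ℤ) (hD : D < 0) :
    ∃ χ : DirichletCharacter ℂ (4 * D.natAbs),
      (∀ n : ℕ, Odd n → χ n = (jacobiSym D n : ℂ)) ∧ χ ^ 2 = 1 ∧ χ ≠ 1 := by
  set N := 4 * D.natAbs with hN
  have hDa : 0 < D.natAbs := Int.natAbs_pos.2 hD.ne
  have : NeZero N := ⟨by omega⟩
  have hmododd : ∀ n : ℕ, Odd (n % N) ↔ Odd n := by
    intro n
    rw [Nat.odd_iff, Nat.odd_iff, Nat.mod_mod_of_dvd _ (by omega : 2 ∣ N)]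
  let f : ZMod N → ℤ := fun a => if Odd a.val then jacobiSym D a.val else 0
  have hf : ∀ n : ℕ, f (n : ZMod N) = if Odd n then jacobiSym D n else 0 := by
    intro n
    simp only [f, ZMod.val_natCast, hmododd]
    split_ifs with h
    · exact (jacobiSym.mod_right D h).symm
    · rfl
  have hval : ∀ a : ZMod N, ((a.val : ℕ) : ZMod N) = a := fun a => ZMod.natCast_zmod_val a
  let ψ : MulChar (ZMod N) ℤ :=
    { toFun := f
      map_one' := by
        have := hf 1
        simpa using this
      map_mul' := by
        intro a b
        rw [← hval a, ← hval b, ← Nat.cast_mul, hf, hf, hf]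
        by_cases ha : Odd a.val <;> by_cases hb : Odd b.val <;> simp [ha, hb, Nat.odd_mul]
        have h1 : a.val ≠ 0 := ha.pos.ne'
        have h2 : b.val ≠ 0 := hb.pos.ne'
        exact jacobiSym.mul_right' D h1 h2
      map_nonunit' := by
        intro a ha
        show f a = 0
        rw [← hval a, hf]
        split_ifs with h
        · rw [← hval a, ZMod.isUnit_iff_coprime] at ha
          rw [jacobiSym.eq_zero_iff]
          refine ⟨h.pos.ne', fun hg => ha ?_⟩
          show Nat.Coprime a.val (4 * D.natAbs)
          refine Nat.Coprime.mul_right ?_ ?_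
          · have : Nat.Coprime a.val 2 := Nat.coprime_two_right.2 h
            exact this.pow_right 2
          · rw [Int.gcd_eq_natAbs, Int.natAbs_natCast] at hg
            exact Nat.Coprime.symm hg
        · rfl }
  have hψ : ∀ n : ℕ, ψ (n : ZMod N) = if Odd n then jacobiSym D n else 0 := hf
  have hψ' : ∀ n : ℕ, Odd n → (ψ.ringHomComp (Int.castRingHom ℂ)) (n : ZMod N)
      = (jacobiSym D n : ℂ) := by
    intro n hn
    simp [hψ, hn]
  refine ⟨ψ.ringHomComp (Int.castRingHom ℂ), hψ', ?_, ?_⟩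
  · rw [← MulChar.isQuadratic_iff_sq_eq_one]
    intro a
    have : (ψ.ringHomComp (Int.castRingHom ℂ)) a = ((f a : ℤ) : ℂ) := rfl
    rw [this]
    simp only [f]
    split_ifs
    · rcases jacobiSym.trichotomy D a.val with h | h | h <;> simp [h]
    · simp
  · intro h
    have hodd : Odd (N - 1) := by rw [Nat.odd_iff]; omega
    have h1 := hψ' (N - 1) hodd
    have h3 : jacobiSym D (N - 1) = -1 := by
      have e : D = -(D.natAbs : ℤ) := by omega
      rw [e, jacobiSym.neg _ hodd]
      have h4 : jacobiSym (D.natAbs : ℤ) (N - 1) = 1 := by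
        have : jacobiSym (4 * (D.natAbs : ℤ)) (N - 1) = 1 := by
          have e2 : (4 * (D.natAbs : ℤ)) % ((N - 1 : ℕ) : ℤ) = 1 % ((N - 1 : ℕ) : ℤ) := by
            have : (4 * (D.natAbs : ℤ)) = 1 + ((N - 1 : ℕ) : ℤ) := by omega
            rw [this, Int.add_emod_right]
          rw [jacobiSym.mod_left' e2, jacobiSym.one_left]
        rwa [jacobiSym.mul_left, jacobiSym.at_four hodd, one_mul] at this
      rw [h4, ZMod.χ₄_nat_three_mod_four (by omega)]
      rfl
    rw [h3, h, MulChar.one_apply] at h1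
    · norm_num at h1
    · rw [ZMod.isUnit_iff_coprime]
      have : Nat.Coprime (N - 1) (N - 1 + 1) := by simp
      rwa [Nat.sub_add_cancel (by omega)] at this

/-- decomposition of represented numbers -/
lemma decomp (D : ℤ) (hD : D < 0) (N : ℕ) (hN : N = 4 * D.natAbs) (χ : DirichletCharacter ℂ N)
    (hχ : ∀ n : ℕ, Odd n → χ n = (jacobiSym D n : ℂ)) (n : ℕ) (hn : 0 < n)
    (h : 1 ≤ Set.ncard {p : ℤ × ℤ |
    (if D % 4 = 1 then p.1 ^ 2 + p.1 * p.2 + ((1 - D) / 4) * p.2 ^ 2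
     else p.1 ^ 2 - D * p.2 ^ 2) = (n : ℤ)}) :
    ∃ k r m : ℕ, n = k ^ 2 * r * m ∧ r ∣ N ∧ ∀ d : ℕ, d ∣ m → χ d = 1 := by
  obtain ⟨⟨x, y⟩, hxy⟩ := Set.nonempty_of_ncard_ne_zero (Nat.one_le_iff_ne_zero.1 h)
  simp only [Set.mem_ofPred_eq] at hxy
  obtain ⟨a, b, hab⟩ : ∃ a b : ℤ, 4 * (n : ℤ) = a ^ 2 - D * b ^ 2 := by
    split_ifs at hxy with h4
    · refine ⟨2 * x + y, y, ?_⟩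
      obtain ⟨c, hc⟩ : ∃ c, 1 - D = 4 * c := ⟨(1 - D) / 4, by omega⟩
      have : (1 - D) / 4 = c := by omega
      rw [this] at hxy
      rw [← hxy]
      linear_combination (-y ^ 2) * hc
    · exact ⟨2 * x, 2 * y, by rw [← hxy]; ring⟩
  obtain ⟨s, k, hs, hk, hks, hsf⟩ := Nat.sq_mul_squarefree_of_pos hn
  have hDa : 0 < D.natAbs := Int.natAbs_pos.2 hD.ne
  obtain ⟨m, hm⟩ := Nat.gcd_dvd_left s N
  have hcop : Nat.Coprime (s.gcd N) m := by
    rw [hm] at hsf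
    exact Nat.coprime_of_squarefree_mul hsf
  have hprime : ∀ p : ℕ, p.Prime → p ∣ m → χ p = 1 := by
    intro p hp hpm
    have hps : p ∣ s := hm ▸ Dvd.dvd.mul_left hpm _
    have hpN : ¬ p ∣ N := fun hpN =>
      Nat.not_coprime_of_dvd_of_dvd hp.one_lt (Nat.dvd_gcd hps hpN) hpm hcop
    have hp2 : Odd p := by
      rcases hp.eq_two_or_odd' with rfl | h
      · exact absurd (by omega) hpN
      · exact h
    rw [hχ p hp2]
    have hg : D.gcd p = 1 := by
      rw [Int.gcd_eq_natAbs, Int.natAbs_natCast, Nat.gcd_comm]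
      exact (Nat.Prime.coprime_iff_not_dvd hp).2 fun hh => hpN (hN ▸ Dvd.dvd.mul_left hh _)
    rcases jacobiSym.eq_one_or_neg_one hg with h1 | h1
    · simp [h1]
    · exfalso
      refine descent_aux D p hp h1 s hps ?_ (2 * k) (by omega) a b ?_
      · intro h2
        rw [pow_two] at h2
        exact hp.one_lt.ne' (Nat.isUnit_iff.1 (hsf p h2))
      · rw [← hab, ← hks]; push_cast; ring
  have hall : ∀ d : ℕ, d ∣ m → χ d = 1 := by
    intro d
    have hm0 : m ≠ 0 := by rintro rfl; omega
    induction d using Nat.recOnMul with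
    | zero => intro h; exact absurd (zero_dvd_iff.1 h) hm0
    | one => simp
    | prime p hp => exact hprime p hp
    | mul a b ha hb =>
      intro h
      rw [Nat.cast_mul, map_mul, ha (dvd_of_mul_right_dvd h), hb (dvd_of_mul_left_dvd h), one_mul]
  exact ⟨k, s.gcd N, m, by rw [← hks, mul_assoc, ← hm], Nat.gcd_dvd_right _ _, hall⟩

open scoped ArithmeticFunction.vonMangoldt

/-- indicator of a set of naturals as a real arithmetic function -/
noncomputable def indA (A : Set ℕ) : ArithmeticFunction ℝ :=
  ⟨Set.indicator (A \ {0}) 1, by simp⟩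

lemma indA_nonneg (A : Set ℕ) (n : ℕ) : 0 ≤ indA A n := by
  show 0 ≤ Set.indicator (A \ {0}) 1 n
  exact Set.indicator_nonneg (fun _ _ => by simp) n

lemma indA_of_mem {A : Set ℕ} {n : ℕ} (h : n ∈ A) (hn : n ≠ 0) : indA A n = 1 := by
  show Set.indicator (A \ {0}) 1 n = 1
  simp [h, hn]

lemma indA_of_notMem {A : Set ℕ} {n : ℕ} (h : n ∉ A) : indA A n = 0 := by
  show Set.indicator (A \ {0}) 1 n = 0
  simp [h]

lemma log_le_conv_aux (A : Set ℕ) (n q j : ℕ) (hn : n ≠ 0) (hj : j ≠ 0)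
    (h : ∀ e : ℕ, e ∣ q → e ^ j ∣ n ∧ n / e ^ j ∈ A) :
    Real.log q ≤ (indA A * ArithmeticFunction.vonMangoldt) n := by
  rw [← ArithmeticFunction.vonMangoldt_sum, ArithmeticFunction.mul_apply,
    Nat.sum_divisorsAntidiagonal' (fun a b => indA A a * ArithmeticFunction.vonMangoldt b)]
  calc ∑ e ∈ q.divisors, ArithmeticFunction.vonMangoldt e
      = ∑ e ∈ q.divisors, indA A (n / e ^ j) * ArithmeticFunction.vonMangoldt (e ^ j) := by
        refine Finset.sum_congr rfl fun e he => ?_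
        obtain ⟨h1, h2⟩ := h e (Nat.dvd_of_mem_divisors he)
        rw [ArithmeticFunction.vonMangoldt_apply_pow hj, indA_of_mem h2, one_mul]
        exact (Nat.div_pos (Nat.le_of_dvd (Nat.pos_of_ne_zero hn) h1)
          (Nat.pos_of_dvd_of_pos h1 (Nat.pos_of_ne_zero hn))).ne'
    _ = ∑ d ∈ q.divisors.image (fun e => e ^ j),
          indA A (n / d) * ArithmeticFunction.vonMangoldt d := by
        rw [Finset.sum_image]
        intro a _ b _ hab
        exact Nat.pow_left_injective hj hab
    _ ≤ _ := by
        refine Finset.sum_le_sum_of_subset_of_nonneg ?_ fun i _ _ =>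
          mul_nonneg (indA_nonneg _ _) ArithmeticFunction.vonMangoldt_nonneg
        intro d hd
        obtain ⟨e, he, rfl⟩ := Finset.mem_image.1 hd
        exact Nat.mem_divisors.2 ⟨(h e (Nat.dvd_of_mem_divisors he)).1, hn⟩

/-- the set of `k² r m` with `r ∣ N` and `m` having all divisors in `P` -/
def setA (N : ℕ) (P : ℕ → Prop) : Set ℕ :=
  {n | ∃ k r m : ℕ, n = k ^ 2 * r * m ∧ r ∣ N ∧ ∀ d : ℕ, d ∣ m → P d}

lemma log_le_conv (N : ℕ) (P : ℕ → Prop) (n : ℕ) (hn : n ≠ 0) (h : n ∈ setA N P) :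
    Real.log n ≤ 4 * (indA (setA N P) * ArithmeticFunction.vonMangoldt) n := by
  obtain ⟨k, r, m, hkrm, hr, hm⟩ := h
  have hk0 : k ≠ 0 := by rintro rfl; simp at hkrm; exact hn hkrm
  have hr0 : r ≠ 0 := by rintro rfl; simp at hkrm; exact hn hkrm
  have hm0 : m ≠ 0 := by rintro rfl; simp at hkrm; exact hn hkrm
  have h1 := log_le_conv_aux (setA N P) n k 2 hn (by norm_num) (by
    rintro e ⟨c, rfl⟩
    have he : 0 < e := Nat.pos_of_ne_zero (left_ne_zero_of_mul hk0)
    have : n = e ^ 2 * (c ^ 2 * r * m) := by rw [hkrm]; ring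
    refine ⟨⟨_, this⟩, c, r, m, ?_, hr, hm⟩
    rw [this, Nat.mul_div_cancel_left _ (by positivity)])
  have h2 := log_le_conv_aux (setA N P) n r 1 hn (by norm_num) (by
    rintro e ⟨c, rfl⟩
    have he : 0 < e := Nat.pos_of_ne_zero (left_ne_zero_of_mul hr0)
    have : n = e ^ 1 * (k ^ 2 * c * m) := by rw [hkrm]; ring
    refine ⟨⟨_, this⟩, k, c, m, ?_, dvd_of_mul_left_dvd hr, hm⟩
    rw [this, Nat.mul_div_cancel_left _ (by positivity)])
  have h3 := log_le_conv_aux (setA N P) n m 1 hn (by norm_num) (by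
    rintro e ⟨c, rfl⟩
    have he : 0 < e := Nat.pos_of_ne_zero (left_ne_zero_of_mul hm0)
    have : n = e ^ 1 * (k ^ 2 * r * c) := by rw [hkrm]; ring
    refine ⟨⟨_, this⟩, k, r, c, ?_, hr, fun d hd => hm d (Dvd.dvd.mul_left hd _)⟩
    rw [this, Nat.mul_div_cancel_left _ (by positivity)])
  have : Real.log n = 2 * Real.log k + Real.log r + Real.log m := by
    rw [hkrm]
    push_cast
    rw [Real.log_mul (by positivity) (by positivity), Real.log_mul (by positivity) (by positivity),
      Real.log_pow]
    norm_num
  linarith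

lemma sum_log_le (N : ℕ) (P : ℕ → Prop) (M : ℕ) :
    ∑ n ∈ Finset.Ioc 0 M, indA (setA N P) n * Real.log n ≤
      4 * (Real.log 4 + 4) * M * ∑ n ∈ Finset.Ioc 0 M, indA (setA N P) n * (1 / n : ℝ) := by
  calc ∑ n ∈ Finset.Ioc 0 M, indA (setA N P) n * Real.log n
      ≤ ∑ n ∈ Finset.Ioc 0 M, 4 * (indA (setA N P) * ArithmeticFunction.vonMangoldt) n := by
        refine Finset.sum_le_sum fun n hn => ?_
        have hn0 : n ≠ 0 := by have := Finset.mem_Ioc.1 hn; omega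
        by_cases h : n ∈ setA N P
        · rw [indA_of_mem h hn0, one_mul]
          exact log_le_conv N P n hn0 h
        · rw [indA_of_notMem h, zero_mul, ArithmeticFunction.mul_apply]
          exact mul_nonneg (by norm_num) (Finset.sum_nonneg fun i _ =>
            mul_nonneg (indA_nonneg _ _) ArithmeticFunction.vonMangoldt_nonneg)
    _ = 4 * ∑ n ∈ Finset.Ioc 0 M, indA (setA N P) n *
          ∑ m ∈ Finset.Ioc 0 (M / n), ArithmeticFunction.vonMangoldt m := by
        rw [← Finset.mul_sum, ArithmeticFunction.sum_Ioc_mul_eq_sum_sum]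
    _ ≤ 4 * ∑ n ∈ Finset.Ioc 0 M, indA (setA N P) n * ((Real.log 4 + 4) * (M / n)) := by
        gcongr with n hn
        · exact indA_nonneg _ _
        · have h1 := Chebyshev.psi_le_const_mul_self (x := ((M / n : ℕ) : ℝ)) (by positivity)
          rw [Chebyshev.psi, Nat.floor_natCast] at h1
          refine h1.trans ?_
          have : (0 : ℝ) ≤ Real.log 4 := Real.log_nonneg (by norm_num)
          gcongr
          exact Nat.cast_div_le
    _ = _ := by
        rw [Finset.mul_sum, Finset.mul_sum]
        refine Finset.sum_congr rfl fun n _ => ?_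
        ring

lemma card_log_le (N : ℕ) (P : ℕ → Prop) (x : ℝ) (hx : 2 ≤ x) :
    (∑ n ∈ Finset.Ioc 0 ⌊x⌋₊, indA (setA N P) n) * Real.log x ≤
      (4 * (Real.log 4 + 4) + 1) * x *
        ∑ n ∈ Finset.Ioc 0 ⌊x⌋₊, indA (setA N P) n * (1 / n : ℝ) := by
  have h1 := sum_log_le N P ⌊x⌋₊
  have hfl : (⌊x⌋₊ : ℝ) ≤ x := Nat.floor_le (by linarith)
  have hl4 : (0 : ℝ) ≤ Real.log 4 := Real.log_nonneg (by norm_num)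
  have hS : 0 ≤ ∑ n ∈ Finset.Ioc 0 ⌊x⌋₊, indA (setA N P) n * (1 / n : ℝ) :=
    Finset.sum_nonneg fun n _ => mul_nonneg (indA_nonneg _ _) (by positivity)
  have h2 : ∑ n ∈ Finset.Ioc 0 ⌊x⌋₊, indA (setA N P) n * (Real.log x - Real.log n) ≤
      x * ∑ n ∈ Finset.Ioc 0 ⌊x⌋₊, indA (setA N P) n * (1 / n : ℝ) := by
    rw [Finset.mul_sum]
    refine Finset.sum_le_sum fun n hn => ?_
    have hn0 : (0 : ℝ) < n := by exact_mod_cast (Finset.mem_Ioc.1 hn).1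
    rw [← Real.log_div (by linarith) hn0.ne']
    have : Real.log (x / n) ≤ x / n := by
      have := Real.log_le_sub_one_of_pos (show 0 < x / n by positivity)
      linarith
    calc _ ≤ indA (setA N P) n * (x / n) := mul_le_mul_of_nonneg_left this (indA_nonneg _ _)
      _ = _ := by ring
  have h3 : 4 * (Real.log 4 + 4) * ⌊x⌋₊ *
      ∑ n ∈ Finset.Ioc 0 ⌊x⌋₊, indA (setA N P) n * (1 / n : ℝ) ≤ 4 * (Real.log 4 + 4) * x *
      ∑ n ∈ Finset.Ioc 0 ⌊x⌋₊, indA (setA N P) n * (1 / n : ℝ) := by gcongr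
  simp only [mul_sub, Finset.sum_sub_distrib] at h2
  rw [Finset.sum_mul]
  linarith

open Classical in
lemma sum_inv_A_le (N : ℕ) (hN : N ≠ 0) (P : ℕ → Prop) : ∃ C > (0 : ℝ), ∀ M : ℕ,
    ∑ n ∈ Finset.Ioc 0 M, indA (setA N P) n * (1 / n : ℝ) ≤
      C * ∑ m ∈ (Finset.Ioc 0 M).filter (fun m => ∀ d : ℕ, d ∣ m → P d), (1 / m : ℝ) := by
  have hsum : Summable (fun k : ℕ => 1 / (k : ℝ) ^ 2) :=
    Real.summable_one_div_nat_pow.2 (by norm_num)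
  refine ⟨(∑' k : ℕ, 1 / (k : ℝ) ^ 2 + 1) * (∑ r ∈ N.divisors, 1 / (r : ℝ) + 1), ?_, ?_⟩
  · have : 0 ≤ ∑' k : ℕ, 1 / (k : ℝ) ^ 2 := tsum_nonneg fun _ => by positivity
    positivity
  intro M
  set FB := (Finset.Ioc 0 M).filter (fun m => ∀ d : ℕ, d ∣ m → P d) with hFB
  have hFBn : 0 ≤ ∑ m ∈ FB, (1 / m : ℝ) := Finset.sum_nonneg fun _ _ => by positivity
  let T := Finset.Ioc 0 M ×ˢ N.divisors ×ˢ FB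
  let g : ℕ × ℕ × ℕ → ℕ := fun t => t.1 ^ 2 * t.2.1 * t.2.2
  calc ∑ n ∈ Finset.Ioc 0 M, indA (setA N P) n * (1 / n : ℝ)
      = ∑ n ∈ (Finset.Ioc 0 M).filter (· ∈ setA N P), (1 / n : ℝ) := by
        rw [Finset.sum_filter]
        refine Finset.sum_congr rfl fun n hn => ?_
        split_ifs with h
        · rw [indA_of_mem h (by have := Finset.mem_Ioc.1 hn; omega), one_mul]
        · rw [indA_of_notMem h, zero_mul]
    _ ≤ ∑ n ∈ T.image g, (1 / n : ℝ) := by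
        refine Finset.sum_le_sum_of_subset_of_nonneg ?_ fun _ _ _ => by positivity
        intro n hn
        obtain ⟨hn1, k, r, m, h, hr, hm⟩ := Finset.mem_filter.1 hn
        obtain ⟨hn0, hnM⟩ := Finset.mem_Ioc.1 hn1
        have hk0 : k ≠ 0 := by rintro rfl; simp at h; omega
        have hr0 : r ≠ 0 := by rintro rfl; simp at h; omega
        have hm0 : m ≠ 0 := by rintro rfl; simp at h; omega
        have hkn : k ≤ n := Nat.le_of_dvd hn0 ⟨k * r * m, by rw [h]; ring⟩
        have hmn : m ≤ n := Nat.le_of_dvd hn0 ⟨k ^ 2 * r, by rw [h]; ring⟩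
        refine Finset.mem_image.2 ⟨(k, r, m), ?_, h.symm⟩
        simp only [T, hFB, Finset.mem_product, Finset.mem_filter, Finset.mem_Ioc, Nat.mem_divisors]
        exact ⟨⟨by omega, by omega⟩, ⟨hr, hN⟩, ⟨by omega, by omega⟩, hm⟩
    _ ≤ ∑ t ∈ T, (1 / (g t : ℕ) : ℝ) :=
        Finset.sum_image_le_of_nonneg fun _ _ => by positivity
    _ = (∑ k ∈ Finset.Ioc 0 M, 1 / (k : ℝ) ^ 2) * ((∑ r ∈ N.divisors, 1 / (r : ℝ)) *
          ∑ m ∈ FB, (1 / m : ℝ)) := by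
        rw [Finset.sum_mul_sum, ← Finset.sum_product', Finset.sum_mul_sum, ← Finset.sum_product']
        refine Finset.sum_congr rfl fun t _ => ?_
        simp only [g]
        push_cast
        simp only [one_div, mul_inv]
        ring
    _ ≤ _ := by
        rw [← mul_assoc]
        gcongr
        · exact (hsum.sum_le_tsum _ fun _ _ => by positivity).trans (by linarith)
        · linarith

open scoped ComplexOrder in
lemma sum_norm_zetaMul_le {N : ℕ} [NeZero N] (χ : DirichletCharacter ℂ N) (h2 : χ ^ 2 = 1)
    (σ : ℝ) (hσ : 1 < σ) (F : Finset ℕ) :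
    ∑ n ∈ F, ‖LSeries.term (χ.zetaMul) σ n‖ ≤ ‖riemannZeta σ‖ * ‖χ.LFunction σ‖ := by
  have hσ' : 1 < (σ : ℂ).re := by simpa using hσ
  have hs : LSeriesSummable χ.zetaMul (σ : ℂ) := χ.LSeriesSummable_zetaMul hσ'
  have hre : ∀ n, ‖LSeries.term (χ.zetaMul) σ n‖ = (LSeries.term (χ.zetaMul) σ n).re := by
    intro n
    have := LSeries.term_nonneg (DirichletCharacter.zetaMul_nonneg h2 n) σ
    exact (Complex.re_eq_norm.2 this).symm
  have hL : LSeries χ.zetaMul σ = riemannZeta σ * χ.LFunction σ := by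
    rw [DirichletCharacter.zetaMul, ArithmeticFunction.LSeries_mul',
      χ.LFunction_eq_LSeries hσ']
    · congr 1
      · simp_rw [← ArithmeticFunction.LSeries_zeta_eq_riemannZeta hσ',
          ← ArithmeticFunction.natCoe_apply]
      · exact LSeries_congr (fun {n} hn => by
          simp [toArithmeticFunction, hn]) _
    · exact ArithmeticFunction.LSeriesSummable_zeta_iff.mpr hσ'
    · refine LSeriesSummable_of_bounded_of_one_lt_re (m := 1) (fun n hn ↦ ?_) hσ'
      simpa only [toArithmeticFunction, ArithmeticFunction.coe_mk, hn, ↓reduceIte]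
        using χ.norm_le_one _
  rw [← norm_mul, ← hL]
  calc ∑ n ∈ F, ‖LSeries.term (χ.zetaMul) σ n‖ ≤ ∑' n, ‖LSeries.term (χ.zetaMul) σ n‖ :=
        hs.norm.sum_le_tsum _ fun _ _ => norm_nonneg _
    _ = (LSeries χ.zetaMul σ).re := by
        simp_rw [hre]
        exact (Complex.hasSum_re hs.hasSum).tsum_eq
    _ ≤ _ := Complex.re_le_norm _

lemma zetaMul_eq_card {N : ℕ} (χ : DirichletCharacter ℂ N) (n : ℕ) (hn : n ≠ 0)
    (h : ∀ d : ℕ, d ∣ n → χ d = 1) : ‖χ.zetaMul n‖ = n.divisors.card := by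
  rw [DirichletCharacter.zetaMul, ArithmeticFunction.coe_zeta_mul_apply]
  have : ∀ d ∈ n.divisors, toArithmeticFunction (fun m : ℕ => χ m) d = 1 := by
    intro d hd
    have hd' := Nat.mem_divisors.1 hd
    have : d ≠ 0 := by rintro rfl; exact hn (zero_dvd_iff.1 hd'.1)
    simp [toArithmeticFunction, this, h d hd'.1]
  rw [Finset.sum_congr rfl this]
  simp

open Classical in
lemma sq_sum_le {N : ℕ} [NeZero N] (χ : DirichletCharacter ℂ N) (h2 : χ ^ 2 = 1)
    (σ : ℝ) (hσ : 1 < σ) (F : Finset ℕ) (hF0 : ∀ m ∈ F, m ≠ 0)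
    (hF : ∀ m ∈ F, ∀ d : ℕ, d ∣ m → χ d = 1) :
    (∑ m ∈ F, 1 / (m : ℝ) ^ σ) ^ 2 ≤ ‖riemannZeta σ‖ * ‖χ.LFunction σ‖ := by
  let g : ℕ × ℕ → ℕ := fun t => t.1 * t.2
  refine le_trans ?_ (sum_norm_zetaMul_le χ h2 σ hσ ((F ×ˢ F).image g))
  have e : (∑ m ∈ F, 1 / (m : ℝ) ^ σ) ^ 2 = ∑ t ∈ F ×ˢ F, 1 / ((g t : ℕ) : ℝ) ^ σ := by
    rw [pow_two, Finset.sum_mul_sum, ← Finset.sum_product']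
    refine Finset.sum_congr rfl fun t _ => ?_
    simp only [g]
    push_cast
    rw [Real.mul_rpow (by positivity) (by positivity)]
    simp only [one_div, mul_inv]
  rw [e, ← Finset.sum_fiberwise_of_maps_to (t := (F ×ˢ F).image g) (g := g)
    (fun t ht => Finset.mem_image_of_mem _ ht)]
  refine Finset.sum_le_sum fun n hn => ?_
  obtain ⟨⟨a, b⟩, hab, rfl⟩ := Finset.mem_image.1 hn
  obtain ⟨ha, hb⟩ := Finset.mem_product.1 hab
  simp only at ha hb
  have hn0 : g (a, b) ≠ 0 := mul_ne_zero (hF0 a ha) (hF0 b hb)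
  have hdiv : ∀ d : ℕ, d ∣ g (a, b) → χ d = 1 := by
    intro d hd
    obtain ⟨d1, d2, h1, h2, rfl⟩ := exists_dvd_and_dvd_of_dvd_mul hd
    rw [Nat.cast_mul, map_mul, hF a ha d1 h1, hF b hb d2 h2, one_mul]
  generalize g (a, b) = n at hn0 hdiv
  rw [LSeries.norm_term_eq, if_neg hn0, zetaMul_eq_card χ n hn0 hdiv, Complex.ofReal_re]
  calc ∑ t ∈ F ×ˢ F with g t = n, 1 / ((g t : ℕ) : ℝ) ^ σ
      = ∑ t ∈ F ×ˢ F with g t = n, 1 / (n : ℝ) ^ σ :=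
        Finset.sum_congr rfl fun t ht => by rw [(Finset.mem_filter.1 ht).2]
    _ = (((F ×ˢ F).filter (g · = n)).card : ℝ) / (n : ℝ) ^ σ := by
        rw [Finset.sum_const, nsmul_eq_mul, mul_one_div]
    _ ≤ _ := by
        gcongr
        rw [← Finset.card_map (s := n.divisors) ⟨fun d => (d, n / d), fun _ _ h => congrArg Prod.fst h⟩,
          Nat.map_div_right_divisors]
        refine Finset.card_le_card fun t ht => ?_
        exact Nat.mem_divisorsAntidiagonal.2 ⟨(Finset.mem_filter.1 ht).2, hn0⟩

open Classical in
lemma sum_inv_B_le {N : ℕ} [NeZero N] (χ : DirichletCharacter ℂ N) (h2 : χ ^ 2 = 1)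
    (h1 : χ ≠ 1) : ∃ C > (0 : ℝ), ∀ x : ℝ, 2 ≤ x →
    ∑ m ∈ (Finset.Ioc 0 ⌊x⌋₊).filter (fun m => ∀ d : ℕ, d ∣ m → χ d = 1), (1 / m : ℝ) ≤
      C * Real.sqrt (Real.log x) := by
  have hc : Continuous fun σ : ℝ => ‖riemannZeta₁ σ‖ * ‖χ.LFunction σ‖ := by
    have c1 : Continuous riemannZeta₁ := differentiable_riemannZeta₁.continuous
    have c2 : Continuous χ.LFunction := (DirichletCharacter.differentiable_LFunction h1).continuous
    exact (c1.comp Complex.continuous_ofReal).norm.mul (c2.comp Complex.continuous_ofReal).norm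
  obtain ⟨K, hK⟩ := (isCompact_Icc (a := (1 : ℝ)) (b := 3)).bddAbove_image hc.continuousOn
  have hK' : ∀ σ : ℝ, 1 ≤ σ → σ ≤ 3 → ‖riemannZeta₁ σ‖ * ‖χ.LFunction σ‖ ≤ K := fun σ a b =>
    hK ⟨σ, ⟨a, b⟩, rfl⟩
  have hK0 : 0 ≤ K := le_trans (by positivity) (hK' 1 le_rfl (by norm_num))
  refine ⟨Real.exp 1 * Real.sqrt K + 1, by positivity, fun x hx => ?_⟩
  have hl2 : Real.log 2 ≤ Real.log x := Real.log_le_log (by norm_num) hx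
  have hl : 1 / 2 < Real.log x := by have := Real.log_two_gt_d9; linarith
  have hl0 : 0 < Real.log x := by linarith
  set σ : ℝ := 1 + 1 / Real.log x with hσ
  have hσ1 : 1 < σ := by
    have : 0 < 1 / Real.log x := by positivity
    linarith
  have hσ3 : σ ≤ 3 := by
    have : 1 / Real.log x ≤ 2 := by rw [div_le_iff₀ hl0]; linarith
    linarith
  set F := (Finset.Ioc 0 ⌊x⌋₊).filter (fun m => ∀ d : ℕ, d ∣ m → χ d = 1) with hF
  have hmem : ∀ m ∈ F, (0 < m ∧ m ≤ ⌊x⌋₊) ∧ ∀ d : ℕ, d ∣ m → χ d = 1 := by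
    intro m hm
    simpa only [hF, Finset.mem_filter, Finset.mem_Ioc] using hm
  have hsq := sq_sum_le χ h2 σ hσ1 F (fun m hm => (hmem m hm).1.1.ne') (fun m hm => (hmem m hm).2)
  have hz : ‖riemannZeta σ‖ * ‖χ.LFunction σ‖ ≤ K * Real.log x := by
    have hne : (σ : ℂ) ≠ 1 := by exact_mod_cast hσ1.ne'
    rw [riemannZeta_eq_inv_sub_mul hne, norm_mul]
    have : ‖((σ : ℂ) - 1)⁻¹‖ = Real.log x := by
      have : ((σ : ℂ) - 1)⁻¹ = ((Real.log x : ℝ) : ℂ) := by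
        rw [hσ]; push_cast; simp
      rw [this, Complex.norm_real, Real.norm_of_nonneg hl0.le]
    rw [this, mul_assoc, mul_comm]
    exact mul_le_mul_of_nonneg_right (hK' σ hσ1.le hσ3) hl0.le
  have hs : ∑ m ∈ F, 1 / (m : ℝ) ^ σ ≤ Real.sqrt K * Real.sqrt (Real.log x) := by
    rw [← Real.sqrt_mul hK0]
    exact Real.le_sqrt_of_sq_le (hsq.trans hz)
  calc ∑ m ∈ F, (1 / m : ℝ) ≤ ∑ m ∈ F, Real.exp 1 * (1 / (m : ℝ) ^ σ) := by
        refine Finset.sum_le_sum fun m hm => ?_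
        obtain ⟨⟨hm0, hmx⟩, -⟩ := hmem m hm
        have hm0' : (0 : ℝ) < m := by exact_mod_cast hm0
        have hmx' : (m : ℝ) ≤ x := (Nat.le_floor_iff (by linarith)).1 hmx
        have hpow : (m : ℝ) ^ (1 / Real.log x) ≤ Real.exp 1 := by
          rw [Real.rpow_def_of_pos hm0']
          apply Real.exp_le_exp.2
          rw [mul_one_div, div_le_one hl0]
          exact Real.log_le_log hm0' hmx'
        rw [hσ, Real.rpow_add hm0', Real.rpow_one, mul_one_div, div_le_div_iff₀ hm0' (by positivity)]
        nlinarith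
    _ = Real.exp 1 * ∑ m ∈ F, 1 / (m : ℝ) ^ σ := by rw [Finset.mul_sum]
    _ ≤ Real.exp 1 * (Real.sqrt K * Real.sqrt (Real.log x)) := by gcongr
    _ ≤ _ := by
        have := Real.sqrt_nonneg (Real.log x)
        nlinarith

theorem stmt17 (D : ℤ) (hD : D < 0) (hsf : Squarefree D) :
    ∃ C > (0 : ℝ), ∀ x : ℝ, 2 ≤ x →
      (((Finset.Icc 1 ⌊x⌋₊).filter fun n => 1 ≤ rD D n).card : ℝ) ≤
        C * x / Real.sqrt (Real.log x) := by
  obtain ⟨χ, hχ, h2, h1⟩ := exists_char D hD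
  have hDa : 0 < D.natAbs := Int.natAbs_pos.2 hD.ne
  have hN0 : 4 * D.natAbs ≠ 0 := by omega
  have : NeZero (4 * D.natAbs) := ⟨hN0⟩
  obtain ⟨C₁, hC₁, hA⟩ := sum_inv_A_le (4 * D.natAbs) hN0 (fun d => χ d = 1)
  obtain ⟨C₂, hC₂, hB⟩ := sum_inv_B_le χ h2 h1
  have hl4 : (0 : ℝ) ≤ Real.log 4 := Real.log_nonneg (by norm_num)
  refine ⟨(4 * (Real.log 4 + 4) + 1) * (C₁ * C₂), by positivity, fun x hx => ?_⟩
  have hl0 : 0 < Real.log x := Real.log_pos (by linarith)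
  have hs0 : 0 < Real.sqrt (Real.log x) := Real.sqrt_pos.2 hl0
  have hcard : (((Finset.Icc 1 ⌊x⌋₊).filter fun n => 1 ≤ rD D n).card : ℝ) ≤
      ∑ n ∈ Finset.Ioc 0 ⌊x⌋₊, indA (setA (4 * D.natAbs) (fun d => χ d = 1)) n := by
    rw [Finset.card_eq_sum_ones]
    push_cast
    rw [Finset.sum_filter]
    have : Finset.Icc 1 ⌊x⌋₊ = Finset.Ioc 0 ⌊x⌋₊ := by ext; simp [Nat.succ_le_iff]
    rw [this]
    refine Finset.sum_le_sum fun n hn => ?_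
    split_ifs with h
    · have hn0 := (Finset.mem_Ioc.1 hn).1
      rw [indA_of_mem (decomp D hD _ rfl χ hχ n hn0 h) hn0.ne']
    · exact indA_nonneg _ _
  have hmain := card_log_le (4 * D.natAbs) (fun d => χ d = 1) x hx
  have hx0 : 0 < x := by linarith
  rw [le_div_iff₀ hs0]
  refine le_of_mul_le_mul_right ?_ hs0
  calc _ = (((Finset.Icc 1 ⌊x⌋₊).filter fun n => 1 ≤ rD D n).card : ℝ) * Real.log x := by
        rw [mul_assoc, Real.mul_self_sqrt hl0.le]
    _ ≤ _ := mul_le_mul_of_nonneg_right hcard hl0.le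
    _ ≤ _ := hmain
    _ ≤ (4 * (Real.log 4 + 4) + 1) * x * (C₁ * (C₂ * Real.sqrt (Real.log x))) := by
        refine mul_le_mul_of_nonneg_left ?_ (by positivity)
        exact (hA _).trans (mul_le_mul_of_nonneg_left (hB x hx) hC₁.le)
    _ = _ := by ring
end

section
/- (Cassels) Let Q(x,y) = a x² + b x y + c y² be a positive definite real binary quadratic form normalized to have determinant 1, i.e., a > 0 and a c − b²/4 = 1, and let H(x,y) = (2/√3)(x² + x y + y²) be the corresponding hexagonal form (which also has determinant 1). Then for every real s > 1, the Epstein zeta values satisfy Z_Q(s) ≥ Z_H(s), where Z_Q(s) = ∑_{(m,n) ∈ ℤ², (m,n) ≠ (0,0)} Q(m,n)^{−s}. -/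
/-- The Epstein zeta function of the binary quadratic form `ax² + bxy + cy²` at real `s`:
`Z_Q(s) = ∑_{(m,n) ≠ (0,0)} Q(m,n)^{−s}`. -/
noncomputable def epsteinZeta (a b c : ℝ) (s : ℝ) : ℝ :=
  ∑' p : {p : ℤ × ℤ // p ≠ 0},
    (a * (p.1.1 : ℝ) ^ 2 + b * (p.1.1 : ℝ) * (p.1.2 : ℝ) + c * (p.1.2 : ℝ) ^ 2) ^ (-s)

lemma expT_aux (n : ℕ) : ∀ x : ℝ, x ≤ 0 →
    0 ≤ (-1 : ℝ) ^ n * (Real.exp x - ∑ i ∈ Finset.range n, x ^ i / (i.factorial : ℝ)) := by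
  induction n with
  | zero => intro x _; simpa using (Real.exp_pos x).le
  | succ n ih =>
    have hder : ∀ x : ℝ, HasDerivAt (fun x : ℝ => (-1 : ℝ) ^ (n + 1) *
        (Real.exp x - ∑ i ∈ Finset.range (n + 1), x ^ i / (i.factorial : ℝ)))
        ((-1 : ℝ) ^ (n + 1) * (Real.exp x - ∑ i ∈ Finset.range n, x ^ i / (i.factorial : ℝ))) x := by
      intro x
      refine HasDerivAt.const_mul _ ((Real.hasDerivAt_exp x).sub ?_)
      have h1 : HasDerivAt (fun x : ℝ => ∑ i ∈ Finset.range (n + 1), x ^ i / (i.factorial : ℝ))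
          (∑ i ∈ Finset.range (n + 1), ((i : ℝ) * x ^ (i - 1)) / (i.factorial : ℝ)) x :=
        HasDerivAt.fun_sum fun i _ => (hasDerivAt_pow i x).div_const _
      refine h1.congr_deriv ?_
      rw [Finset.sum_range_succ']
      simp only [Nat.cast_zero, zero_mul, zero_div, add_zero]
      refine Finset.sum_congr rfl fun i _ => ?_
      rw [Nat.factorial_succ]
      have : (i.factorial : ℝ) ≠ 0 := by positivity
      have h2 : ((i + 1 : ℕ) : ℝ) ≠ 0 := by positivity
      push_cast at h2 ⊢
      field_simp
    have hanti := antitoneOn_of_deriv_nonpos (convex_Iic (0 : ℝ))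
      (f := fun x : ℝ => (-1 : ℝ) ^ (n + 1) *
        (Real.exp x - ∑ i ∈ Finset.range (n + 1), x ^ i / (i.factorial : ℝ)))
      (fun x _ => (hder x).continuousAt.continuousWithinAt)
      (fun x _ => (hder x).differentiableAt.differentiableWithinAt)
      (fun x hx => by
        rw [(hder x).deriv]
        have := ih x (by simpa using interior_subset hx)
        rw [pow_succ]; linarith)
    intro x hx
    have := hanti (Set.mem_Iic.2 hx) (Set.mem_Iic.2 le_rfl) hx
    refine le_trans (le_of_eq ?_) this
    simp [Finset.sum_range_succ']

lemma exp_quintic (x : ℝ) :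
    1 + x + x ^ 2 / 2 + x ^ 3 / 6 + x ^ 4 / 24 + x ^ 5 / 120 ≤ Real.exp x := by
  rcases le_total 0 x with hx | hx
  · have := Real.sum_le_exp_of_nonneg hx 6
    simp [Finset.sum_range_succ, Nat.factorial] at this
    linarith
  · have := expT_aux 6 x hx
    simp [Finset.sum_range_succ, Nat.factorial] at this
    linarith

lemma orbit_poly (δ : ℝ) (hδ0 : 0 ≤ δ) (hδ1 : δ ≤ 0.203) :
    3 * (1 + (18 / 5 * δ) + (18 / 5 * δ) ^ 2 / 2 + (18 / 5 * δ) ^ 3 / 6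
      + (18 / 5 * δ) ^ 4 * (5 / 96)) ≤ 3 + 3 / 4 * (18 / 5) ^ 2 * (δ * (2 + δ))
      - (18 / 5) ^ 3 / 2 * (0.669 * (δ * (2 + δ)) / 4) + 3 / 64 * (18 / 5) ^ 4 * (δ * (2 + δ)) ^ 2
      - (18 / 5) ^ 5 / 32 * (0.669 * (δ * (2 + δ)) ^ 2 / 4) := by
  have h0 : 0 ≤ δ * (0.27 + 1.7 * δ - 1.6 * δ ^ 2 - 7.5 * δ ^ 3) := by
    apply mul_nonneg hδ0
    have a1 : δ ^ 2 ≤ 0.203 * δ := by nlinarith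
    have a2 : δ ^ 3 ≤ 0.203 * δ ^ 2 := by nlinarith [sq_nonneg δ]
    linarith
  have b2 := pow_nonneg hδ0 2
  have b3 := pow_nonneg hδ0 3
  have b4 := pow_nonneg hδ0 4
  ring_nf at h0 ⊢
  linarith

/-- base case of the orbit inequality -/
lemma orbit_base (C D d1 d2 d3 : ℝ) (hC1 : 1 ≤ C) (hC2 : C ≤ 1.203) (hD : 0 ≤ D)
    (hCD : C ^ 2 = 1 + D ^ 2) (hs : d1 + d2 + d3 = 0)
    (hq : d1 ^ 2 + d2 ^ 2 + d3 ^ 2 = 3 / 2 * D ^ 2) :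
    3 ≤ Real.exp (18 / 5 * (1 - C - d1)) + Real.exp (18 / 5 * (1 - C - d2))
      + Real.exp (18 / 5 * (1 - C - d3)) := by
  obtain ⟨δ, rfl⟩ : ∃ δ, C = 1 + δ := ⟨C - 1, by ring⟩
  have hδ0 : 0 ≤ δ := by linarith
  have hδ1 : δ ≤ 0.203 := by linarith
  have hD2 : D ^ 2 = δ * (2 + δ) := by linarith [hCD]
  have hDle : D ≤ 0.669 := by nlinarith
  obtain rfl : d3 = -d1 - d2 := by linarith
  set e := d1 * d2 * (-d1 - d2) with he
  have hq' : d1 ^ 2 + d1 * d2 + d2 ^ 2 = 3 / 4 * D ^ 2 := by linarith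
  have he3 : e ≤ D ^ 3 / 4 := by
    have h1 : e ^ 2 ≤ (D ^ 3 / 4) ^ 2 := by
      have h2 : (D ^ 3 / 4) ^ 2 = 4 / 27 * (3 / 4 * D ^ 2) ^ 3 := by ring
      rw [h2, ← hq', he]
      have : 0 ≤ ((d1 - d2) * (2 * d1 + d2) * (d1 + 2 * d2)) ^ 2 := sq_nonneg _
      nlinarith
    exact le_of_sq_le_sq h1 (by positivity) 
  have key : ∀ d, Real.exp (18 / 5 * (1 - (1 + δ) - d))
      = Real.exp (-(18 / 5 * d)) / Real.exp (18 / 5 * δ) := by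
    intro d; rw [← Real.exp_sub]; ring_nf
  rw [key, key, key, ← add_div, ← add_div, le_div_iff₀ (Real.exp_pos _)]
  have hz : Real.exp (18 / 5 * δ) ≤ 1 + (18 / 5 * δ) + (18 / 5 * δ) ^ 2 / 2 + (18 / 5 * δ) ^ 3 / 6
      + (18 / 5 * δ) ^ 4 * (5 / 96) := by
    have := Real.exp_bound' (x := 18 / 5 * δ) (by positivity) (by linarith) (n := 4) (by norm_num)
    simp [Finset.sum_range_succ, Nat.factorial] at this
    norm_num at this
    linarith
  have e1 := exp_quintic (-(18 / 5 * d1))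
  have e2 := exp_quintic (-(18 / 5 * d2))
  have e3 := exp_quintic (-(18 / 5 * (-d1 - d2)))
  have p4 : d1 ^ 4 + d2 ^ 4 + (-d1 - d2) ^ 4 = 9 / 8 * D ^ 4 := by
    have : D ^ 4 = (4 / 3 * (d1 ^ 2 + d1 * d2 + d2 ^ 2)) ^ 2 := by rw [hq']; ring
    rw [this]; ring
  have p3 : d1 ^ 3 + d2 ^ 3 + (-d1 - d2) ^ 3 = 3 * e := by rw [he]; ring
  have p5 : d1 ^ 5 + d2 ^ 5 + (-d1 - d2) ^ 5 = 15 / 4 * D ^ 2 * e := by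
    have : D ^ 2 = (4 / 3 * (d1 ^ 2 + d1 * d2 + d2 ^ 2)) := by rw [hq']; ring
    rw [this, he]; ring
  have hsum : 3 + 3 / 4 * (18 / 5) ^ 2 * D ^ 2 - (18 / 5) ^ 3 / 2 * e
      + 3 / 64 * (18 / 5) ^ 4 * D ^ 4 - (18 / 5) ^ 5 / 32 * (D ^ 2 * e) ≤
      Real.exp (-(18 / 5 * d1)) + Real.exp (-(18 / 5 * d2)) + Real.exp (-(18 / 5 * (-d1 - d2))) := by
    nlinarith [e1, e2, e3, p3, p4, p5, hq]
  refine le_trans ?_ hsum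
  have hDe : D ^ 2 * e ≤ D ^ 2 * (D ^ 3 / 4) := mul_le_mul_of_nonneg_left he3 (sq_nonneg D)
  have h3 : D ^ 3 ≤ 0.669 * D ^ 2 := by nlinarith [sq_nonneg D]
  have h5 : D ^ 2 * D ^ 3 ≤ 0.669 * D ^ 4 := by nlinarith [sq_nonneg D]
  have h4 : D ^ 4 = (δ * (2 + δ)) ^ 2 := by rw [← hD2]; ring
  rw [h4] at h5 ⊢
  rw [hD2] at h3 hDe h5 ⊢
  have main := orbit_poly δ hδ0 hδ1
  linarith

lemma orbit_ineq (k C D d1 d2 d3 : ℝ) (hk : 18 / 5 ≤ k) (hC1 : 1 ≤ C) (hC2 : C ≤ 1.203)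
    (hD : 0 ≤ D) (hCD : C ^ 2 = 1 + D ^ 2) (hs : d1 + d2 + d3 = 0)
    (hq : d1 ^ 2 + d2 ^ 2 + d3 ^ 2 = 3 / 2 * D ^ 2) :
    3 ≤ Real.exp (k * (1 - C - d1)) + Real.exp (k * (1 - C - d2))
      + Real.exp (k * (1 - C - d3)) := by
  have hb := orbit_base C D d1 d2 d3 hC1 hC2 hD hCD hs hq
  have hl : 1 ≤ k / (18 / 5) := by rw [le_div_iff₀ (by norm_num)]; linarith
  have key : ∀ d, 1 + k / (18 / 5) * (Real.exp (18 / 5 * (1 - C - d)) - 1)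
      ≤ Real.exp (k * (1 - C - d)) := by
    intro d
    have := one_add_mul_self_le_rpow_one_add
      (s := Real.exp (18 / 5 * (1 - C - d)) - 1) (by linarith [Real.exp_pos (18 / 5 * (1 - C - d))]) hl
    rw [add_sub_cancel, ← Real.exp_mul] at this
    convert this using 2
    field_simp
  have h1 := key d1
  have h2 := key d2
  have h3 := key d3
  nlinarith

/-- quadratic form -/
noncomputable def qf (a b c : ℝ) (p : ℤ × ℤ) : ℝ :=
  a * (p.1 : ℝ) ^ 2 + b * (p.1 : ℝ) * (p.2 : ℝ) + c * (p.2 : ℝ) ^ 2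

/-- theta function -/
noncomputable def th (a b c t : ℝ) : ℝ := ∑' p : ℤ × ℤ, Real.exp (-(Real.pi * t * qf a b c p))

lemma c_pos {a b c : ℝ} (ha : 0 < a) (hdet : a * c - b ^ 2 / 4 = 1) : 0 < c := by
  by_contra h
  have := mul_nonpos_of_nonneg_of_nonpos ha.le (not_lt.1 h)
  nlinarith [sq_nonneg b]

lemma qf_lower {a b c : ℝ} (ha : 0 < a) (hdet : a * c - b ^ 2 / 4 = 1) (p : ℤ × ℤ) :
    1 / (a + c) * ((p.1 : ℝ) ^ 2 + (p.2 : ℝ) ^ 2) ≤ qf a b c p := by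
  have hc := c_pos ha hdet
  unfold qf
  generalize (p.1 : ℝ) = x
  generalize (p.2 : ℝ) = y
  obtain ⟨ε, hε⟩ : ∃ ε, ε = 1 / (a + c) := ⟨_, rfl⟩
  have he : ε * (a + c) = 1 := by rw [hε]; field_simp
  have he0 : 0 < ε := by rw [hε]; positivity
  rw [← hε]
  have hae : 0 < a - ε := by
    have h1 : a * c ≥ 1 := by nlinarith [sq_nonneg b]
    have h2 : (a - ε) * (a + c) > 0 := by nlinarith
    exact (pos_iff_pos_of_mul_pos h2).2 (by positivity)
  have h3 : 0 ≤ (a - ε) * (a * x ^ 2 + b * x * y + c * y ^ 2 - ε * (x ^ 2 + y ^ 2)) := by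
    have : (a - ε) * (a * x ^ 2 + b * x * y + c * y ^ 2 - ε * (x ^ 2 + y ^ 2))
      = ((a - ε) * x + b / 2 * y) ^ 2 + ε ^ 2 * y ^ 2 := by
      linear_combination (y ^ 2) * hdet - (y ^ 2) * he
    rw [this]; positivity
  have := nonneg_of_mul_nonneg_right h3 hae
  linarith

lemma int_abs_le_sq (m : ℤ) : |(m : ℝ)| ≤ (m : ℝ) ^ 2 := by
  have : |m| ≤ m ^ 2 := by
    rcases eq_or_ne m 0 with rfl | h
    · simp
    · have := Int.one_le_abs h
      rw [← sq_abs]; nlinarith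
  exact_mod_cast this

lemma summable_int_exp {κ : ℝ} (hκ : 0 < κ) : Summable fun m : ℤ => Real.exp (-(κ * (m : ℝ) ^ 2)) := by
  have h1 : Summable fun n : ℕ => Real.exp (-κ) ^ n :=
    summable_geometric_of_lt_one (Real.exp_pos _).le (by simpa using hκ)
  have h2 : Summable fun m : ℤ => Real.exp (-κ) ^ m.natAbs :=
    Summable.of_nat_of_neg (by simpa using h1) (by simpa using h1)
  refine Summable.of_nonneg_of_le (fun _ => (Real.exp_pos _).le) (fun m => ?_) h2
  rw [← Real.exp_nat_mul]
  apply Real.exp_le_exp.2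
  have := int_abs_le_sq m
  rw [Nat.cast_natAbs, Int.cast_abs]
  nlinarith

lemma summable_exp2 {κ μ : ℝ} (hκ : 0 < κ) (hμ : 0 < μ) :
    Summable fun p : ℤ × ℤ => Real.exp (-(κ * (p.1 : ℝ) ^ 2)) * Real.exp (-(μ * (p.2 : ℝ) ^ 2)) :=
  (summable_int_exp hκ).mul_of_nonneg (summable_int_exp hμ) (fun _ => (Real.exp_pos _).le)
    (fun _ => (Real.exp_pos _).le)

lemma summable_th {a b c : ℝ} (ha : 0 < a) (hdet : a * c - b ^ 2 / 4 = 1) {t : ℝ} (ht : 0 < t) :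
    Summable fun p : ℤ × ℤ => Real.exp (-(Real.pi * t * qf a b c p)) := by
  have hc := c_pos ha hdet
  have hκ : 0 < Real.pi * t * (1 / (a + c)) := by positivity
  refine Summable.of_nonneg_of_le (fun _ => (Real.exp_pos _).le) (fun p => ?_) (summable_exp2 hκ hκ)
  rw [← Real.exp_add]
  apply Real.exp_le_exp.2
  have := mul_le_mul_of_nonneg_left (qf_lower ha hdet p) (by positivity : 0 ≤ Real.pi * t)
  linarith

open Complex in
lemma poisson_real {A : ℝ} (hA : 0 < A) (v : ℝ) :
    (∑' n : ℤ, cexp (-(Real.pi : ℂ) * (A : ℂ) * (n : ℂ) ^ 2 - 2 * (Real.pi : ℂ) * I * v * n)) =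
      ((1 / Real.sqrt A : ℝ) : ℂ) * ∑' n : ℤ, ((Real.exp (-(Real.pi / A * ((n : ℝ) + v) ^ 2)) : ℝ) : ℂ) := by
  have h := Complex.tsum_exp_neg_quadratic (a := (A : ℂ)) (by simpa using hA) (-(I * v))
  have h1 : ((A : ℂ) ^ (1 / 2 : ℂ)) = ((Real.sqrt A : ℝ) : ℂ) := by
    rw [Real.sqrt_eq_rpow, Complex.ofReal_cpow hA.le]; norm_num
  rw [h1] at h
  convert h using 2
  · ext n; congr 1; ring
  · push_cast; rfl
  · congr 1; ext n
    rw [Complex.ofReal_exp]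
    congr 1
    push_cast
    have : (I * -(I * (v : ℂ))) = v := by linear_combination (-(v : ℂ)) * I_sq
    rw [this]; ring

open Complex in
lemma th_functional {a b c : ℝ} (ha : 0 < a) (hdet : a * c - b ^ 2 / 4 = 1) {t : ℝ} (ht : 0 < t) :
    th a b c t = 1 / t * th a b c (1 / t) := by
  obtain ⟨u, hu⟩ : ∃ u, u = b / (2 * a) := ⟨_, rfl⟩
  have hb : b = 2 * a * u := by rw [hu]; field_simp
  have hq : ∀ p : ℤ × ℤ, qf a b c p = a * ((p.1 : ℝ) + u * p.2) ^ 2 + (p.2 : ℝ) ^ 2 / a := by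
    intro p; unfold qf
    have hc : c = (1 + b ^ 2 / 4) / a := by field_simp; linarith
    rw [hc, hb]; field_simp; ring
  let G : ℤ × ℤ → ℂ := fun p => cexp (-(Real.pi : ℂ) * ((1 / (t * a) : ℝ) : ℂ) * (p.2 : ℂ) ^ 2
    - 2 * (Real.pi : ℂ) * I * u * p.1 * p.2 - (Real.pi : ℂ) * ((t / a : ℝ) : ℂ) * (p.1 : ℂ) ^ 2)
  have hG : Summable G := by
    refine Summable.of_norm ?_
    have h1 := summable_exp2 (κ := Real.pi * (t / a)) (μ := Real.pi * (1 / (t * a)))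
      (by positivity) (by positivity)
    refine h1.congr fun p => ?_
    simp only [G]
    rw [Complex.norm_exp, ← Real.exp_add]
    congr 1
    have : (-(Real.pi : ℂ) * ((1 / (t * a) : ℝ) : ℂ) * (p.2 : ℂ) ^ 2
      - 2 * (Real.pi : ℂ) * I * u * p.1 * p.2 - (Real.pi : ℂ) * ((t / a : ℝ) : ℂ) * (p.1 : ℂ) ^ 2)
      = (((-(Real.pi * (t / a) * (p.1 : ℝ) ^ 2) + -(Real.pi * (1 / (t * a)) * (p.2 : ℝ) ^ 2)) : ℝ) : ℂ)
      + ((-(2 * Real.pi * u * p.1 * p.2) : ℝ) : ℂ) * I := by push_cast; ring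
    rw [this, Complex.add_re, Complex.ofReal_re, Complex.re_ofReal_mul, Complex.I_re, mul_zero, add_zero]
  have step1 : ((th a b c t : ℝ) : ℂ) = ((Real.sqrt (1 / (t * a)) : ℝ) : ℂ) * ∑' n : ℤ, ∑' k : ℤ, G (n, k) := by
    unfold th
    have hs := summable_th ha hdet ht
    have hs2 : Summable fun p : ℤ × ℤ => Real.exp (-(Real.pi * t * qf a b c (Equiv.prodComm ℤ ℤ p))) :=
      (Equiv.prodComm ℤ ℤ).summable_iff.2 hs
    rw [← (Equiv.prodComm ℤ ℤ).tsum_eq, Summable.tsum_prod hs2,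
      Complex.ofReal_tsum, ← tsum_mul_left]
    refine tsum_congr fun n => ?_
    have hp := poisson_real (A := 1 / (t * a)) (by positivity) (u * n)
    have e1 : ∑' k : ℤ, G (n, k) = cexp (-(Real.pi : ℂ) * ((t / a : ℝ) : ℂ) * (n : ℂ) ^ 2) *
      ∑' k : ℤ, cexp (-(Real.pi : ℂ) * ((1 / (t * a) : ℝ) : ℂ) * (k : ℂ) ^ 2 - 2 * (Real.pi : ℂ) * I * ((u * n : ℝ) : ℂ) * k) := by
      rw [← tsum_mul_left]
      refine tsum_congr fun k => ?_
      rw [← Complex.exp_add]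
      simp only [G]
      congr 1; push_cast; ring
    rw [e1, hp, Complex.ofReal_tsum, ← tsum_mul_left, ← tsum_mul_left, ← tsum_mul_left]
    refine tsum_congr fun m => ?_
    have e2 : cexp (-(Real.pi : ℂ) * ((t / a : ℝ) : ℂ) * (n : ℂ) ^ 2) = ((Real.exp (-Real.pi * (t / a) * (n : ℝ) ^ 2) : ℝ) : ℂ) := by
      push_cast; rfl
    rw [e2, ← Complex.ofReal_mul, ← Complex.ofReal_mul, ← Complex.ofReal_mul]
    congr 1
    have hne : Real.sqrt (1 / (t * a)) ≠ 0 := by positivity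
    rw [mul_left_comm (Real.exp _), ← mul_assoc (Real.sqrt _), mul_one_div_cancel hne, one_mul, ← Real.exp_add]
    congr 1
    simp only [Equiv.prodComm_apply, Prod.swap, hq]
    field_simp
    ring
  have step2 : ((th a b c (1 / t) : ℝ) : ℂ) = ((Real.sqrt (t / a) : ℝ) : ℂ) * ∑' k : ℤ, ∑' n : ℤ, G (n, k) := by
    unfold th
    have hs := summable_th ha hdet (t := 1 / t) (by positivity)
    have hs2 : Summable fun p : ℤ × ℤ => Real.exp (-(Real.pi * (1 / t) * qf a b c (Equiv.prodComm ℤ ℤ p))) :=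
      (Equiv.prodComm ℤ ℤ).summable_iff.2 hs
    rw [← (Equiv.prodComm ℤ ℤ).tsum_eq, Summable.tsum_prod hs2,
      Complex.ofReal_tsum, ← tsum_mul_left]
    refine tsum_congr fun n => ?_
    have hp := poisson_real (A := t / a) (by positivity) (u * n)
    have e1 : ∑' k : ℤ, G (k, n) = cexp (-(Real.pi : ℂ) * ((1 / (t * a) : ℝ) : ℂ) * (n : ℂ) ^ 2) *
      ∑' k : ℤ, cexp (-(Real.pi : ℂ) * ((t / a : ℝ) : ℂ) * (k : ℂ) ^ 2 - 2 * (Real.pi : ℂ) * I * ((u * n : ℝ) : ℂ) * k) := by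
      rw [← tsum_mul_left]
      refine tsum_congr fun k => ?_
      rw [← Complex.exp_add]
      simp only [G]
      congr 1; push_cast; ring
    rw [e1, hp, Complex.ofReal_tsum, ← tsum_mul_left, ← tsum_mul_left, ← tsum_mul_left]
    refine tsum_congr fun m => ?_
    have e2 : cexp (-(Real.pi : ℂ) * ((1 / (t * a) : ℝ) : ℂ) * (n : ℂ) ^ 2) = ((Real.exp (-Real.pi * (1 / (t * a)) * (n : ℝ) ^ 2) : ℝ) : ℂ) := by
      push_cast; rfl
    rw [e2, ← Complex.ofReal_mul, ← Complex.ofReal_mul, ← Complex.ofReal_mul]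
    congr 1
    have hne : Real.sqrt (t / a) ≠ 0 := by positivity
    rw [mul_left_comm (Real.exp _), ← mul_assoc (Real.sqrt _), mul_one_div_cancel hne, one_mul, ← Real.exp_add]
    congr 1
    simp only [Equiv.prodComm_apply, Prod.swap, hq]
    field_simp
    ring
  have hsw : ∑' n : ℤ, ∑' k : ℤ, G (n, k) = ∑' k : ℤ, ∑' n : ℤ, G (n, k) :=
    (Summable.tsum_comm (f := fun k n => G (n, k)) (by
      exact (Equiv.prodComm ℤ ℤ).summable_iff.2 hG))
  have hconst : Real.sqrt (1 / (t * a)) = 1 / t * Real.sqrt (t / a) := by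
    have : 1 / (t * a) = (1 / t) ^ 2 * (t / a) := by field_simp
    rw [this, Real.sqrt_mul (by positivity), Real.sqrt_sq (by positivity)]
  apply Complex.ofReal_injective
  rw [Complex.ofReal_mul, step1, step2, hsw, hconst, Complex.ofReal_mul, mul_assoc]

/-- `th` is invariant under bijective changes of variables -/
lemma th_congr {a b c a' b' c' : ℝ} (e : ℤ × ℤ ≃ ℤ × ℤ)
    (h : ∀ p, qf a' b' c' p = qf a b c (e p)) (t : ℝ) : th a' b' c' t = th a b c t := by
  unfold th
  exact (tsum_congr fun p => by rw [h]).trans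
    (e.tsum_eq fun p => Real.exp (-(Real.pi * t * qf a b c p)))

open UpperHalfPlane in
lemma exists_reduced {a b c : ℝ} (ha : 0 < a) (hdet : a * c - b ^ 2 / 4 = 1) :
    ∃ a' b' c' : ℝ, 0 < a' ∧ a' * c' - b' ^ 2 / 4 = 1 ∧ 0 ≤ b' ∧ b' ≤ a' ∧ a' ≤ c' ∧
      ∀ t, th a' b' c' t = th a b c t := by
  let z : ℍ := ⟨⟨b / (2 * a), 1 / a⟩, by simpa using ha⟩
  obtain ⟨g, hg⟩ := ModularGroup.exists_smul_mem_fd z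
  have hzq : ∀ p : ℤ × ℤ, qf a b c p = Complex.normSq ((p.2 : ℂ) * z + p.1) / z.im := by
    intro p
    have h1 : z.im = 1 / a := rfl
    have h2 : (z : ℂ) = ⟨b / (2 * a), 1 / a⟩ := rfl
    rw [h1, h2, Complex.normSq_apply]
    have hc : c = (1 + b ^ 2 / 4) / a := by field_simp; linarith
    simp [qf, hc]
    field_simp
    ring
  obtain ⟨w, hw⟩ : ∃ w : ℍ, w = g • z := ⟨_, rfl⟩
  rw [← hw] at hg
  obtain ⟨hw1, hw2⟩ := hg
  have hwi := w.im_pos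
  have hdg := Matrix.SpecialLinearGroup.det_coe g
  rw [Matrix.det_fin_two] at hdg
  let e : ℤ × ℤ ≃ ℤ × ℤ :=
    { toFun := fun p => (p.2 * g 0 1 + p.1 * g 1 1, p.2 * g 0 0 + p.1 * g 1 0)
      invFun := fun p => (g 0 0 * p.1 - g 0 1 * p.2, -g 1 0 * p.1 + g 1 1 * p.2)
      left_inv := fun p => by
        ext
        · simp only; linear_combination p.1 * hdg
        · simp only; linear_combination p.2 * hdg
      right_inv := fun p => by
        ext
        · simp only; linear_combination p.1 * hdg
        · simp only; linear_combination p.2 * hdg }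
  have hwq : ∀ p : ℤ × ℤ, qf (1 / w.im) (2 * w.re / w.im) (Complex.normSq w / w.im) p
      = qf a b c (e p) := by
    intro p
    rw [hzq]
    have hden : UpperHalfPlane.denom g z ≠ 0 := UpperHalfPlane.denom_ne_zero g z
    have hnw : (w : ℂ) * (g 1 0 * z + g 1 1) = (g 0 0 * z + g 0 1) := by
      rw [hw, UpperHalfPlane.specialLinearGroup_apply]
      have hd : ((g 1 0 : ℂ) * z + g 1 1) ≠ 0 := by
        have := hden
        simpa [UpperHalfPlane.denom] using this
      simp only [algebraMap_int_eq, eq_intCast, Complex.ofReal_intCast]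
      exact div_mul_cancel₀ _ hd
    have him : w.im = z.im / Complex.normSq ((g 1 0 : ℂ) * z + g 1 1) := by
      rw [hw, ModularGroup.im_smul_eq_div_normSq]
      simp [UpperHalfPlane.denom]
    have hd : Complex.normSq ((g 1 0 : ℂ) * z + g 1 1) ≠ 0 := by
      intro h0
      rw [h0, div_zero] at him
      exact hwi.ne' him
    have h3 : qf (1 / w.im) (2 * w.re / w.im) (Complex.normSq w / w.im) p
        = Complex.normSq ((p.2 : ℂ) * w + p.1) / w.im := by
      have e1 : (w : ℂ).re = w.re := rfl
      have e2 : (w : ℂ).im = w.im := rfl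
      rw [Complex.normSq_apply, Complex.normSq_apply]
      simp [qf, e1, e2]
      field_simp
      ring
    have h4 : (((e p).2 : ℂ) * z + (e p).1) = ((p.2 : ℂ) * w + p.1) * ((g 1 0 : ℂ) * z + g 1 1) := by
      simp only [e, Equiv.coe_fn_mk]
      push_cast
      linear_combination (-(p.2 : ℂ)) * hnw
    rw [h3, h4, Complex.normSq_mul, him]
    have hz := z.im_pos.ne'
    field_simp
  have hnsq : Complex.normSq w = w.re ^ 2 + w.im ^ 2 := by
    rw [Complex.normSq_apply]
    have e1 : (w : ℂ).re = w.re := rfl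
    have e2 : (w : ℂ).im = w.im := rfl
    rw [e1, e2]; ring
  let f : ℤ × ℤ ≃ ℤ × ℤ := Equiv.prodCongr (Equiv.refl ℤ) (Equiv.neg ℤ)
  refine ⟨1 / w.im, 2 * |w.re| / w.im, Complex.normSq w / w.im, by positivity, ?_, by positivity,
    ?_, ?_, fun t => ?_⟩
  · rw [hnsq, div_pow, mul_pow, sq_abs]; field_simp; ring
  · gcongr; linarith
  · gcongr
  · rcases abs_choice w.re with h | h
    · rw [h]; exact th_congr e hwq t
    · rw [h, ← th_congr e hwq t]
      apply th_congr f
      intro p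
      simp [qf, f]
      ring

/-- rotation of order six -/
def rho : ℤ × ℤ ≃ ℤ × ℤ where
  toFun p := (-p.2, p.1 + p.2)
  invFun p := (p.1 + p.2, -p.1)
  left_inv p := by ext <;> simp
  right_inv p := by ext <;> simp

lemma sqrt3_bounds : 1.732 < Real.sqrt 3 ∧ Real.sqrt 3 < 1.7321 := by
  constructor
  · rw [Real.lt_sqrt] <;> norm_num
  · rw [Real.sqrt_lt] <;> norm_num

lemma k_bound {t : ℝ} (ht : 1 ≤ t) : 18 / 5 ≤ Real.pi * t * (2 / Real.sqrt 3) := by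
  obtain ⟨h1, h2⟩ := sqrt3_bounds
  have h3 : 3.625 / Real.pi ≤ 2 / Real.sqrt 3 := by
    rw [div_le_div_iff₀ Real.pi_pos (by linarith)]
    nlinarith [Real.pi_gt_d2]
  have h4 : 3.625 ≤ Real.pi * (2 / Real.sqrt 3) := by
    rw [div_le_iff₀ Real.pi_pos] at h3; linarith
  nlinarith

lemma norm_ge_one {p : ℤ × ℤ} (hp : p ≠ 0) : 1 ≤ p.1 ^ 2 + p.1 * p.2 + p.2 ^ 2 := by
  obtain ⟨m, n⟩ := p
  by_contra h
  simp only at h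
  have h0 : m ^ 2 + m * n + n ^ 2 ≤ 0 := by linarith
  have hm : m = 0 := by
    by_contra hm
    have : 0 < m ^ 2 := by positivity
    nlinarith [sq_nonneg (m + 2 * n)]
  subst hm
  have hn : n = 0 := by
    by_contra hn
    have : 0 < n ^ 2 := by positivity
    nlinarith
  subst hn
  exact hp rfl

lemma qf_hex (p : ℤ × ℤ) : qf (2 / Real.sqrt 3) (2 / Real.sqrt 3) (2 / Real.sqrt 3) p =
    2 / Real.sqrt 3 * ((p.1 ^ 2 + p.1 * p.2 + p.2 ^ 2 : ℤ) : ℝ) := by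
  unfold qf; push_cast; ring

lemma hex_det : (2 / Real.sqrt 3) * (2 / Real.sqrt 3) - (2 / Real.sqrt 3) ^ 2 / 4 = 1 := by
  have : Real.sqrt 3 ^ 2 = 3 := Real.sq_sqrt (by norm_num)
  field_simp
  linarith

lemma orbit_term {a b c : ℝ} (ha : 3 / 4 ≤ a) (hb0 : 0 ≤ b) (hba : b ≤ a) (hac : a ≤ c)
    (hdet : a * c - b ^ 2 / 4 = 1) {t : ℝ} (ht : 1 ≤ t) (p : ℤ × ℤ) :
    3 * Real.exp (-(Real.pi * t * qf (2 / Real.sqrt 3) (2 / Real.sqrt 3) (2 / Real.sqrt 3) p)) ≤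
      Real.exp (-(Real.pi * t * qf a b c p)) + Real.exp (-(Real.pi * t * qf a b c (rho p)))
      + Real.exp (-(Real.pi * t * qf a b c (rho (rho p)))) := by
  rcases eq_or_ne p 0 with rfl | hp
  · simp [qf, rho]; norm_num
  have hN := norm_ge_one hp
  have hNr : (1 : ℝ) ≤ ((p.1 ^ 2 + p.1 * p.2 + p.2 ^ 2 : ℤ) : ℝ) := by exact_mod_cast hN
  obtain ⟨r, hr⟩ : ∃ r, r = Real.sqrt 3 := ⟨_, rfl⟩
  have hr2 : r ^ 2 = 3 := by rw [hr]; exact Real.sq_sqrt (by norm_num)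
  have hrb := sqrt3_bounds
  have hkb := k_bound ht
  rw [qf_hex]
  rw [← hr] at hrb hkb ⊢
  have hr0 : 0 < r := by linarith [hrb.1]
  obtain ⟨N, hNe⟩ : ∃ N : ℝ, N = ((p.1 ^ 2 + p.1 * p.2 + p.2 ^ 2 : ℤ) : ℝ) := ⟨_, rfl⟩
  rw [← hNe] at hNr ⊢
  push_cast at hNe
  obtain ⟨k, hk⟩ : ∃ k, k = Real.pi * t * (2 / r * N) := ⟨_, rfl⟩
  have hk1 : 18 / 5 ≤ k := by
    rw [hk]
    nlinarith
  obtain ⟨C, hC⟩ : ∃ C, C = (a + c - b / 2) / r := ⟨_, rfl⟩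
  have hCr : C * r = a + c - b / 2 := by rw [hC]; field_simp
  have hC2 : C ^ 2 - 1 = ((a - c) ^ 2 + (a - b) ^ 2 + (b - c) ^ 2) / 6 := by
    have : C ^ 2 * 3 = (a + c - b / 2) ^ 2 := by rw [← hCr, mul_pow, hr2]
    linear_combination this / 3 + hdet
  have hCpos : 0 < C := by rw [hC]; apply div_pos _ hr0; linarith
  have hC1 : 1 ≤ C := by nlinarith [sq_nonneg (a - c), sq_nonneg (a - b), sq_nonneg (b - c)]
  have hCle : C ≤ 1.203 := by
    have ha2 : a ≤ 4 / 3 := by nlinarith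
    have h1 : (a + c - b / 2) * a ≤ 25 / 12 * a := by
      nlinarith
    have h2 : a + c - b / 2 ≤ 25 / 12 := le_of_mul_le_mul_right h1 (by linarith)
    rw [hC, div_le_iff₀ hr0]
    linarith [hrb.1]
  obtain ⟨D, hD⟩ : ∃ D, D = Real.sqrt (C ^ 2 - 1) := ⟨_, rfl⟩
  have hD2 : D ^ 2 = C ^ 2 - 1 := by rw [hD]; exact Real.sq_sqrt (by nlinarith)
  have hN0 : N ≠ 0 := by linarith
  have key := orbit_ineq k C D (qf a b c p * r / (2 * N) - C) (qf a b c (rho p) * r / (2 * N) - C)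
    (qf a b c (rho (rho p)) * r / (2 * N) - C) hk1 hC1 hCle (by rw [hD]; positivity)
    (by linarith) (by
      have : (qf a b c p + qf a b c (rho p) + qf a b c (rho (rho p))) = 2 * N * (a + c - b / 2) := by
        rw [hNe]; simp [qf, rho]; ring
      have h2 : (qf a b c p + qf a b c (rho p) + qf a b c (rho (rho p))) * r / (2 * N) = 3 * C := by
        rw [this, hC]; field_simp; rw [hr2]
      linear_combination h2) (by
      have hsum : (qf a b c p + qf a b c (rho p) + qf a b c (rho (rho p))) = 2 * N * (a + c - b / 2) := by
        rw [hNe]; simp [qf, rho]; ring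
      have h2 : (qf a b c p + qf a b c (rho p) + qf a b c (rho (rho p))) * r / (2 * N) = 3 * C := by
        rw [hsum, hC]; field_simp; rw [hr2]
      have hsq : (qf a b c p ^ 2 + qf a b c (rho p) ^ 2 + qf a b c (rho (rho p)) ^ 2)
          = N ^ 2 * (2 * (a + c - b / 2) ^ 2 - 2 * (a * c - b ^ 2 / 4)) := by
        rw [hNe]; simp [qf, rho]; ring
      have h3 : (qf a b c p ^ 2 + qf a b c (rho p) ^ 2 + qf a b c (rho (rho p)) ^ 2) * r ^ 2 / (2 * N) ^ 2
          = 3 / 4 * (6 * C ^ 2 - 2) := by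
        rw [hsq, hdet, ← hCr, hr2, mul_pow C, hr2]; field_simp; ring
      rw [hD2]
      linear_combination h3 - 2 * C * h2)
  have hexp : ∀ x : ℝ, Real.exp (k * (1 - C - (x * r / (2 * N) - C))) =
      Real.exp (-(Real.pi * t * x)) / Real.exp (-(Real.pi * t * (2 / r * N))) := by
    intro x
    rw [← Real.exp_sub, hk]
    congr 1
    field_simp
    ring
  rw [hexp, hexp, hexp, ← add_div, ← add_div, le_div_iff₀ (Real.exp_pos _)] at key
  exact key

lemma caseA {a b c : ℝ} (ha : 3 / 4 ≤ a) (hb0 : 0 ≤ b) (hba : b ≤ a) (hac : a ≤ c)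
    (hdet : a * c - b ^ 2 / 4 = 1) {t : ℝ} (ht : 1 ≤ t) :
    th (2 / Real.sqrt 3) (2 / Real.sqrt 3) (2 / Real.sqrt 3) t ≤ th a b c t := by
  have ht0 : 0 < t := by linarith
  have hs := summable_th (by linarith : 0 < a) hdet ht0
  have hH := summable_th (by positivity) hex_det ht0
  have hs1 : Summable fun p => Real.exp (-(Real.pi * t * qf a b c (rho p))) :=
    rho.summable_iff.2 hs
  have hs2 : Summable fun p => Real.exp (-(Real.pi * t * qf a b c (rho (rho p)))) :=
    rho.summable_iff.2 hs1
  have e1 : ∑' p, Real.exp (-(Real.pi * t * qf a b c (rho p))) = th a b c t :=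
    rho.tsum_eq fun p => Real.exp (-(Real.pi * t * qf a b c p))
  have e2 : ∑' p, Real.exp (-(Real.pi * t * qf a b c (rho (rho p)))) = th a b c t :=
    (rho.tsum_eq fun p => Real.exp (-(Real.pi * t * qf a b c (rho p)))).trans e1
  have := Summable.tsum_le_tsum (fun p => orbit_term ha hb0 hba hac hdet ht p)
    (hH.mul_left 3) ((hs.add hs1).add hs2)
  rw [tsum_mul_left, Summable.tsum_add (hs.add hs1) hs2, Summable.tsum_add hs hs1, e1, e2] at this
  unfold th at this ⊢
  linarith

/-- the six units of the hexagonal lattice -/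
def unitsH : Finset (ℤ × ℤ) := {(1, 0), (-1, 0), (0, 1), (0, -1), (1, -1), (-1, 1)}

lemma nonunit_bound (m n : ℤ) (h0 : (m, n) ≠ 0) (hu : (m, n) ∉ unitsH) :
    2 * (|m| + |n|) ≤ 3 * (m ^ 2 + m * n + n ^ 2 - 1) := by
  rcases le_or_gt 4 (|m| + |n|) with h | h
  · have h1 : (|m| + |n|) ^ 2 ≤ 4 * (m ^ 2 + m * n + n ^ 2) := by
      rcases le_total 0 m with hm | hm <;> rcases le_total 0 n with hn | hn <;>
        simp only [abs_of_nonneg, abs_of_nonpos, hm, hn] <;>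
        nlinarith [sq_nonneg (m - n), sq_nonneg (m + n)]
    nlinarith
  · have hm1 : |m| ≤ 3 := by have := abs_nonneg n; omega
    have hn1 : |n| ≤ 3 := by have := abs_nonneg m; omega
    rw [abs_le] at hm1 hn1
    obtain ⟨a1, a2⟩ := hm1
    obtain ⟨b1, b2⟩ := hn1
    interval_cases m <;> interval_cases n <;>
      first
        | (exfalso; revert h; decide)
        | (exfalso; revert hu; decide)
        | (exfalso; revert h0; decide)
        | decide

lemma hasSum_tenth : HasSum (fun m : ℤ => (1 / 10 : ℝ) ^ m.natAbs) (11 / 9) := by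
  have h1 : HasSum (fun n : ℕ => (1 / 10 : ℝ) ^ n) (10 / 9) := by
    convert hasSum_geometric_of_lt_one (r := (1 / 10 : ℝ)) (by norm_num) (by norm_num) using 1
    norm_num
  have h2 : HasSum (fun n : ℕ => (1 / 10 : ℝ) ^ (n + 1)) (1 / 9) := by
    have h3 := h1.mul_left (1 / 10 : ℝ)
    have e1 : (1 / 10 : ℝ) * (10 / 9) = 1 / 9 := by norm_num
    rw [e1] at h3
    refine h3.congr_fun ?_
    intro n
    exact pow_succ' _ _
  have h4 : HasSum (fun n : ℕ => (1 / 10 : ℝ) ^ (-((n : ℤ) + 1)).natAbs) (1 / 9) := by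
    refine h2.congr_fun ?_
    intro n
    have : (-((n : ℤ) + 1)).natAbs = n + 1 := by omega
    rw [this]
  have h5 := HasSum.of_nat_of_neg_add_one (f := fun m : ℤ => (1 / 10 : ℝ) ^ m.natAbs)
    (by simpa using h1) h4
  have e2 : (10 / 9 : ℝ) + 1 / 9 = 11 / 9 := by norm_num
  rwa [e2] at h5

set_option maxHeartbeats 2000000 in
lemma hex_upper {t : ℝ} (ht : 1 ≤ t) :
    th (2 / Real.sqrt 3) (2 / Real.sqrt 3) (2 / Real.sqrt 3) t
      ≤ 1 + 6.5 * Real.exp (-(Real.pi * t * (2 / Real.sqrt 3))) := by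
  have ht0 : 0 < t := by linarith
  have hH := summable_th (by positivity) hex_det ht0
  have hk := k_bound ht
  obtain ⟨k, hke⟩ : ∃ k, k = Real.pi * t * (2 / Real.sqrt 3) := ⟨_, rfl⟩
  have g1 : HasSum (fun p : ℤ × ℤ => if p = 0 then 1 - Real.exp (-k) else 0) (1 - Real.exp (-k)) :=
    hasSum_ite_eq 0 _
  have g2 : HasSum (fun p : ℤ × ℤ => if p ∈ unitsH then (1 : ℝ) else 0) 6 := by
    have h6 : HasSum (fun p : ℤ × ℤ => if p ∈ unitsH then (1 : ℝ) else 0)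
        (∑ p ∈ unitsH, if p ∈ unitsH then (1 : ℝ) else 0) :=
      hasSum_sum_of_ne_finset_zero (fun p hp => by simp [hp])
    have e3 : (∑ p ∈ unitsH, if p ∈ unitsH then (1 : ℝ) else 0) = 6 := by
      rw [Finset.sum_congr rfl (g := fun _ => (1 : ℝ)) (fun p hp => by simp [hp])]
      rw [Finset.sum_const]
      have : unitsH.card = 6 := by decide
      rw [this]; norm_num
    rwa [e3] at h6
  have g3 : HasSum (fun p : ℤ × ℤ => (1 / 10 : ℝ) ^ p.1.natAbs * (1 / 10 : ℝ) ^ p.2.natAbs)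
      (11 / 9 * (11 / 9)) :=
    hasSum_tenth.mul hasSum_tenth (hasSum_tenth.summable.mul_of_nonneg hasSum_tenth.summable
      (fun _ => by positivity) (fun _ => by positivity))
  have g := g1.add ((g2.add g3).mul_left (Real.exp (-k)))
  have hpt : ∀ p : ℤ × ℤ, Real.exp (-(Real.pi * t * qf (2 / Real.sqrt 3) (2 / Real.sqrt 3) (2 / Real.sqrt 3) p)) ≤
      (if p = 0 then 1 - Real.exp (-k) else 0) + Real.exp (-k) * ((if p ∈ unitsH then (1 : ℝ) else 0)
      + (1 / 10 : ℝ) ^ p.1.natAbs * (1 / 10 : ℝ) ^ p.2.natAbs) := by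
    intro p
    rw [qf_hex, ← mul_assoc, ← hke]
    rw [← hke] at hk
    have hek := Real.exp_pos (-k)
    have hpos : 0 < (1 / 10 : ℝ) ^ p.1.natAbs * (1 / 10 : ℝ) ^ p.2.natAbs := by positivity
    rcases eq_or_ne p 0 with rfl | hp
    · have : (0 : ℤ × ℤ) ∉ unitsH := by decide
      simp [this]
    by_cases hu : p ∈ unitsH
    · simp only [hp, hu, if_true, if_false]
      have h1 : (1 : ℝ) ≤ ((p.1 ^ 2 + p.1 * p.2 + p.2 ^ 2 : ℤ) : ℝ) := by exact_mod_cast norm_ge_one hp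
      have h2 : Real.exp (-(k * ((p.1 ^ 2 + p.1 * p.2 + p.2 ^ 2 : ℤ) : ℝ))) ≤ Real.exp (-k) := by
        apply Real.exp_le_exp.2
        nlinarith
      nlinarith
    · simp only [hp, hu, if_false]
      rw [zero_add, zero_add, ← pow_add]
      have hb := nonunit_bound p.1 p.2 hp hu
      obtain ⟨N, hN⟩ : ∃ N, N = p.1 ^ 2 + p.1 * p.2 + p.2 ^ 2 := ⟨_, rfl⟩
      rw [← hN] at hb ⊢
      have hbr : 2 * (|(p.1 : ℝ)| + |(p.2 : ℝ)|) ≤ 3 * ((N : ℝ) - 1) := by exact_mod_cast hb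
      have hten : Real.exp (-(12 / 5)) ≤ 1 / 10 := by
        rw [Real.exp_neg, ← one_div]
        apply one_div_le_one_div_of_le (by norm_num)
        refine le_trans ?_ (exp_quintic (12 / 5))
        norm_num
      have h3 : Real.exp (-(12 / 5)) ^ (p.1.natAbs + p.2.natAbs) ≤ (1 / 10 : ℝ) ^ (p.1.natAbs + p.2.natAbs) :=
        pow_le_pow_left₀ (Real.exp_pos _).le hten _
      refine le_trans ?_ (mul_le_mul_of_nonneg_left h3 hek.le)
      rw [← Real.exp_nat_mul, ← Real.exp_add]
      apply Real.exp_le_exp.2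
      push_cast
      rw [Nat.cast_natAbs, Nat.cast_natAbs, Int.cast_abs, Int.cast_abs]
      have hn0 : 0 ≤ (N : ℝ) - 1 := by
        have := abs_nonneg (p.1 : ℝ)
        have := abs_nonneg (p.2 : ℝ)
        linarith
      nlinarith
  have hle := hasSum_le hpt hH.hasSum g
  unfold th
  rw [← hke]
  refine hle.trans ?_
  nlinarith [Real.exp_pos (-k)]

lemma caseB {a b c : ℝ} (ha0 : 0 < a) (ha : a ≤ 3 / 4)
    (hdet : a * c - b ^ 2 / 4 = 1) {t : ℝ} (ht : 1 ≤ t) :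
    th (2 / Real.sqrt 3) (2 / Real.sqrt 3) (2 / Real.sqrt 3) t ≤ th a b c t := by
  have ht0 : 0 < t := by linarith
  have hs := summable_th ha0 hdet ht0
  refine (hex_upper ht).trans ?_
  have h1 := hs.sum_le_tsum ({(0, 0), (1, 0), (-1, 0)} : Finset (ℤ × ℤ))
    (fun _ _ => (Real.exp_pos _).le)
  have h2 : 1 + 2 * Real.exp (-(Real.pi * t * a)) ≤ th a b c t := by
    refine le_trans (le_of_eq ?_) h1
    rw [Finset.sum_insert (by decide), Finset.sum_insert (by decide), Finset.sum_singleton]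
    simp [qf]
    ring
  refine le_trans ?_ h2
  obtain ⟨h3, h4⟩ := sqrt3_bounds
  have h5 : 1.154 ≤ 2 / Real.sqrt 3 := by
    rw [le_div_iff₀ (by linarith)]; linarith
  have h6 : 1.25 ≤ Real.pi * t * (2 / Real.sqrt 3 - a) := by
    have hp := Real.pi_gt_d2
    have : 3.14 ≤ Real.pi * t := by nlinarith
    nlinarith
  have h7 : 3.25 ≤ Real.exp (Real.pi * t * (2 / Real.sqrt 3 - a)) := by
    refine le_trans ?_ (Real.exp_le_exp.2 h6)
    refine le_trans ?_ (exp_quintic _)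
    norm_num
  have h8 : Real.exp (-(Real.pi * t * a)) = Real.exp (Real.pi * t * (2 / Real.sqrt 3 - a))
      * Real.exp (-(Real.pi * t * (2 / Real.sqrt 3))) := by
    rw [← Real.exp_add]; ring_nf
  rw [h8]
  nlinarith [Real.exp_pos (-(Real.pi * t * (2 / Real.sqrt 3)))]

lemma th_min {a b c : ℝ} (ha : 0 < a) (hdet : a * c - b ^ 2 / 4 = 1) {t : ℝ} (ht : 0 < t) :
    th (2 / Real.sqrt 3) (2 / Real.sqrt 3) (2 / Real.sqrt 3) t ≤ th a b c t := by
  have main : ∀ t : ℝ, 1 ≤ t →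
      th (2 / Real.sqrt 3) (2 / Real.sqrt 3) (2 / Real.sqrt 3) t ≤ th a b c t := by
    intro t ht
    obtain ⟨a', b', c', h1, h2, h3, h4, h5, h6⟩ := exists_reduced ha hdet
    rw [← h6]
    rcases le_total a' (3 / 4) with h | h
    · exact caseB h1 h h2 ht
    · exact caseA h h3 h4 h5 h2 ht
  rcases le_total 1 t with h | h
  · exact main t h
  · rw [th_functional ha hdet ht, th_functional (by positivity) hex_det ht]
    exact mul_le_mul_of_nonneg_left (main _ (by rw [le_div_iff₀ ht]; linarith)) (by positivity)

lemma qf_pos {a b c : ℝ} (ha : 0 < a) (hdet : a * c - b ^ 2 / 4 = 1) {p : ℤ × ℤ} (hp : p ≠ 0) :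
    0 < qf a b c p := by
  have hc := c_pos ha hdet
  refine lt_of_lt_of_le ?_ (qf_lower ha hdet p)
  have : 0 < (p.1 : ℝ) ^ 2 + (p.2 : ℝ) ^ 2 := by
    by_contra h
    apply hp
    have h1 : (p.1 : ℝ) = 0 := by nlinarith [sq_nonneg (p.1 : ℝ), sq_nonneg (p.2 : ℝ)]
    have h2 : (p.2 : ℝ) = 0 := by nlinarith [sq_nonneg (p.1 : ℝ), sq_nonneg (p.2 : ℝ)]
    ext
    · exact_mod_cast h1
    · exact_mod_cast h2
  positivity

lemma th_sub_one {a b c : ℝ} (ha : 0 < a) (hdet : a * c - b ^ 2 / 4 = 1) {t : ℝ} (ht : 0 < t) :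
    th a b c t = 1 + ∑' p : {p : ℤ × ℤ // p ≠ 0}, Real.exp (-(Real.pi * t * qf a b c p.1)) := by
  have hs := summable_th ha hdet ht
  have h := (hs.subtype ({0} : Set (ℤ × ℤ))).tsum_add_tsum_compl (hs.subtype _)
  unfold th
  rw [← h]
  congr 1
  simp [qf]

open MeasureTheory in
lemma mellin_eq {a b c : ℝ} (ha : 0 < a) (hdet : a * c - b ^ 2 / 4 = 1) {s : ℝ} (hs : 1 < s) :
    (∑' p : {p : ℤ × ℤ // p ≠ 0}, ENNReal.ofReal (qf a b c p.1 ^ (-s)))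
      * ENNReal.ofReal (Real.pi ^ (-s) * Real.Gamma s)
      = ∫⁻ t in Set.Ioi (0 : ℝ), ENNReal.ofReal (t ^ (s - 1) * (th a b c t - 1)) := by
  have hs0 : 0 < s := by linarith
  have hG := Real.Gamma_pos_of_pos hs0
  have hterm : ∀ p : {p : ℤ × ℤ // p ≠ 0},
      ENNReal.ofReal (qf a b c p.1 ^ (-s)) * ENNReal.ofReal (Real.pi ^ (-s) * Real.Gamma s)
      = ∫⁻ t in Set.Ioi (0 : ℝ),
        ENNReal.ofReal (t ^ (s - 1) * Real.exp (-(Real.pi * qf a b c p.1 * t))) := by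
    intro p
    have hq := qf_pos ha hdet p.2
    have hr : 0 < Real.pi * qf a b c p.1 := by have := Real.pi_pos; positivity
    have hint := Real.integral_rpow_mul_exp_neg_mul_Ioi hs0 hr
    have hne : ∫ t in Set.Ioi (0 : ℝ), t ^ (s - 1) * Real.exp (-(Real.pi * qf a b c p.1 * t)) ≠ 0 := by
      rw [hint]; positivity
    rw [← ofReal_integral_eq_lintegral_ofReal (Integrable.of_integral_ne_zero hne), hint,
      ← ENNReal.ofReal_mul (by positivity)]
    · congr 1
      rw [one_div, Real.inv_rpow hr.le, ← Real.rpow_neg hr.le, Real.mul_rpow Real.pi_pos.le hq.le]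
      ring
    · filter_upwards [ae_restrict_mem measurableSet_Ioi] with t ht
      have : 0 < t := ht
      simp only [Pi.zero_apply]
      positivity
  rw [← ENNReal.tsum_mul_right]
  simp_rw [hterm]
  rw [← lintegral_tsum]
  · refine setLIntegral_congr_fun measurableSet_Ioi fun t ht => ?_
    have ht0 : 0 < t := ht
    rw [th_sub_one ha hdet ht0, add_sub_cancel_left, ← tsum_mul_left, ENNReal.ofReal_tsum_of_nonneg]
    · refine tsum_congr fun p => ?_
      ring_nf
    · intro p; positivity
    · exact ((summable_th ha hdet ht0).subtype _).mul_left _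
  · intro p
    apply AEMeasurable.ennreal_ofReal
    apply Measurable.aemeasurable
    fun_prop

lemma summable_zeta {a b c : ℝ} (ha : 0 < a) (hdet : a * c - b ^ 2 / 4 = 1) {s : ℝ} (hs : 1 < s) :
    Summable fun p : {p : ℤ × ℤ // p ≠ 0} => qf a b c p.1 ^ (-s) := by
  have hc := c_pos ha hdet
  have h1 := EisensteinSeries.summable_one_div_norm_rpow (k := 2 * s) (by linarith)
  have h2 := (finTwoArrowEquiv ℤ).symm.summable_iff.2 h1
  have h3 := (h2.subtype (fun p : ℤ × ℤ => p ≠ 0)).mul_left ((1 / (a + c)) ^ (-s))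
  refine Summable.of_nonneg_of_le (fun p => Real.rpow_nonneg (qf_pos ha hdet p.2).le _)
    (fun p => ?_) h3
  simp only [Function.comp]
  obtain ⟨x, hx⟩ : ∃ x : Fin 2 → ℤ, x = (finTwoArrowEquiv ℤ).symm p.1 := ⟨_, rfl⟩
  rw [← hx]
  have hx0 : x ≠ 0 := by
    intro h0
    apply p.2
    have := congrArg (finTwoArrowEquiv ℤ) hx
    rw [Equiv.apply_symm_apply, h0] at this
    rw [← this]; rfl
  have hn : 0 < ‖x‖ := norm_pos_iff.2 hx0
  have e0 : x 0 = p.1.1 := by rw [hx]; rfl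
  have e1 : x 1 = p.1.2 := by rw [hx]; rfl
  have hnx : ‖x‖ ^ 2 ≤ (p.1.1 : ℝ) ^ 2 + (p.1.2 : ℝ) ^ 2 := by
    obtain ⟨i, hi⟩ : ∃ i, ‖x‖ = ‖x i‖ := by
      obtain ⟨i, _, hi⟩ := Finset.exists_mem_eq_sup' (Finset.univ_nonempty (α := Fin 2)) (fun i => ‖x i‖)
      refine ⟨i, le_antisymm ?_ (norm_le_pi_norm x i)⟩
      rw [pi_norm_le_iff_of_nonneg (norm_nonneg _)]
      intro j
      rw [← hi]
      exact Finset.le_sup' (fun i => ‖x i‖) (Finset.mem_univ j)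
    rw [hi, Int.norm_eq_abs, sq_abs]
    fin_cases i
    · simp only [Fin.zero_eta, e0]; nlinarith [sq_nonneg (p.1.2 : ℝ)]
    · simp only [Fin.mk_one, e1]; nlinarith [sq_nonneg (p.1.1 : ℝ)]
  have h5 : 1 / (a + c) * ‖x‖ ^ 2 ≤ qf a b c p.1 :=
    le_trans (mul_le_mul_of_nonneg_left hnx (by positivity)) (qf_lower ha hdet p.1)
  have h6 := Real.rpow_le_rpow_of_nonpos (by positivity) h5 (by linarith : -s ≤ 0)
  refine h6.trans (le_of_eq ?_)
  rw [Real.mul_rpow (by positivity) (by positivity), ← Real.rpow_natCast, ← Real.rpow_mul hn.le]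
  congr 2
  push_cast; ring

/-- Cassels' theorem: among positive definite binary quadratic forms of determinant 1,
the hexagonal form `H(x,y) = (2/√3)(x² + xy + y²)` minimizes the Epstein zeta function
at every real `s > 1`. -/
theorem stmt18 (a b c : ℝ) (ha : 0 < a) (hdet : a * c - b ^ 2 / 4 = 1) :
    ∀ s : ℝ, 1 < s →
      epsteinZeta (2 / Real.sqrt 3) (2 / Real.sqrt 3) (2 / Real.sqrt 3) s ≤
        epsteinZeta a b c s := by
  intro s hs
  have hh : (0 : ℝ) < 2 / Real.sqrt 3 := by positivity
  have hG := Real.Gamma_pos_of_pos (by linarith : 0 < s)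
  have hK : 0 < Real.pi ^ (-s) * Real.Gamma s := by
    have := Real.pi_pos
    positivity
  have hK0 : ENNReal.ofReal (Real.pi ^ (-s) * Real.Gamma s) ≠ 0 := by
    simpa using hK
  have h1 : (∑' p : {p : ℤ × ℤ // p ≠ 0},
      ENNReal.ofReal (qf (2 / Real.sqrt 3) (2 / Real.sqrt 3) (2 / Real.sqrt 3) p.1 ^ (-s)))
      ≤ ∑' p : {p : ℤ × ℤ // p ≠ 0}, ENNReal.ofReal (qf a b c p.1 ^ (-s)) := by
    rw [← ENNReal.mul_le_mul_iff_left hK0 ENNReal.ofReal_ne_top, mellin_eq hh hex_det hs,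
      mellin_eq ha hdet hs]
    refine MeasureTheory.setLIntegral_mono' measurableSet_Ioi fun t ht => ?_
    have ht0 : 0 < t := ht
    apply ENNReal.ofReal_le_ofReal
    apply mul_le_mul_of_nonneg_left _ (by positivity)
    linarith [th_min ha hdet ht0]
  rw [← ENNReal.ofReal_tsum_of_nonneg (fun p => Real.rpow_nonneg (qf_pos hh hex_det p.2).le _)
      (summable_zeta hh hex_det hs),
    ← ENNReal.ofReal_tsum_of_nonneg (fun p => Real.rpow_nonneg (qf_pos ha hdet p.2).le _)
      (summable_zeta ha hdet hs),
    ENNReal.ofReal_le_ofReal_iff (tsum_nonneg fun p => Real.rpow_nonneg (qf_pos ha hdet p.2).le _)]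
    at h1
  exact h1
end

section
/- Let Q(x,y) = a x² + b x y + c y² be a positive definite real binary quadratic form (a > 0, Δ := 4ac − b² > 0) and let Z_Q(s) = ∑_{(m,n) ∈ ℤ², (m,n) ≠ (0,0)} Q(m,n)^{−s} for Re s > 1. Then there exists a function F : ℂ → ℂ, holomorphic on ℂ ∖ {1}, such that F(s) = Z_Q(s) for all s with Re s > 1, the function s ↦ (s − 1)·F(s) extends holomorphically across s = 1 with nonzero value at s = 1 (so F has a simple pole at s = 1), and F satisfies the functional equation (√Δ/(2π))^s · Γ(s) · F(s) = (√Δ/(2π))^{1−s} · Γ(1−s) · F(1−s) for all s ∈ ℂ ∖ ℤ. -/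
/-- The Epstein zeta function of the positive definite binary quadratic form
`ax² + bxy + cy²` at a complex argument `s`: `Z_Q(s) = ∑_{(m,n) ≠ (0,0)} Q(m,n)^{−s}`. -/
noncomputable def epsteinZetaC (a b c : ℝ) (s : ℂ) : ℂ :=
  ∑' p : {p : ℤ × ℤ // p ≠ 0},
    ((a * (p.1.1 : ℝ) ^ 2 + b * (p.1.1 : ℝ) * (p.1.2 : ℝ) + c * (p.1.2 : ℝ) ^ 2 : ℝ) : ℂ)
      ^ (-s)

open Complex Set Filter Topology Asymptotics MeasureTheory

namespace EpsteinAux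

/-- A binary quadratic form on integer pairs. -/
noncomputable def qf (α β γ : ℝ) (p : ℤ × ℤ) : ℝ :=
  α * (p.1 : ℝ) ^ 2 + β * (p.1 : ℝ) * (p.2 : ℝ) + γ * (p.2 : ℝ) ^ 2

/-- Theta function of the form. -/
noncomputable def th (α β γ : ℝ) (t : ℝ) : ℂ :=
  ∑' p : ℤ × ℤ, ((Real.exp (-Real.pi * qf α β γ p * t) : ℝ) : ℂ)

lemma exists_lower {α β γ : ℝ} (hα : 0 < α) (hd : 4 * α * γ - β ^ 2 = 4) :
    ∃ δ : ℝ, 0 < δ ∧ ∀ p : ℤ × ℤ, δ * ((p.1 : ℝ) ^ 2 + (p.2 : ℝ) ^ 2) ≤ qf α β γ p := by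
  have hγ : 0 < γ := by
    by_contra h
    push Not at h
    nlinarith [sq_nonneg β, mul_nonneg hα.le (neg_nonneg.mpr h)]
  refine ⟨1 / (α + γ), by positivity, fun p => ?_⟩
  rw [div_mul_eq_mul_div, one_mul, div_le_iff₀ (by positivity)]
  unfold qf
  nlinarith [sq_nonneg (α * p.1 + β / 2 * p.2), sq_nonneg (γ * p.2 + β / 2 * p.1)]

lemma summable_gauss {c : ℝ} (hc : 0 < c) :
    Summable fun n : ℤ => Real.exp (-Real.pi * (c * (n : ℝ) ^ 2)) := by
  simpa using summable_pow_mul_jacobiTheta₂_term_bound 0 hc 0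

lemma summable_gauss2 {c d : ℝ} (hc : 0 < c) (hd : 0 < d) :
    Summable fun p : ℤ × ℤ =>
      Real.exp (-Real.pi * (c * (p.1 : ℝ) ^ 2 + d * (p.2 : ℝ) ^ 2)) := by
  have := (summable_gauss hc).mul_of_nonneg (summable_gauss hd)
    (fun _ => (Real.exp_pos _).le) (fun _ => (Real.exp_pos _).le)
  refine this.congr fun p => ?_
  rw [← Real.exp_add]; congr 1; ring

lemma summable_th {α β γ : ℝ} (hα : 0 < α) (hd : 4 * α * γ - β ^ 2 = 4) {t : ℝ} (ht : 0 < t) :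
    Summable fun p : ℤ × ℤ => Real.exp (-Real.pi * qf α β γ p * t) := by
  obtain ⟨δ, hδ, h⟩ := exists_lower hα hd
  refine (summable_gauss2 (mul_pos ht hδ) (mul_pos ht hδ)).of_nonneg_of_le
    (fun _ => (Real.exp_pos _).le) fun p => ?_
  rw [Real.exp_le_exp]
  have := mul_le_mul_of_nonneg_left (h p) (mul_pos Real.pi_pos ht).le
  linarith

lemma qf_zero (α β γ : ℝ) : qf α β γ 0 = 0 := by simp [qf]

lemma one_le_sq {p : ℤ × ℤ} (hp : p ≠ 0) : (1 : ℝ) ≤ (p.1 : ℝ) ^ 2 + (p.2 : ℝ) ^ 2 := by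
  have : 0 < p.1 ^ 2 + p.2 ^ 2 := by
    by_contra h
    apply hp
    have h1 : p.1 = 0 := by nlinarith [sq_nonneg p.1, sq_nonneg p.2]
    have h2 : p.2 = 0 := by nlinarith [sq_nonneg p.1, sq_nonneg p.2]
    exact Prod.ext h1 h2
  exact_mod_cast this

lemma hasSum_th_sub_one {α β γ : ℝ} (hα : 0 < α) (hd : 4 * α * γ - β ^ 2 = 4) {t : ℝ}
    (ht : 0 < t) :
    HasSum (fun p : {p : ℤ × ℤ // p ≠ 0} =>
      ((Real.exp (-Real.pi * qf α β γ p.1 * t) : ℝ) : ℂ)) (th α β γ t - 1) := by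
  have hs : Summable fun p : ℤ × ℤ => ((Real.exp (-Real.pi * qf α β γ p * t) : ℝ) : ℂ) :=
    ((summable_th hα hd ht)).map Complex.ofRealHom Complex.continuous_ofReal
  have h := hs.hasSum
  have h2 : HasSum (fun p : ({0} : Set (ℤ × ℤ)) =>
      ((Real.exp (-Real.pi * qf α β γ p.1 * t) : ℝ) : ℂ)) 1 := by
    have := hasSum_fintype (fun p : ({0} : Set (ℤ × ℤ)) =>
      ((Real.exp (-Real.pi * qf α β γ p.1 * t) : ℝ) : ℂ))
    simpa [qf_zero] using this
  exact (h2.hasSum_iff_compl).1 h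

lemma th_cont {α β γ : ℝ} (hα : 0 < α) (hd : 4 * α * γ - β ^ 2 = 4) :
    ContinuousOn (th α β γ) (Ioi 0) := by
  obtain ⟨δ, hδ, h⟩ := exists_lower hα hd
  intro t ht
  have ht : 0 < t := ht
  have : ContinuousOn (th α β γ) (Ioi (t / 2)) := by
    refine continuousOn_tsum (u := fun p => Real.exp (-Real.pi * qf α β γ p * (t / 2)))
      (fun p => by fun_prop) (summable_th hα hd (by positivity)) ?_
    intro p x hx
    have hx : t / 2 < x := hx
    rw [Complex.norm_real, Real.norm_eq_abs, Real.abs_exp, Real.exp_le_exp]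
    have hq : 0 ≤ qf α β γ p := le_trans (by positivity) (h p)
    have := mul_le_mul_of_nonneg_left hx.le (mul_nonneg Real.pi_pos.le hq)
    linarith
  exact (this.continuousAt (Ioi_mem_nhds (by linarith))).continuousWithinAt

lemma th_top {α β γ : ℝ} (hα : 0 < α) (hd : 4 * α * γ - β ^ 2 = 4) (r : ℝ) :
    (fun t => th α β γ t - 1) =O[atTop] (fun t : ℝ => t ^ r) := by
  obtain ⟨δ, hδ, h⟩ := exists_lower hα hd
  have hπ := Real.pi_pos
  refine IsBigO.trans ?_ (isLittleO_exp_neg_mul_rpow_atTop (mul_pos hπ hδ) r).isBigO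
  have hs1 := (summable_th hα hd one_pos).subtype {p : ℤ × ℤ | p ≠ 0}
  refine IsBigO.of_bound
    (Real.exp (Real.pi * δ) * ∑' p : {p : ℤ × ℤ // p ≠ 0},
      Real.exp (-Real.pi * qf α β γ p.1 * 1)) ?_
  filter_upwards [eventually_ge_atTop 1] with t ht
  rw [← (hasSum_th_sub_one hα hd (by linarith : 0 < t)).tsum_eq]
  rw [Real.norm_eq_abs, Real.abs_exp, mul_right_comm, ← tsum_mul_left]
  refine tsum_of_norm_bounded (Summable.hasSum (Summable.mul_left _ hs1)) fun p => ?_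
  rw [Complex.norm_real, Real.norm_eq_abs, Real.abs_exp, ← Real.exp_add,
    ← Real.exp_add, Real.exp_le_exp]
  have h1 := h p.1
  have h2 := one_le_sq p.2
  have h3 : δ ≤ qf α β γ p.1 := le_trans (by nlinarith) h1
  have h4 := mul_le_mul_of_nonneg_right h3 (mul_nonneg hπ.le (sub_nonneg.2 ht))
  linarith

/-- The half-transformed kernel. -/
noncomputable def ker (α β t : ℝ) (n k : ℤ) : ℂ :=
  cexp (((-Real.pi * (1 / (α * t) * (k : ℝ) ^ 2 + t / α * (n : ℝ) ^ 2) : ℝ) : ℂ)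
    + ((Real.pi * β * n * k / α : ℝ) : ℂ) * I)

lemma ker_summable {α β t : ℝ} (hα : 0 < α) (ht : 0 < t) :
    Summable (Function.uncurry (ker α β t)) := by
  have := summable_gauss2 (c := t / α) (d := 1 / (α * t)) (by positivity) (by positivity)
  refine this.of_norm_bounded fun p => ?_
  simp only [Function.uncurry, ker, Complex.norm_exp]
  rw [Complex.add_re, Complex.re_ofReal_mul, Complex.ofReal_re, Complex.I_re, mul_zero, add_zero]
  apply le_of_eq
  congr 1; ring

lemma th_eq {α β γ : ℝ} (hα : 0 < α) (hd : 4 * α * γ - β ^ 2 = 4) {t : ℝ} (ht : 0 < t) :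
    th α β γ t = 1 / ((Real.sqrt (α * t) : ℝ) : ℂ) * ∑' n : ℤ, ∑' k : ℤ, ker α β t n k := by
  have hs : Summable fun p : ℤ × ℤ => ((Real.exp (-Real.pi * qf α β γ p * t) : ℝ) : ℂ) :=
    ((summable_th hα hd ht)).map Complex.ofRealHom Complex.continuous_ofReal
  have hs' := hs.prod_symm
  unfold th
  rw [← (Equiv.prodComm ℤ ℤ).tsum_eq, Summable.tsum_prod (by exact hs'), ← tsum_mul_left]
  refine tsum_congr fun n => ?_
  have hα' : (α : ℂ) ≠ 0 := by exact_mod_cast hα.ne'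
  have ht' : (t : ℂ) ≠ 0 := by exact_mod_cast ht.ne'
  have hγ : γ = (4 + β ^ 2) / (4 * α) := by field_simp; linarith
  have key := Complex.tsum_exp_neg_quadratic (a := ((α * t : ℝ) : ℂ))
    (by rw [Complex.ofReal_re]; positivity) (((-β * n * t / 2 : ℝ)) : ℂ)
  have hsq : (((α * t : ℝ) : ℂ)) ^ (1 / 2 : ℂ) = ((Real.sqrt (α * t) : ℝ) : ℂ) := by
    rw [Real.sqrt_eq_rpow, Complex.ofReal_cpow (by positivity)]
    norm_num
  rw [hsq] at key
  have e1 : ∀ m : ℤ, (((Real.exp (-Real.pi * qf α β γ (Equiv.prodComm ℤ ℤ (n, m)) * t) : ℝ)) : ℂ)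
      = cexp (((-Real.pi * γ * n ^ 2 * t : ℝ)) : ℂ) *
        cexp (-Real.pi * ((α * t : ℝ) : ℂ) * m ^ 2
          + 2 * Real.pi * (((-β * n * t / 2 : ℝ)) : ℂ) * m) := by
    intro m
    rw [← Complex.exp_add, Complex.ofReal_exp]
    congr 1
    simp only [qf, Equiv.prodComm_apply, Prod.swap]
    push_cast
    ring
  simp_rw [e1]
  rw [tsum_mul_left, key, mul_left_comm, ← tsum_mul_left]
  congr 1
  refine tsum_congr fun k => ?_
  rw [← Complex.exp_add]
  unfold ker
  congr 1
  rw [hγ]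
  push_cast
  field_simp
  ring_nf
  simp only [Complex.I_sq]
  ring

lemma th_feq {α β γ : ℝ} (hα : 0 < α) (hd : 4 * α * γ - β ^ 2 = 4) {t : ℝ} (ht : 0 < t) :
    th α β γ (1 / t) = t * th α β γ t := by
  have ht1 : 0 < 1 / t := by positivity
  rw [th_eq hα hd ht, th_eq hα hd ht1]
  have hsw : ∑' n : ℤ, ∑' k : ℤ, ker α β (1 / t) n k = ∑' n : ℤ, ∑' k : ℤ, ker α β t n k := by
    rw [← (ker_summable (β := β) hα ht1).tsum_comm]
    refine tsum_congr fun n => tsum_congr fun k => ?_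
    unfold ker
    congr 1
    congr 1
    · congr 2
      field_simp
      ring
    · congr 2
      ring
  rw [hsw, ← mul_assoc]
  congr 1
  norm_cast
  have hst := Real.sq_sqrt ht.le
  rw [Real.sqrt_mul hα.le, Real.sqrt_mul hα.le, Real.sqrt_div zero_le_one, Real.sqrt_one]
  have : Real.sqrt t ≠ 0 := (Real.sqrt_pos.2 ht).ne'
  field_simp
  linarith

/-- The FE-pair attached to the theta function. -/
noncomputable def pair {α β γ : ℝ} (hα : 0 < α) (hd : 4 * α * γ - β ^ 2 = 4) :
    WeakFEPair ℂ where
  f := th α β γ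
  g := th α β γ
  k := 1
  ε := 1
  f₀ := 1
  g₀ := 1
  hf_int := (th_cont hα hd).locallyIntegrableOn measurableSet_Ioi
  hg_int := (th_cont hα hd).locallyIntegrableOn measurableSet_Ioi
  hk := one_pos
  hε := one_ne_zero
  h_feq := fun x hx => by simpa using th_feq hα hd hx
  hf_top := th_top hα hd
  hg_top := th_top hα hd

lemma summable_rpow {α β γ : ℝ} (hα : 0 < α) (hd : 4 * α * γ - β ^ 2 = 4) {σ : ℝ}
    (hσ : 1 < σ) :
    Summable fun p : {p : ℤ × ℤ // p ≠ 0} => 1 / (qf α β γ p.1) ^ σ := by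
  obtain ⟨δ, hδ, h⟩ := exists_lower hα hd
  have h0 := EisensteinSeries.summable_one_div_norm_rpow (k := 2 * σ) (by linarith)
  have h1 := (((finTwoArrowEquiv ℤ).symm.summable_iff).2 h0).subtype {p : ℤ × ℤ | p ≠ 0}
  refine (h1.mul_left (1 / δ ^ σ)).of_nonneg_of_le (fun p => ?_) fun p => ?_
  · have : 0 ≤ qf α β γ p.1 := le_trans (by positivity) (h p.1)
    positivity
  · have h2 := one_le_sq p.2
    have h3 := h p.1
    simp only [Function.comp]
    set x := (finTwoArrowEquiv ℤ).symm p.1 with hx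
    have hxne : x ≠ 0 := by
      intro h
      apply p.2
      have := congrArg (finTwoArrowEquiv ℤ) h
      exact this
    have hxn : 0 < ‖x‖ := norm_pos_iff.2 hxne
    have hle : ‖x‖ ^ 2 ≤ (p.1.1 : ℝ) ^ 2 + (p.1.2 : ℝ) ^ 2 := by
      have : ‖x‖ ≤ Real.sqrt ((p.1.1 : ℝ) ^ 2 + (p.1.2 : ℝ) ^ 2) := by
        rw [pi_norm_le_iff_of_nonneg (Real.sqrt_nonneg _)]
        intro i
        fin_cases i
        · simp [hx, finTwoArrowEquiv, Int.norm_eq_abs]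
          exact Real.abs_le_sqrt (by nlinarith)
        · simp [hx, finTwoArrowEquiv, Int.norm_eq_abs]
          exact Real.abs_le_sqrt (by nlinarith)
      calc _ ≤ (Real.sqrt ((p.1.1 : ℝ) ^ 2 + (p.1.2 : ℝ) ^ 2)) ^ 2 := by gcongr
        _ = _ := Real.sq_sqrt (by positivity)
    have h5 : δ * ‖x‖ ^ 2 ≤ qf α β γ p.1 := le_trans (by gcongr) h3
    rw [Real.rpow_neg hxn.le, ← one_div, one_div_mul_one_div, Real.rpow_mul hxn.le,
      Real.rpow_two, ← Real.mul_rpow hδ.le (by positivity)]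
    gcongr

lemma Lam_eq {α β γ : ℝ} (hα : 0 < α) (hd : 4 * α * γ - β ^ 2 = 4) {s : ℂ} (hs : 1 < s.re) :
    HasSum (fun p : {p : ℤ × ℤ // p ≠ 0} =>
      (Real.pi : ℂ) ^ (-s) * Complex.Gamma s * 1 / (qf α β γ p.1 : ℂ) ^ s)
      ((pair hα hd).Λ s) := by
  obtain ⟨δ, hδ, h⟩ := exists_lower hα hd
  rw [← ((pair hα hd).hasMellin (s := s) hs).2]
  refine hasSum_mellin_pi_mul (a := fun _ => 1) (q := fun p : {p : ℤ × ℤ // p ≠ 0} => qf α β γ p.1)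
    (fun p => Or.inr ?_) (by linarith) (fun t ht => ?_) ?_
  · have := h p.1
    have := one_le_sq p.2
    nlinarith
  · simpa [pair] using hasSum_th_sub_one hα hd ht
  · simpa using summable_rpow hα hd hs

lemma main {α β γ : ℝ} (hα : 0 < α) (hd : 4 * α * γ - β ^ 2 = 4) {A : ℝ} (hA : 0 < A)
    (Z : ℂ → ℂ) (hZ : ∀ s : ℂ, 1 < s.re → (pair hα hd).Λ s = (A : ℂ) ^ s * Complex.Gamma s * Z s) :
    ∃ F : ℂ → ℂ,
      DifferentiableOn ℂ F {(1 : ℂ)}ᶜ ∧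
      (∀ s : ℂ, 1 < s.re → F s = Z s) ∧
      (∃ G : ℂ → ℂ, Differentiable ℂ G ∧ (∀ s : ℂ, s ≠ 1 → G s = (s - 1) * F s) ∧
        G 1 ≠ 0) ∧
      ∀ s : ℂ, (∀ n : ℤ, s ≠ (n : ℂ)) →
        (A : ℂ) ^ s * Complex.Gamma s * F s =
          (A : ℂ) ^ (1 - s) * Complex.Gamma (1 - s) * F (1 - s) := by
  have hA' : (A : ℂ) ≠ 0 := by exact_mod_cast hA.ne'
  set P := pair hα hd with hP
  have hLam : ∀ s, P.Λ s = P.Λ₀ s - 1 / s - 1 / (1 - s) := by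
    intro s
    simp [WeakFEPair.Λ, hP, pair]
  let F : ℂ → ℂ := fun s => (A : ℂ) ^ (-s) *
    (P.Λ₀ s * (Complex.Gamma s)⁻¹ - (Complex.Gamma (s + 1))⁻¹ - 1 / (1 - s) * (Complex.Gamma s)⁻¹)
  let G : ℂ → ℂ := fun s => (A : ℂ) ^ (-s) *
    ((s - 1) * (P.Λ₀ s * (Complex.Gamma s)⁻¹ - (Complex.Gamma (s + 1))⁻¹) + (Complex.Gamma s)⁻¹)
  have hFL : ∀ s : ℂ, s ≠ 0 → Complex.Gamma s ≠ 0 →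
      (A : ℂ) ^ s * Complex.Gamma s * F s = P.Λ s := by
    intro s hs hg
    have hAs : (A : ℂ) ^ s ≠ 0 := by simp [Complex.cpow_eq_zero_iff, hA']
    simp only [F]
    rw [hLam, Complex.Gamma_add_one s hs, Complex.cpow_neg]
    field_simp
  have hΓ : Differentiable ℂ fun s => (Complex.Gamma s)⁻¹ := Complex.differentiable_one_div_Gamma
  have hΓ1 : Differentiable ℂ fun s => (Complex.Gamma (s + 1))⁻¹ :=
    hΓ.comp (differentiable_id.add_const 1)
  have hΛ := P.differentiable_Λ₀
  have hAd : Differentiable ℂ fun s : ℂ => (A : ℂ) ^ (-s) := fun s =>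
    (differentiable_neg s).const_cpow (Or.inl hA')
  refine ⟨F, ?_, ?_, ⟨G, ?_, ?_, ?_⟩, ?_⟩
  · intro s hs
    have hs : 1 - s ≠ 0 := sub_ne_zero.2 (Ne.symm hs)
    refine DifferentiableAt.differentiableWithinAt ?_
    refine (hAd s).mul ((((hΛ s).mul (hΓ s)).sub (hΓ1 s)).sub (DifferentiableAt.mul ?_ (hΓ s)))
    fun_prop (disch := assumption)
  · intro s hs
    have hs0 : s ≠ 0 := by rintro rfl; simp at hs; linarith
    have hg := Complex.Gamma_ne_zero_of_re_pos (s := s) (by linarith)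
    have hAs : (A : ℂ) ^ s ≠ 0 := by simp [Complex.cpow_eq_zero_iff, hA']
    have := hFL s hs0 hg
    rw [hZ s hs] at this
    exact mul_left_cancel₀ (mul_ne_zero hAs hg) this
  · exact hAd.mul (((differentiable_id.sub_const 1).mul ((hΛ.mul hΓ).sub hΓ1)).add hΓ)
  · intro s hs
    have hs : 1 - s ≠ 0 := sub_ne_zero.2 (Ne.symm hs)
    simp only [F, G]
    field_simp
    ring
  · simp [G, Complex.cpow_neg_one, hA']
  · intro s hs
    have hs0 : s ≠ 0 := by simpa using hs 0
    have hs1 : 1 - s ≠ 0 := sub_ne_zero.2 (by simpa using (hs 1).symm)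
    rw [hFL s hs0 (Complex.Gamma_ne_zero fun m h => hs (-m) (by simpa using h)),
      hFL (1 - s) hs1 (Complex.Gamma_ne_zero fun m h => hs (1 + m) (by
        push_cast; linear_combination -h))]
    rw [hLam, hLam, ]
    have := P.functional_equation₀ s
    have h2 : P.Λ₀ (1 - s) = P.Λ₀ s := by
      simpa [hP, pair, WeakFEPair.symm] using this
    rw [h2]
    ring

end EpsteinAux

/-- The Epstein zeta function extends meromorphically to `ℂ` with a single simple pole
at `s = 1`, and satisfies the functional equation
`(√Δ/2π)^s Γ(s) Z_Q(s) = (√Δ/2π)^{1−s} Γ(1−s) Z_Q(1−s)` where `Δ = 4ac − b²`. -/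
theorem stmt19 (a b c : ℝ) (ha : 0 < a) (hΔ : 0 < 4 * a * c - b ^ 2) :
    ∃ F : ℂ → ℂ,
      DifferentiableOn ℂ F {(1 : ℂ)}ᶜ ∧
      (∀ s : ℂ, 1 < s.re → F s = epsteinZetaC a b c s) ∧
      (∃ G : ℂ → ℂ, Differentiable ℂ G ∧ (∀ s : ℂ, s ≠ 1 → G s = (s - 1) * F s) ∧
        G 1 ≠ 0) ∧
      ∀ s : ℂ, (∀ n : ℤ, s ≠ (n : ℂ)) →
        ((Real.sqrt (4 * a * c - b ^ 2) / (2 * Real.pi) : ℝ) : ℂ) ^ s *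
            Complex.Gamma s * F s =
          ((Real.sqrt (4 * a * c - b ^ 2) / (2 * Real.pi) : ℝ) : ℂ) ^ (1 - s) *
            Complex.Gamma (1 - s) * F (1 - s) := by
  have hD : 0 < Real.sqrt (4 * a * c - b ^ 2) := Real.sqrt_pos.2 hΔ
  have hD2 := Real.sq_sqrt hΔ.le
  generalize hR : Real.sqrt (4 * a * c - b ^ 2) = D at *
  have hα : 0 < 2 * a / D := by positivity
  have hd : 4 * (2 * a / D) * (2 * c / D) - (2 * b / D) ^ 2 = 4 := by
    field_simp
    linarith
  have hπ := Real.pi_pos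
  refine EpsteinAux.main hα hd (A := D / (2 * Real.pi)) (by positivity) (epsteinZetaC a b c) ?_
  intro s hs
  rw [← (EpsteinAux.Lam_eq hα hd hs).tsum_eq, epsteinZetaC, ← tsum_mul_left]
  refine tsum_congr fun p => ?_
  obtain ⟨δ, hδ, h⟩ := EpsteinAux.exists_lower hα hd
  have hq : 0 < EpsteinAux.qf (2 * a / D) (2 * b / D) (2 * c / D) p.1 := by
    have := h p.1
    have := EpsteinAux.one_le_sq p.2
    nlinarith
  set q := EpsteinAux.qf (2 * a / D) (2 * b / D) (2 * c / D) p.1 with hqd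
  have e : a * (p.1.1 : ℝ) ^ 2 + b * (p.1.1 : ℝ) * (p.1.2 : ℝ) + c * (p.1.2 : ℝ) ^ 2
      = (D / (2 * Real.pi)) * (Real.pi * q) := by
    rw [hqd, EpsteinAux.qf]
    field_simp
  rw [e, Complex.ofReal_mul (D / (2 * Real.pi)) (Real.pi * q),
    Complex.mul_cpow_ofReal_nonneg (by positivity) (by positivity),
    Complex.ofReal_mul Real.pi q, Complex.mul_cpow_ofReal_nonneg hπ.le hq.le,
    Complex.cpow_neg _ s, Complex.cpow_neg _ s, Complex.cpow_neg _ s]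
  have hA' : ((D / (2 * Real.pi) : ℝ) : ℂ) ^ s ≠ 0 := by
    rw [Ne, Complex.cpow_eq_zero_iff, not_and_or]
    left
    exact_mod_cast (by positivity : D / (2 * Real.pi) ≠ 0)
  generalize ((D / (2 * Real.pi) : ℝ) : ℂ) ^ s = X at *
  field_simp
end
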